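/- arXiv:math/0606100 — 2 statements merged into one kernel-verified Lean document; each statement's English description precedes it below -/
import Mathlib

section
/- Let S₈ = x⁸ + y⁸ + z⁸ + t⁸ + 168·x²y²z²t² + 14·(x⁴y⁴ + x⁴z⁴ + x⁴t⁴ + y⁴z⁴ + y⁴t⁴ + z⁴t⁴). The octic surface S₈ = 0 in ℙ³ contains exactly 352 lines. -/
/-!
Identify `(x, y, z, t)` with the quaternion `x + yi + zj + tk`, that is with the `2 × 2` matrix
`M = [[A, B], [C, D]]`, `A = x + iy`, `B = z + it`, `C = -z + it`, `D = x - iy`. Let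
`f(u, v) = u⁸ + 14u⁴v⁴ + v⁸` be the octahedral form of degree eight. Then (`eval_vec`)
`16 · S₈(M) = (f ⊠ f)(M) + (56/5) · det(M)⁴`, where `f ⊠ f` is the form of degree eight on matrices
whose restriction to `s · m ⊗ n + t · m' ⊗ n'` is `∑ₖ (8 choose k) fₖ(m, m') fₖ(n, n') sᵏ t⁸⁻ᵏ`,
with `fₖ(m, m')` the polar form of `f` evaluated at `k` copies of `m` and `8 - k` copies of `m'`.

A plane `W` of matrices meets the cone `det = 0` in one of four ways (`rank_cases`).

* It is contained in the cone, so `W = m ⊗ ℂ²` or `W = ℂ² ⊗ n`. The octic vanishes on `W` if and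
  only if `f(m) = 0`, resp. `f(n) = 0`; this gives `8 + 8` lines.
* It is tangent to the cone. Then the octic does not vanish on `W`, because the roots of `f` are
  simple (`no_tangent`).
* It is spanned by two matrices of rank one. Then `W = {v | p v = v r}` for imaginary quaternions
  `p`, `r` with `p² = r² = -1`, whose eigenvectors `a`, `b` (for `p`) and `c`, `d` (for `r`) give
  the two matrices. By `eval_pencil` the octic restricted to `W` has coefficients
  `fₖ(a, b) fₖ(d, c)`, up to binomial factors and a constant added for `k = 4`. The products
  `fₖ(a, b) f₈₋ₖ(a, b)` are polynomials in `s = p₀⁴ + p₁⁴ + p₂⁴` and `e = (p₀ p₁ p₂)²`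
  (`Q0`, `Q1`, `Q2`, `Q3`, `al4_pt`), so the vanishing of all coefficients implies five equations
  between the invariants `(s, e)` of `p` and of `r` (`line_cases`). Elimination
  (`invariants_half`) leaves, up to exchanging `p` and `r`, the values `(1, 0)`, `(-1, 0)` and
  `(1/3, 1/27)`, `(3, 5/27)`. As the squares of the coordinates of `p` are the roots of
  `X³ - X² + (1 - s)/2 · X - e`, these values determine `p` and `r` explicitly: a coordinate axis
  with one of `24` points, or a diagonal `(±1, ±1, ±1)/√3` with one of `24` points. Up to the
  common sign of `(p, r)` this gives `3 · 24 + 4 · 24` pairs. Conversely each of them gives a line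
  on the surface (`line_of_apolar`).

The total is `2 · (8 + 72 + 96) = 352`. The lines are distinct because the plane
`{v | p v = v r}` determines the pair `(p, r)` up to a scalar factor (`ratio_of_le`).
-/

open MvPolynomial

/-- A line in ℙ³: a 2-dimensional linear subspace of ℂ⁴. -/
def IsLine (W : Submodule ℂ (Fin 4 → ℂ)) : Prop :=
  Module.finrank ℂ W = 2

/-- The line `W` lies on the surface `F = 0`. -/
def LiesOn (F : MvPolynomial (Fin 4) ℂ) (W : Submodule ℂ (Fin 4 → ℂ)) : Prop :=
  ∀ v ∈ W, eval v F = 0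

/-- The `G₈`-invariant octic
`S₈ = x⁸+y⁸+z⁸+t⁸+168x²y²z²t²+14(x⁴y⁴+x⁴z⁴+x⁴t⁴+y⁴z⁴+y⁴t⁴+z⁴t⁴)`. -/
noncomputable def S8 : MvPolynomial (Fin 4) ℂ :=
  X 0 ^ 8 + X 1 ^ 8 + X 2 ^ 8 + X 3 ^ 8 +
    168 * (X 0 ^ 2 * X 1 ^ 2 * X 2 ^ 2 * X 3 ^ 2) +
    14 * (X 0 ^ 4 * X 1 ^ 4 + X 0 ^ 4 * X 2 ^ 4 + X 0 ^ 4 * X 3 ^ 4 +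
      X 1 ^ 4 * X 2 ^ 4 + X 1 ^ 4 * X 3 ^ 4 + X 2 ^ 4 * X 3 ^ 4)

/-! ### The octic in matrix coordinates -/

/-- The point `(x, y, z, t)` with matrix `[[a, b], [c, d]]`, that is with `x + iy = a`,
`z + it = b`, `-z + it = c`, `x - iy = d`. -/
noncomputable def vec (a b c d : ℂ) : Fin 4 → ℂ :=
  ![(a + d) / 2, -(Complex.I * (a - d)) / 2, (b - c) / 2, -(Complex.I * (b + c)) / 2]

theorem eq_vec (v : Fin 4 → ℂ) : v = vec (v 0 + Complex.I * v 1) (v 2 + Complex.I * v 3)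
    (-v 2 + Complex.I * v 3) (v 0 - Complex.I * v 1) := by
  have hI := Complex.I_sq
  ext i
  fin_cases i <;> simp [vec]
  · linear_combination v 1 * hI
  · linear_combination v 3 * hI

/-- The octic in matrix coordinates: `16 · S₈ = f ⊠ f + (56/5) · det⁴`, where all terms
other than the power of the determinant make up `f ⊠ f`. -/
theorem eval_vec (a b c d : ℂ) : 16 * eval (vec a b c d) S8 =
    a ^ 8 + 14 * a ^ 4 * c ^ 4 + c ^ 8 + b ^ 8 + 14 * b ^ 4 * d ^ 4 + d ^ 8 +
      14 * (a ^ 4 * b ^ 4 + c ^ 4 * d ^ 4) +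
      14 / 5 * (a ^ 4 * d ^ 4 + 16 * a ^ 3 * b * c * d ^ 3 + 36 * a ^ 2 * b ^ 2 * c ^ 2 * d ^ 2 +
        16 * a * b ^ 3 * c ^ 3 * d + b ^ 4 * c ^ 4) + 56 / 5 * (a * d - b * c) ^ 4 := by
  have key : ∀ x y z t : ℂ, eval ![x, y, z, t] S8 = (x ^ 2) ^ 4 + (y ^ 2) ^ 4 + (z ^ 2) ^ 4 +
      (t ^ 2) ^ 4 + 168 * (x ^ 2 * y ^ 2 * z ^ 2 * t ^ 2) + 14 * ((x ^ 2) ^ 2 * (y ^ 2) ^ 2 +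
      (x ^ 2) ^ 2 * (z ^ 2) ^ 2 + (x ^ 2) ^ 2 * (t ^ 2) ^ 2 + (y ^ 2) ^ 2 * (z ^ 2) ^ 2 +
      (y ^ 2) ^ 2 * (t ^ 2) ^ 2 + (z ^ 2) ^ 2 * (t ^ 2) ^ 2) := by
    intro x y z t
    simp [S8]
    ring
  have sq : ∀ w : ℂ, (-(Complex.I * w) / 2) ^ 2 = -(w / 2) ^ 2 := by
    intro w
    linear_combination (w ^ 2 / 4) * Complex.I_sq
  rw [vec, key, sq, sq]
  ring

/-- The octahedral form `f(u, v) = u⁸ + 14u⁴v⁴ + v⁸`; its roots are the vertices of a cube on the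
Riemann sphere. -/
def al8 (a0 a1 : ℂ) : ℂ := a0 ^ 8 + 14 * a0 ^ 4 * a1 ^ 4 + a1 ^ 8

/-- The polar form of `al8` at seven copies of `a` and one copy of `b`. -/
def al7 (a0 a1 b0 b1 : ℂ) : ℂ :=
  a0 ^ 7 * b0 + 7 * a0 ^ 4 * a1 ^ 3 * b1 + 7 * a0 ^ 3 * a1 ^ 4 * b0 + a1 ^ 7 * b1

/-- The polar form of `al8` at six copies of `a` and two copies of `b`. -/
noncomputable def al6 (a0 a1 b0 b1 : ℂ) : ℂ :=
  a0 ^ 6 * b0 ^ 2 + 3 * a0 ^ 4 * a1 ^ 2 * b1 ^ 2 + 8 * a0 ^ 3 * a1 ^ 3 * b0 * b1 +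
    3 * a0 ^ 2 * a1 ^ 4 * b0 ^ 2 + a1 ^ 6 * b1 ^ 2

/-- The polar form of `al8` at five copies of `a` and three copies of `b`. -/
noncomputable def al5 (a0 a1 b0 b1 : ℂ) : ℂ :=
  a0 ^ 5 * b0 ^ 3 + a0 ^ 4 * a1 * b1 ^ 3 + 6 * a0 ^ 3 * a1 ^ 2 * b0 * b1 ^ 2 +
    6 * a0 ^ 2 * a1 ^ 3 * b0 ^ 2 * b1 + a0 * a1 ^ 4 * b0 ^ 3 + a1 ^ 5 * b1 ^ 3

/-- The polar form of `al8` at four copies of `a` and four copies of `b`. -/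
noncomputable def al4 (a0 a1 b0 b1 : ℂ) : ℂ :=
  a0 ^ 4 * b0 ^ 4 + 1 / 5 * a0 ^ 4 * b1 ^ 4 + 16 / 5 * a0 ^ 3 * a1 * b0 * b1 ^ 3 +
    36 / 5 * a0 ^ 2 * a1 ^ 2 * b0 ^ 2 * b1 ^ 2 + 16 / 5 * a0 * a1 ^ 3 * b0 ^ 3 * b1 +
    1 / 5 * a1 ^ 4 * b0 ^ 4 + a1 ^ 4 * b1 ^ 4

set_option maxHeartbeats 4000000 in
/-- The octic on the plane spanned by the rank one matrices `a ⊗ (d₁, -d₀)` and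
`b ⊗ (-c₁, c₀)`, for unimodular frames `(a, b)` and `(c, d)`. The rotations of
`c` and `d` by a right angle do not matter, since they preserve `f`. -/
theorem eval_pencil {a0 a1 b0 b1 c0 c1 d0 d1 : ℂ} (s t : ℂ) (h : a0 * b1 - a1 * b0 = 1)
    (h' : c0 * d1 - c1 * d0 = 1) :
    16 * eval (vec (s * (a0 * d1) - t * (b0 * c1)) (t * (b0 * c0) - s * (a0 * d0))
      (s * (a1 * d1) - t * (b1 * c1)) (t * (b1 * c0) - s * (a1 * d0))) S8 =
    al8 a0 a1 * al8 d0 d1 * s ^ 8 - 8 * (al7 a0 a1 b0 b1 * al7 d0 d1 c0 c1) * s ^ 7 * t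
    + 28 * (al6 a0 a1 b0 b1 * al6 d0 d1 c0 c1) * s ^ 6 * t ^ 2
    - 56 * (al5 a0 a1 b0 b1 * al5 d0 d1 c0 c1) * s ^ 5 * t ^ 3
    + (70 * (al4 a0 a1 b0 b1 * al4 c0 c1 d0 d1) + 56 / 5) * s ^ 4 * t ^ 4
    - 56 * (al5 b0 b1 a0 a1 * al5 c0 c1 d0 d1) * s ^ 3 * t ^ 5
    + 28 * (al6 b0 b1 a0 a1 * al6 c0 c1 d0 d1) * s ^ 2 * t ^ 6
    - 8 * (al7 b0 b1 a0 a1 * al7 c0 c1 d0 d1) * s * t ^ 7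
    + al8 b0 b1 * al8 c0 c1 * t ^ 8 := by
  have hdet : (s * (a0 * d1) - t * (b0 * c1)) * (t * (b1 * c0) - s * (a1 * d0))
      - (t * (b0 * c0) - s * (a0 * d0)) * (s * (a1 * d1) - t * (b1 * c1)) = s * t := by
    linear_combination s * t * h + s * t * (a0 * b1 - a1 * b0) * h'
  rw [eval_vec, hdet]
  simp only [al8, al7, al6, al5, al4]
  ring

/-! ### Frames of `ℂ²` and vectors of `ℂ³` -/

/-- The imaginary quaternion, as a vector of `ℂ³`, attached to a pair `(a, b)` of vectors of `ℂ²`.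
When `a₀b₁ - a₁b₀ = 1`, its matrix has the eigenvectors `a` and `b`, for the eigenvalues `i` and
`-i`; for `b = a` it is a nilpotent matrix with image spanned by `a`. -/
noncomputable def pt (a0 a1 b0 b1 : ℂ) : Fin 3 → ℂ :=
  ![a0 * b1 + a1 * b0, -(Complex.I * (a0 * b0 + a1 * b1)), a1 * b1 - a0 * b0]

/-- The sum of the fourth powers of the coordinates. -/
def s4 (p : Fin 3 → ℂ) : ℂ := p 0 ^ 4 + p 1 ^ 4 + p 2 ^ 4

/-- The square of the product of the coordinates. -/
def e3 (p : Fin 3 → ℂ) : ℂ := (p 0 * p 1 * p 2) ^ 2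

/-- The complex bilinear (not Hermitian) scalar product on `ℂ³`; an imaginary quaternion `p` has
`p² = -dot p p`. -/
def dot (p q : Fin 3 → ℂ) : ℂ := p 0 * q 0 + p 1 * q 1 + p 2 * q 2

theorem I4 : Complex.I ^ 4 = 1 := by simp

section
variable {a0 a1 b0 b1 : ℂ}

theorem s4_pt : s4 (pt a0 a1 b0 b1) = (a0 * b1 + a1 * b0) ^ 4 + (a0 * b0 + a1 * b1) ^ 4 +
    (a1 * b1 - a0 * b0) ^ 4 := by
  simp only [s4, pt, Matrix.cons_val]
  linear_combination (a0 * b0 + a1 * b1) ^ 4 * I4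

theorem e3_pt : e3 (pt a0 a1 b0 b1) = -((a0 * b1 + a1 * b0) * (a0 * b0 + a1 * b1) *
    (a1 * b1 - a0 * b0)) ^ 2 := by
  simp [e3, pt, mul_pow]

/-- Octahedral invariants of a frame `(a, b)` are polynomials in `s4` and `e3`: the product of the
polar forms `f₈` and `f₀`. In this proof and the next ones, both sides are homogenised by powers of
`a₀b₁ - a₁b₀ = 1`, which turns the claim into a polynomial identity. -/
theorem Q0 (h : a0 * b1 - a1 * b0 = 1) : 4 * (al8 a0 a1 * al8 b0 b1) =
    (s4 (pt a0 a1 b0 b1) + 1) ^ 2 - 48 * e3 (pt a0 a1 b0 b1) := by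
  rw [s4_pt, e3_pt]
  trans ((a0 * b1 + a1 * b0) ^ 4 + (a0 * b0 + a1 * b1) ^ 4 +
    (a1 * b1 - a0 * b0) ^ 4 + (a0 * b1 - a1 * b0) ^ 4) ^ 2 + 48 * ((a0 * b1 + a1 * b0) * (a0 * b0
      + a1 * b1) *
    (a1 * b1 - a0 * b0)) ^ 2 * (a0 * b1 - a1 * b0) ^ 2
  · simp only [al8]
    ring
  · rw [h]
    ring

/-- The middle polar form `f₄` of a frame. -/
theorem al4_pt (h : a0 * b1 - a1 * b0 = 1) : 2 * al4 a0 a1 b0 b1 = s4 (pt a0 a1 b0 b1) - 3 / 5 := by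
  rw [s4_pt]
  trans (a0 * b1 + a1 * b0) ^ 4 + (a0 * b0 + a1 * b1) ^ 4 +
    (a1 * b1 - a0 * b0) ^ 4 - 3 / 5 * (a0 * b1 - a1 * b0) ^ 4
  · simp only [al4]
    ring
  · rw [h]
    ring

/-- The product of the polar forms `f₇` and `f₁` of a frame. -/
theorem Q1 (h : a0 * b1 - a1 * b0 = 1) : 8 * (al7 a0 a1 b0 b1 * al7 b0 b1 a0 a1) =
    (2 * s4 (pt a0 a1 b0 b1) - 1) * (s4 (pt a0 a1 b0 b1) - 1) - 54 * e3 (pt a0 a1 b0 b1) := by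
  rw [s4_pt, e3_pt]
  trans (2 * ((a0 * b1 + a1 * b0) ^ 4 + (a0 * b0 + a1 * b1) ^ 4 +
    (a1 * b1 - a0 * b0) ^ 4) - (a0 * b1 - a1 * b0) ^ 4) * ((a0 * b1 + a1 * b0) ^ 4 +
    (a0 * b0 + a1 * b1) ^ 4 + (a1 * b1 - a0 * b0) ^ 4 - (a0 * b1 - a1 * b0) ^ 4) +
    54 * ((a0 * b1 + a1 * b0) * (a0 * b0 + a1 * b1) * (a1 * b1 - a0 * b0)) ^ 2 *
      (a0 * b1 - a1 * b0) ^ 2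
  · simp only [al7]
    ring
  · rw [h]
    ring

/-- The product of the polar forms `f₆` and `f₂` of a frame. -/
theorem Q2 (h : a0 * b1 - a1 * b0 = 1) : 4 * (al6 a0 a1 b0 b1 * al6 b0 b1 a0 a1) =
    (s4 (pt a0 a1 b0 b1) - 1) ^ 2 - 12 * e3 (pt a0 a1 b0 b1) := by
  rw [s4_pt, e3_pt]
  trans ((a0 * b1 + a1 * b0) ^ 4 + (a0 * b0 + a1 * b1) ^ 4 +
    (a1 * b1 - a0 * b0) ^ 4 - (a0 * b1 - a1 * b0) ^ 4) ^ 2 +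
    12 * ((a0 * b1 + a1 * b0) * (a0 * b0 + a1 * b1) * (a1 * b1 - a0 * b0)) ^ 2 *
      (a0 * b1 - a1 * b0) ^ 2
  · simp only [al6]
    ring
  · rw [h]
    ring

/-- The product of the polar forms `f₅` and `f₃` of a frame. -/
theorem Q3 (h : a0 * b1 - a1 * b0 = 1) : 8 * (al5 a0 a1 b0 b1 * al5 b0 b1 a0 a1) =
    (2 * s4 (pt a0 a1 b0 b1) - 1) * (s4 (pt a0 a1 b0 b1) - 1) - 6 * e3 (pt a0 a1 b0 b1) := by
  rw [s4_pt, e3_pt]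
  trans (2 * ((a0 * b1 + a1 * b0) ^ 4 + (a0 * b0 + a1 * b1) ^ 4 +
    (a1 * b1 - a0 * b0) ^ 4) - (a0 * b1 - a1 * b0) ^ 4) * ((a0 * b1 + a1 * b0) ^ 4 +
    (a0 * b0 + a1 * b1) ^ 4 + (a1 * b1 - a0 * b0) ^ 4 - (a0 * b1 - a1 * b0) ^ 4) +
    6 * ((a0 * b1 + a1 * b0) * (a0 * b0 + a1 * b1) * (a1 * b1 - a0 * b0)) ^ 2 *
      (a0 * b1 - a1 * b0) ^ 2
  · simp only [al5]
    ring
  · rw [h]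
    ring

theorem dot_pt : dot (pt a0 a1 b0 b1) (pt a0 a1 b0 b1) = (a0 * b1 - a1 * b0) ^ 2 := by
  simp only [dot, pt, Matrix.cons_val]
  linear_combination (a0 * b0 + a1 * b1) ^ 2 * Complex.I_sq

theorem dot_pt_self : dot (pt a0 a1 a0 a1) (pt a0 a1 a0 a1) = 0 := by
  rw [dot_pt]
  ring

theorem dot_pt_pt : dot (pt a0 a1 a0 a1) (pt a0 a1 b0 b1) = 0 := by
  simp only [dot, pt, Matrix.cons_val]
  linear_combination (a0 * a0 + a1 * a1) * (a0 * b0 + a1 * b1) * Complex.I_sq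

theorem pt_comm : pt b0 b1 a0 a1 = pt a0 a1 b0 b1 := by
  simp only [pt, mul_comm, add_comm]

end

/-- The polar form of the quartic `s4` at `j` copies of `q` and `4 - j` copies of `p`. -/
def mom (j : ℕ) (q p : Fin 3 → ℂ) : ℂ :=
  q 0 ^ j * p 0 ^ (4 - j) + q 1 ^ j * p 1 ^ (4 - j) + q 2 ^ j * p 2 ^ (4 - j)

section
variable (a0 a1 b0 b1 : ℂ)

/-- The polar form `f₄₊ⱼ(a, b)` is, up to the factor `2`, the polar form `mom j` of `s4` at the
isotropic vector `pt a a` and the vector `pt a b`; here `j = 4`, and `j = 3, 2, 1` below. -/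
theorem al8_mom : 2 * al8 a0 a1 = mom 4 (pt a0 a1 a0 a1) (pt a0 a1 b0 b1) := by
  simp only [mom, pt, al8, Matrix.cons_val]
  linear_combination -(a0 * a0 + a1 * a1) ^ 4 * I4

theorem al7_mom : 2 * al7 a0 a1 b0 b1 = mom 3 (pt a0 a1 a0 a1) (pt a0 a1 b0 b1) := by
  simp only [mom, pt, al7, Matrix.cons_val]
  linear_combination -(a0 * a0 + a1 * a1) ^ 3 * (a0 * b0 + a1 * b1) * I4

theorem al6_mom : 2 * al6 a0 a1 b0 b1 = mom 2 (pt a0 a1 a0 a1) (pt a0 a1 b0 b1) := by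
  simp only [mom, pt, al6, Matrix.cons_val]
  linear_combination -(a0 * a0 + a1 * a1) ^ 2 * (a0 * b0 + a1 * b1) ^ 2 * I4

theorem al5_mom : 2 * al5 a0 a1 b0 b1 = mom 1 (pt a0 a1 a0 a1) (pt a0 a1 b0 b1) := by
  simp only [mom, pt, al5, Matrix.cons_val]
  linear_combination -(a0 * a0 + a1 * a1) * (a0 * b0 + a1 * b1) ^ 3 * I4

end

/-! ### The planes `p v = v r` -/

/-- The subspace `{v | p v = v r}` of the quaternions `v = v₀ + v₁i + v₂j + v₃k`, for imaginary
quaternions `p` and `r`; the four equations are the components of `p v = v r`. -/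
def lineOf (p r : Fin 3 → ℂ) : Submodule ℂ (Fin 4 → ℂ) where
  carrier := {v |
    p 0 * v 1 + p 1 * v 2 + p 2 * v 3 = v 1 * r 0 + v 2 * r 1 + v 3 * r 2 ∧
    v 0 * p 0 + (p 1 * v 3 - p 2 * v 2) = v 0 * r 0 + (v 2 * r 2 - v 3 * r 1) ∧
    v 0 * p 1 + (p 2 * v 1 - p 0 * v 3) = v 0 * r 1 + (v 3 * r 0 - v 1 * r 2) ∧
    v 0 * p 2 + (p 0 * v 2 - p 1 * v 1) = v 0 * r 2 + (v 1 * r 1 - v 2 * r 0)}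
  zero_mem' := by simp
  add_mem' := by
    rintro v w ⟨h0, h1, h2, h3⟩ ⟨k0, k1, k2, k3⟩
    refine ⟨?_, ?_, ?_, ?_⟩ <;> simp only [Pi.add_apply]
    · linear_combination h0 + k0
    · linear_combination h1 + k1
    · linear_combination h2 + k2
    · linear_combination h3 + k3
  smul_mem' := by
    rintro c v ⟨h0, h1, h2, h3⟩
    refine ⟨?_, ?_, ?_, ?_⟩ <;> simp only [Pi.smul_apply, smul_eq_mul]
    · linear_combination c * h0
    · linear_combination c * h1
    · linear_combination c * h2
    · linear_combination c * h3

theorem mem_lineOf {p r : Fin 3 → ℂ} {v : Fin 4 → ℂ} : v ∈ lineOf p r ↔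
    p 0 * v 1 + p 1 * v 2 + p 2 * v 3 = v 1 * r 0 + v 2 * r 1 + v 3 * r 2 ∧
    v 0 * p 0 + (p 1 * v 3 - p 2 * v 2) = v 0 * r 0 + (v 2 * r 2 - v 3 * r 1) ∧
    v 0 * p 1 + (p 2 * v 1 - p 0 * v 3) = v 0 * r 1 + (v 3 * r 0 - v 1 * r 2) ∧
    v 0 * p 2 + (p 0 * v 2 - p 1 * v 1) = v 0 * r 2 + (v 1 * r 1 - v 2 * r 0) := Iff.rfl

/-- The equation `p v = v r` in terms of `2 × 2` matrices. -/
theorem vec_mem_lineOf {p r : Fin 3 → ℂ} {A B C D : ℂ} : vec A B C D ∈ lineOf p r ↔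
    Complex.I * p 0 * A + (p 1 + Complex.I * p 2) * C
      = A * (Complex.I * r 0) + B * (-r 1 + Complex.I * r 2) ∧
    Complex.I * p 0 * B + (p 1 + Complex.I * p 2) * D
      = A * (r 1 + Complex.I * r 2) - B * (Complex.I * r 0) ∧
    (-p 1 + Complex.I * p 2) * A - Complex.I * p 0 * C
      = C * (Complex.I * r 0) + D * (-r 1 + Complex.I * r 2) ∧
    (-p 1 + Complex.I * p 2) * B - Complex.I * p 0 * D
      = C * (r 1 + Complex.I * r 2) - D * (Complex.I * r 0) := by
  have hI := Complex.I_sq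
  rw [mem_lineOf]
  simp only [vec, Matrix.cons_val]
  constructor
  · rintro ⟨h0, h1, h2, h3⟩
    refine ⟨?_, ?_, ?_, ?_⟩
    · linear_combination -h0 + Complex.I * h1 + (p 1 + r 1) * (B + C) / 2 * hI
    · linear_combination h2 + Complex.I * h3 + (p 1 + r 1) * (D - A) / 2 * hI
    · linear_combination -h2 + Complex.I * h3 + (p 1 + r 1) * (D - A) / 2 * hI
    · linear_combination -h0 - Complex.I * h1 - (p 1 + r 1) * (B + C) / 2 * hI
  · rintro ⟨h0, h1, h2, h3⟩
    refine ⟨?_, ?_, ?_, ?_⟩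
    · linear_combination (-1 / 2) * (h0 + h3)
    · linear_combination (-Complex.I / 2) * (h0 - h3) +
        ((A + D) * (p 0 - r 0) + (C - B) * (p 2 + r 2)) / 2 * hI
    · linear_combination (1 / 2) * (h1 - h2)
    · linear_combination (-Complex.I / 2) * (h1 + h2) +
        ((A + D) * (p 2 - r 2) + (B - C) * (p 0 + r 0)) / 2 * hI

theorem vec_mem_lineOf_pt {a0 a1 b0 b1 c0 c1 d0 d1 A B C D : ℂ} :
    vec A B C D ∈ lineOf (pt a0 a1 b0 b1) (pt c0 c1 d0 d1) ↔
    (a0 * b1 + a1 * b0) * A - 2 * (a0 * b0) * C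
      = A * (c0 * d1 + c1 * d0) + B * (2 * (c1 * d1)) ∧
    (a0 * b1 + a1 * b0) * B - 2 * (a0 * b0) * D
      = -(A * (2 * (c0 * d0))) - B * (c0 * d1 + c1 * d0) ∧
    2 * (a1 * b1) * A - (a0 * b1 + a1 * b0) * C
      = C * (c0 * d1 + c1 * d0) + D * (2 * (c1 * d1)) ∧
    2 * (a1 * b1) * B - (a0 * b1 + a1 * b0) * D
      = -(C * (2 * (c0 * d0))) - D * (c0 * d1 + c1 * d0) := by
  have hI : Complex.I ≠ 0 := Complex.I_ne_zero
  rw [vec_mem_lineOf]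
  simp only [pt, Matrix.cons_val]
  refine and_congr ?_ (and_congr ?_ (and_congr ?_ ?_)) <;> constructor <;> intro h
  · apply mul_left_cancel₀ hI
    linear_combination h
  · linear_combination Complex.I * h
  · apply mul_left_cancel₀ hI
    linear_combination h
  · linear_combination Complex.I * h
  · apply mul_left_cancel₀ hI
    linear_combination h
  · linear_combination Complex.I * h
  · apply mul_left_cancel₀ hI
    linear_combination h
  · linear_combination Complex.I * h

theorem vec_smul (s A B C D : ℂ) : s • vec A B C D = vec (s * A) (s * B) (s * C) (s * D) := by
  ext i
  fin_cases i <;> simp [vec] <;> ring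

theorem vec_add (A B C D A' B' C' D' : ℂ) :
    vec A B C D + vec A' B' C' D' = vec (A + A') (B + B') (C + C') (D + D') := by
  ext i
  fin_cases i <;> simp [vec] <;> ring

theorem vec_zero : vec 0 0 0 0 = 0 := by
  ext i
  fin_cases i <;> simp [vec]

theorem vec_inj {A B C D A' B' C' D' : ℂ} (h : vec A B C D = vec A' B' C' D') :
    A = A' ∧ B = B' ∧ C = C' ∧ D = D' := by
  have h0 := congrFun h 0
  have h1 := congrFun h 1
  have h2 := congrFun h 2
  have h3 := congrFun h 3
  simp only [vec, Matrix.cons_val] at h0 h1 h2 h3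
  have hI := Complex.I_sq
  refine ⟨?_, ?_, ?_, ?_⟩
  · linear_combination h0 + Complex.I * h1 + (A - D - A' + D') / 2 * hI
  · linear_combination h2 + Complex.I * h3 + (B + C - B' - C') / 2 * hI
  · linear_combination -h2 + Complex.I * h3 + (B + C - B' - C') / 2 * hI
  · linear_combination h0 - Complex.I * h1 - (A - D - A' + D') / 2 * hI

section
variable {a0 a1 b0 b1 c0 c1 d0 d1 : ℂ}

/-- When `p` and `r` have frames of eigenvectors `(a, b)` and `(c, d)`, the plane
`{v | p v = v r}` is spanned by `a ⊗ (d₁, -d₀)` and `b ⊗ (-c₁, c₀)`: each is a column eigenvector of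
`p` times a row eigenvector of `r` for the same eigenvalue. -/
theorem mem_lineOf_pt (h : a0 * b1 - a1 * b0 = 1) (h' : c0 * d1 - c1 * d0 = 1) (v : Fin 4 → ℂ) :
    v ∈ lineOf (pt a0 a1 b0 b1) (pt c0 c1 d0 d1) ↔ ∃ s t : ℂ,
      v = vec (s * (a0 * d1) - t * (b0 * c1)) (t * (b0 * c0) - s * (a0 * d0))
      (s * (a1 * d1) - t * (b1 * c1)) (t * (b1 * c0) - s * (a1 * d0)) := by
  constructor
  · rw [eq_vec v]
    generalize v 0 + Complex.I * v 1 = A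
    generalize v 2 + Complex.I * v 3 = B
    generalize -v 2 + Complex.I * v 3 = C
    generalize v 0 - Complex.I * v 1 = D
    rw [vec_mem_lineOf_pt]
    rintro ⟨h0, h1, h2, h3⟩
    -- the coefficients pair the columns of `v` with `b`, resp. `a`, and the rows with `c`, resp. `d`
    refine ⟨(b1 * A - b0 * C) * c0 + (b1 * B - b0 * D) * c1,
      (a0 * C - a1 * A) * d0 + (a0 * D - a1 * B) * d1, ?_⟩
    congr 1
    · linear_combination (-1 / 2 : ℂ) * ((c0 * d1 + c1 * d0) * h0 + 2 * (c1 * d1) * h1)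
        - A * (c0 * d1 - c1 * d0) / 2 * h - A * (c0 * d1 - c1 * d0 + 2) / 2 * h'
    · linear_combination (-1 / 2 : ℂ) * (-2 * (c0 * d0) * h0 - (c0 * d1 + c1 * d0) * h1)
        - B * (c0 * d1 - c1 * d0) / 2 * h - B * (c0 * d1 - c1 * d0 + 2) / 2 * h'
    · linear_combination (-1 / 2 : ℂ) * ((c0 * d1 + c1 * d0) * h2 + 2 * (c1 * d1) * h3)
        - C * (c0 * d1 - c1 * d0) / 2 * h - C * (c0 * d1 - c1 * d0 + 2) / 2 * h'
    · linear_combination (-1 / 2 : ℂ) * (-2 * (c0 * d0) * h2 - (c0 * d1 + c1 * d0) * h3)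
        - D * (c0 * d1 - c1 * d0) / 2 * h - D * (c0 * d1 - c1 * d0 + 2) / 2 * h'
  · rintro ⟨s, t, rfl⟩
    rw [vec_mem_lineOf_pt]
    refine ⟨?_, ?_, ?_, ?_⟩
    · linear_combination (s * a0 * d1 + t * b0 * c1) * (h - h')
    · linear_combination (-s * a0 * d0 - t * b0 * c0) * (h - h')
    · linear_combination (s * a1 * d1 + t * b1 * c1) * (h - h')
    · linear_combination (-s * a1 * d0 - t * b1 * c0) * (h - h')

end

theorem finrank_of_param {L : Submodule ℂ (Fin 4 → ℂ)} {X Y : Fin 4 → ℂ}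
    (h : ∀ v, v ∈ L ↔ ∃ s t : ℂ, s • X + t • Y = v)
    (hi : ∀ s t : ℂ, s • X + t • Y = 0 → s = 0 ∧ t = 0) : Module.finrank ℂ L = 2 := by
  have hL : L = Submodule.span ℂ (Set.range ![X, Y]) := by
    ext v
    rw [h, Matrix.range_cons_cons_empty, Submodule.mem_span_pair]
  rw [hL, finrank_span_eq_card (LinearIndependent.pair_iff.2 hi)]
  simp

theorem eq_of_finrank {W L : Submodule ℂ (Fin 4 → ℂ)} (hW : Module.finrank ℂ W = 2)
    (hL : Module.finrank ℂ L = 2) (h : W ≤ L) : W = L :=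
  Submodule.eq_of_le_of_finrank_eq h (hW.trans hL.symm)

section
variable {a0 a1 b0 b1 c0 c1 d0 d1 : ℂ}

theorem finrank_lineOf_pt (h : a0 * b1 - a1 * b0 = 1) (h' : c0 * d1 - c1 * d0 = 1) :
    Module.finrank ℂ (lineOf (pt a0 a1 b0 b1) (pt c0 c1 d0 d1)) = 2 := by
  refine finrank_of_param (X := vec (a0 * d1) (-(a0 * d0)) (a1 * d1) (-(a1 * d0)))
    (Y := vec (-(b0 * c1)) (b0 * c0) (-(b1 * c1)) (b1 * c0)) (fun v => ?_) (fun s t hst => ?_)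
  · rw [mem_lineOf_pt h h']
    simp only [vec_smul, vec_add]
    constructor <;> rintro ⟨s, t, rfl⟩ <;> refine ⟨s, t, ?_⟩ <;> congr 1 <;> ring
  · rw [vec_smul, vec_smul, vec_add, ← vec_zero] at hst
    obtain ⟨hA, hB, hC, hD⟩ := vec_inj hst
    constructor
    · linear_combination (b1 * c0) * hA + (b1 * c1) * hB - (b0 * c0) * hC - b0 * c1 * hD
        - s * (c0 * d1 - c1 * d0) * h - s * h'
    · linear_combination (-a1 * d0) * hA - (a1 * d1) * hB + (a0 * d0) * hC + a0 * d1 * hD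
        - t * h' - t * (c0 * d1 - c1 * d0) * h

/-- If all coefficients in `eval_pencil` vanish, the plane lies on the surface. -/
theorem liesOn_lineOf_pt (h : a0 * b1 - a1 * b0 = 1) (h' : c0 * d1 - c1 * d0 = 1)
    (h8 : al8 a0 a1 * al8 d0 d1 = 0) (h7 : al7 a0 a1 b0 b1 * al7 d0 d1 c0 c1 = 0)
    (h6 : al6 a0 a1 b0 b1 * al6 d0 d1 c0 c1 = 0) (h5 : al5 a0 a1 b0 b1 * al5 d0 d1 c0 c1 = 0)
    (h4 : 70 * (al4 a0 a1 b0 b1 * al4 c0 c1 d0 d1) + 56 / 5 = 0)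
    (h3 : al5 b0 b1 a0 a1 * al5 c0 c1 d0 d1 = 0) (h2 : al6 b0 b1 a0 a1 * al6 c0 c1 d0 d1 = 0)
    (h1 : al7 b0 b1 a0 a1 * al7 c0 c1 d0 d1 = 0) (h0 : al8 b0 b1 * al8 c0 c1 = 0) :
    LiesOn S8 (lineOf (pt a0 a1 b0 b1) (pt c0 c1 d0 d1)) := by
  intro v hv
  obtain ⟨s, t, rfl⟩ := (mem_lineOf_pt h h' v).1 hv
  have := eval_pencil s t h h'
  rw [h8, h7, h6, h5, h4, h3, h2, h1, h0] at this
  linear_combination this / 16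

end

/-! ### A sufficient criterion -/

/-- An imaginary quaternion with `p² = -1` has a unimodular frame of eigenvectors. -/
theorem exists_frame {p : Fin 3 → ℂ} (hp : dot p p = 1) : ∃ a0 a1 b0 b1 : ℂ,
    a0 * b1 - a1 * b0 = 1 ∧ p = pt a0 a1 b0 b1 := by
  have hI := Complex.I_sq
  simp only [dot] at hp
  -- generically `b` is the eigenvector with second coordinate `(p₀ + 1) / 2`; the vectors with
  -- `p₀ = -1` need another normalisation
  by_cases hs : p 0 + 1 = 0
  · refine ⟨(p 2 - Complex.I * p 1) / 2, 1, -1, (Complex.I * p 1 + p 2) / 2, ?_, ?_⟩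
    · linear_combination (-p 1 ^ 2 / 4) * hI + hp / 4 - (p 0 - 1) / 4 * hs
    · ext i
      fin_cases i <;> simp only [pt, Matrix.cons_val, Fin.zero_eta, Fin.mk_one, Fin.reduceFinMk]
      · linear_combination (p 1 ^ 2 / 4) * hI - hp / 4 + (p 0 + 3) / 4 * hs
      · linear_combination p 1 * hI
      · ring
  · refine ⟨1, (Complex.I * p 1 + p 2) / (p 0 + 1), (Complex.I * p 1 - p 2) / 2,
      (p 0 + 1) / 2, ?_, ?_⟩
    · field_simp
      linear_combination (-p 1 ^ 2) * hI + hp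
    · ext i
      fin_cases i <;> simp only [pt, Matrix.cons_val, Fin.zero_eta, Fin.mk_one, Fin.reduceFinMk]
      · field_simp
        linear_combination (-p 1 ^ 2) * hI + hp
      · field_simp
        linear_combination 2 * p 1 * hI
      · field_simp
        ring

/-- The polar form `mom j` vanishes at `p` and every isotropic vector orthogonal to `p`. For
`p = pt a b` these isotropic vectors are the multiples of `pt a a` and `pt b b`, so the condition
amounts to the vanishing of both `f₄₊ⱼ(a, b)` and `f₄₋ⱼ(a, b)`. -/
def Apolar (j : ℕ) (p : Fin 3 → ℂ) : Prop := ∀ q, dot q q = 0 → dot q p = 0 → mom j q p = 0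

/-- A sufficient criterion for `{v | p v = v r}` to be a line on the surface: apolarity of
`p` or of `r` at level `j` kills the coefficients with index `4 + j` and `4 - j`, and the relation
between the values of `s4` kills the middle coefficient. -/
theorem line_of_apolar {p r : Fin 3 → ℂ} (hp : dot p p = 1) (hr : dot r r = 1)
    (h : ∀ j, 1 ≤ j → j ≤ 4 → Apolar j p ∨ Apolar j r)
    (h4 : (s4 p - 3 / 5) * (s4 r - 3 / 5) = -16 / 25) :
    Module.finrank ℂ (lineOf p r) = 2 ∧ LiesOn S8 (lineOf p r) := by
  obtain ⟨a0, a1, b0, b1, hab, rfl⟩ := exists_frame hp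
  obtain ⟨c0, c1, d0, d1, hcd, rfl⟩ := exists_frame hr
  refine ⟨finrank_lineOf_pt hab hcd, ?_⟩
  have key : ∀ j, 1 ≤ j → j ≤ 4 → ∀ x y z w : ℂ,
      (mom j (pt a0 a1 a0 a1) (pt a0 a1 b0 b1) = 2 * x ∧
        mom j (pt b0 b1 b0 b1) (pt b0 b1 a0 a1) = 2 * y) →
      (mom j (pt d0 d1 d0 d1) (pt d0 d1 c0 c1) = 2 * z ∧
        mom j (pt c0 c1 c0 c1) (pt c0 c1 d0 d1) = 2 * w) → x * z = 0 ∧ y * w = 0 := by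
    rintro j hj1 hj4 x y z w ⟨hx, hy⟩ ⟨hz, hw⟩
    have ea : pt b0 b1 a0 a1 = pt a0 a1 b0 b1 := pt_comm
    have ec : pt d0 d1 c0 c1 = pt c0 c1 d0 d1 := pt_comm
    rw [ea] at hy
    rw [ec] at hz
    have zero : ∀ n : ℂ, 0 = 2 * n → n = 0 := fun n hn => by linear_combination -hn / 2
    rcases h j hj1 hj4 with H | H
    · rw [H _ dot_pt_self dot_pt_pt] at hx
      rw [H _ dot_pt_self (ea ▸ dot_pt_pt)] at hy
      rw [zero x hx, zero y hy, zero_mul, zero_mul]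
      exact ⟨rfl, rfl⟩
    · rw [H _ dot_pt_self (ec ▸ dot_pt_pt)] at hz
      rw [H _ dot_pt_self dot_pt_pt] at hw
      rw [zero z hz, zero w hw, mul_zero, mul_zero]
      exact ⟨rfl, rfl⟩
  obtain ⟨h8, h0⟩ := key 4 (by norm_num) (by norm_num) _ _ _ _
    ⟨(al8_mom a0 a1 b0 b1).symm, (al8_mom b0 b1 a0 a1).symm⟩
    ⟨(al8_mom d0 d1 c0 c1).symm, (al8_mom c0 c1 d0 d1).symm⟩
  obtain ⟨h7, h1⟩ := key 3 (by norm_num) (by norm_num) _ _ _ _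
    ⟨(al7_mom a0 a1 b0 b1).symm, (al7_mom b0 b1 a0 a1).symm⟩
    ⟨(al7_mom d0 d1 c0 c1).symm, (al7_mom c0 c1 d0 d1).symm⟩
  obtain ⟨h6, h2⟩ := key 2 (by norm_num) (by norm_num) _ _ _ _
    ⟨(al6_mom a0 a1 b0 b1).symm, (al6_mom b0 b1 a0 a1).symm⟩
    ⟨(al6_mom d0 d1 c0 c1).symm, (al6_mom c0 c1 d0 d1).symm⟩
  obtain ⟨h5, h3⟩ := key 1 (by norm_num) (by norm_num) _ _ _ _
    ⟨(al5_mom a0 a1 b0 b1).symm, (al5_mom b0 b1 a0 a1).symm⟩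
    ⟨(al5_mom d0 d1 c0 c1).symm, (al5_mom c0 c1 d0 d1).symm⟩
  refine liesOn_lineOf_pt hab hcd h8 h7 h6 h5 ?_ h3 h2 h1 h0
  rw [← al4_pt hab, ← al4_pt hcd] at h4
  linear_combination 35 / 2 * h4

/-! ### Apolar vectors -/

/-- The vector `(x, y, z)` with its coordinates shifted cyclically by `j` places. -/
def place (j : Fin 3) (x y z : ℂ) : Fin 3 → ℂ := ![![x, y, z], ![z, x, y], ![y, z, x]] j

theorem dot_place (j : Fin 3) (x y z : ℂ) :
    dot (place j x y z) (place j x y z) = x ^ 2 + y ^ 2 + z ^ 2 := by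
  fin_cases j <;> simp [dot, place] <;> ring

theorem s4_place (j : Fin 3) (x y z : ℂ) : s4 (place j x y z) = x ^ 4 + y ^ 4 + z ^ 4 := by
  fin_cases j <;> simp [s4, place] <;> ring

/-- Apolarity is invariant under cyclic shifts, so it can be checked on `(x, y, z)`. -/
theorem apolar_place {k : ℕ} {j : Fin 3} {x y z : ℂ}
    (h : ∀ u v w : ℂ, u ^ 2 + v ^ 2 + w ^ 2 = 0 → u * x + v * y + w * z = 0 →
      u ^ k * x ^ (4 - k) + v ^ k * y ^ (4 - k) + w ^ k * z ^ (4 - k) = 0) :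
    Apolar k (place j x y z) := by
  intro q h0 h1
  fin_cases j <;> simp [dot, place, mom] at h0 h1 ⊢
  · exact h _ _ _ (by linear_combination h0) h1
  · rw [← h (q 1) (q 2) (q 0) (by linear_combination h0) (by linear_combination h1)]
    ring
  · rw [← h (q 2) (q 0) (q 1) (by linear_combination h0) (by linear_combination h1)]
    ring

theorem apolar_axis (j : Fin 3) (k : ℕ) (h1 : 1 ≤ k) (h3 : k ≤ 3) :
    Apolar k (place j 1 0 0) := by
  apply apolar_place
  intro u v w _ h
  have hu : u = 0 := by linear_combination h
  subst hu
  interval_cases k <;> simp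

theorem apolar_edge {u v : ℂ} (j : Fin 3) (h : u ^ 2 + v ^ 2 = 1) (h' : u ^ 2 * v ^ 2 = 1) :
    Apolar 4 (place j 0 u v) := by
  apply apolar_place
  intro x y z hq hp
  have hv : v ^ 4 ≠ 0 := by
    rintro h0
    have : v = 0 := by simpa using h0
    simp [this] at h'
  apply mul_left_cancel₀ hv
  have hz : v * z = -(y * u) := by linear_combination hp
  have hx : v ^ 2 * x ^ 2 = -y ^ 2 := by
    linear_combination v ^ 2 * hq - (v * z - y * u) * hz - y ^ 2 * h
  have e : v ^ 4 * (x ^ 4 + y ^ 4 + z ^ 4)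
    = (v ^ 2 * x ^ 2) ^ 2 + v ^ 4 * y ^ 4 + (v * z) ^ 4 := by ring
  simp only [Nat.sub_self, pow_zero, mul_one, mul_zero]
  rw [e, hx, hz]
  linear_combination y ^ 4 * (u ^ 2 + v ^ 2 + 1) * h - 2 * y ^ 4 * h'

theorem apolar_diag {x y z : ℂ} (hx : x ^ 2 = 1 / 3) (hy : y ^ 2 = 1 / 3) (hz : z ^ 2 = 1 / 3)
    (k : ℕ) (h1 : 1 ≤ k) (h4 : k ≤ 4) (hk : k ≠ 3) : Apolar k ![x, y, z] := by
  refine apolar_place (j := 0) ?_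
  intro u v w hq hp
  interval_cases k
  · linear_combination hp / 3 + u * x * hx + v * y * hy + w * z * hz
  · linear_combination hq / 3 + u ^ 2 * hx + v ^ 2 * hy + w ^ 2 * hz
  · exact absurd rfl hk
  · have e : ∀ t m : ℂ, m ^ 2 = 1 / 3 → t ^ 4 = 9 * (t * m) ^ 4 := by
      intro t m hm
      linear_combination -9 * t ^ 4 * (m ^ 2 + 1 / 3) * hm
    have e2 : ∀ t m : ℂ, m ^ 2 = 1 / 3 → t ^ 2 = 3 * (t * m) ^ 2 := by
      intro t m hm
      linear_combination -3 * t ^ 2 * hm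
    rw [e2 u x hx, e2 v y hy, e2 w z hz] at hq
    simp only [Nat.sub_self, pow_zero, mul_one]
    rw [e u x hx, e v y hy, e w z hz]
    generalize u * x = X at *
    generalize v * y = Y at *
    obtain rfl : X = -Y - w * z := by linear_combination hp
    linear_combination 3 * (Y ^ 2 + Y * (w * z) + (w * z) ^ 2) * hq

theorem apolar_five {x y z : ℂ} (hx : x ^ 2 = 5 / 3) (hy : y ^ 2 = -1 / 3) (hz : z ^ 2 = -1 / 3)
    (j : Fin 3) : Apolar 3 (place j x y z) := by
  apply apolar_place
  intro u v w hq hp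
  have e : ∀ t m c : ℂ, m ^ 2 * c = 1 → t ^ 2 = c * (t * m) ^ 2 ∧
      t ^ 3 * m ^ (4 - 3) = c * (t * m) ^ 3 := by
    intro t m c hm
    constructor
    · linear_combination -t ^ 2 * hm
    · linear_combination -t ^ 3 * m * hm
  obtain ⟨u2, u3⟩ := e u x (3 / 5) (by rw [hx]; norm_num)
  obtain ⟨v2, v3⟩ := e v y (-3) (by rw [hy]; norm_num)
  obtain ⟨w2, w3⟩ := e w z (-3) (by rw [hz]; norm_num)
  rw [u2, v2, w2] at hq
  rw [u3, v3, w3]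
  generalize u * x = X at *
  generalize v * y = Y at *
  obtain rfl : X = -Y - w * z := by linear_combination hp
  linear_combination 3 / 2 * (Y + w * z) * hq

/-! ### Rulings of the cone of matrices of rank one -/

section
variable {m0 m1 n0 n1 : ℂ}

/-- The matrix of rank at most one `m ⊗ n`, column `m` times row `n`. -/
noncomputable def out (m0 m1 n0 n1 : ℂ) : Fin 4 → ℂ := vec (m0 * n0) (m0 * n1) (m1 * n0) (m1 * n1)

theorem eval_out : 16 * eval (out m0 m1 n0 n1) S8 = al8 m0 m1 * al8 n0 n1 := by
  rw [out, eval_vec]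
  simp only [al8]
  ring

theorem out_smul_right (s : ℂ) : s • out m0 m1 n0 n1 = out m0 m1 (s * n0) (s * n1) := by
  rw [out, out, vec_smul]
  congr 1 <;> ring

theorem out_smul_left (s : ℂ) : s • out m0 m1 n0 n1 = out (s * m0) (s * m1) n0 n1 := by
  rw [out, out, vec_smul]
  congr 1 <;> ring

theorem pt_zero : pt 0 0 0 0 = 0 := by
  ext i
  fin_cases i <;> simp [pt]

/-- For isotropic `p = pt m m`, the plane `{v | p v = 0}` is the ruling `m ⊗ ℂ²`. -/
theorem mem_lineOf_left (h : 2 * m0 * m1 = 1) (v : Fin 4 → ℂ) :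
    v ∈ lineOf (pt m0 m1 m0 m1) 0 ↔ ∃ s t : ℂ, v = out m0 m1 s t := by
  rw [← pt_zero]
  constructor
  · rw [eq_vec v]
    generalize v 0 + Complex.I * v 1 = A
    generalize v 2 + Complex.I * v 3 = B
    generalize -v 2 + Complex.I * v 3 = C
    generalize v 0 - Complex.I * v 1 = D
    rw [vec_mem_lineOf_pt]
    rintro ⟨h0, h1, h2, h3⟩
    refine ⟨2 * m1 * A, 2 * m1 * B, ?_⟩
    rw [out]
    congr 1
    · linear_combination -A * h
    · linear_combination -B * h
    · linear_combination -C * h - h2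
    · linear_combination -D * h - h3
  · rintro ⟨s, t, rfl⟩
    rw [out, vec_mem_lineOf_pt]
    refine ⟨?_, ?_, ?_, ?_⟩ <;> ring

/-- For isotropic `r = pt n n`, the plane `{v | v r = 0}` is the ruling `ℂ² ⊗ (n₁, -n₀)`. -/
theorem mem_lineOf_right (h : 2 * n0 * n1 = 1) (v : Fin 4 → ℂ) :
    v ∈ lineOf 0 (pt n0 n1 n0 n1) ↔ ∃ s t : ℂ, v = out s t n1 (-n0) := by
  rw [← pt_zero]
  constructor
  · rw [eq_vec v]
    generalize v 0 + Complex.I * v 1 = A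
    generalize v 2 + Complex.I * v 3 = B
    generalize -v 2 + Complex.I * v 3 = C
    generalize v 0 - Complex.I * v 1 = D
    rw [vec_mem_lineOf_pt]
    rintro ⟨h0, h1, h2, h3⟩
    refine ⟨2 * n0 * A, 2 * n0 * C, ?_⟩
    rw [out]
    congr 1
    · linear_combination -A * h
    · linear_combination -B * h + h1
    · linear_combination -C * h
    · linear_combination -D * h + h3
  · rintro ⟨s, t, rfl⟩
    rw [out, vec_mem_lineOf_pt]
    refine ⟨?_, ?_, ?_, ?_⟩ <;> ring

theorem finrank_lineOf_left (h : 2 * m0 * m1 = 1) :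
    Module.finrank ℂ (lineOf (pt m0 m1 m0 m1) 0) = 2 := by
  refine finrank_of_param (X := out m0 m1 1 0) (Y := out m0 m1 0 1) (fun v => ?_) (fun s t hst =>
    ?_)
  · rw [mem_lineOf_left h]
    simp only [out, vec_smul, vec_add]
    constructor <;> rintro ⟨s, t, rfl⟩ <;> refine ⟨s, t, ?_⟩ <;> congr 1 <;> ring
  · rw [out, out, vec_smul, vec_smul, vec_add, ← vec_zero] at hst
    obtain ⟨hA, hB, -, -⟩ := vec_inj hst
    constructor
    · linear_combination 2 * m1 * hA - s * h
    · linear_combination 2 * m1 * hB - t * h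

theorem finrank_lineOf_right (h : 2 * n0 * n1 = 1) :
    Module.finrank ℂ (lineOf 0 (pt n0 n1 n0 n1)) = 2 := by
  refine finrank_of_param (X := out 1 0 n1 (-n0)) (Y := out 0 1 n1 (-n0))
    (fun v => ?_) (fun s t hst => ?_)
  · rw [mem_lineOf_right h]
    simp only [out, vec_smul, vec_add]
    constructor <;> rintro ⟨s, t, rfl⟩ <;> refine ⟨s, t, ?_⟩ <;> congr 1 <;> ring
  · rw [out, out, vec_smul, vec_smul, vec_add, ← vec_zero] at hst
    obtain ⟨hA, -, hC, -⟩ := vec_inj hst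
    constructor
    · linear_combination 2 * n0 * hA - s * h
    · linear_combination 2 * n0 * hC - t * h

theorem s4_pt_self : s4 (pt m0 m1 m0 m1) = 2 * al8 m0 m1 := by
  rw [al8_mom m0 m1 m0 m1]
  simp [mom, s4]

end

/-- An isotropic vector, normalised by `q₀ = 1`, is of the form `pt m m`. -/
theorem exists_isotropic {q : Fin 3 → ℂ} (h0 : q 0 = 1) (hq : dot q q = 0) :
    ∃ m0 m1 : ℂ, 2 * m0 * m1 = 1 ∧ q = pt m0 m1 m0 m1 := by
  have hI := Complex.I_sq
  simp only [dot, h0] at hq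
  have hne : Complex.I * q 1 - q 2 ≠ 0 := by
    intro h
    have : (1 : ℂ) = 0 := by linear_combination hq + (Complex.I * q 1 + q 2) * h - q 1 ^ 2 * hI
    exact one_ne_zero this
  obtain ⟨m0, hm⟩ := IsAlgClosed.exists_pow_nat_eq ((Complex.I * q 1 - q 2) / 2) two_pos
  have hm0 : m0 ≠ 0 := by
    rintro rfl
    exact hne (by linear_combination -2 * hm)
  have hm1 : 4 * m0 ^ 2 * ((Complex.I * q 1 + q 2) / 2) = 1 := by
    rw [hm]
    linear_combination q 1 ^ 2 * hI - hq
  have e : (1 / (2 * m0)) ^ 2 = (Complex.I * q 1 + q 2) / 2 := by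
    field_simp
    linear_combination -hm1
  refine ⟨m0, 1 / (2 * m0), by field_simp, ?_⟩
  ext i
  fin_cases i <;> simp only [pt, Matrix.cons_val, Fin.zero_eta, Fin.mk_one, Fin.reduceFinMk]
  · rw [h0]
    field_simp
    norm_num
  · linear_combination Complex.I * hm + Complex.I * e + q 1 * hI
  · linear_combination hm - e

/-- For isotropic `q` with `s4 q = 0`, both rulings attached to `q` lie on the surface, since
`s4 (pt m m) = 2 f(m)`. -/
theorem line_of_isotropic {q : Fin 3 → ℂ} (h0 : q 0 = 1) (hq : dot q q = 0) (h4 : s4 q = 0) :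
    (Module.finrank ℂ (lineOf q 0) = 2 ∧ LiesOn S8 (lineOf q 0)) ∧
    (Module.finrank ℂ (lineOf 0 q) = 2 ∧ LiesOn S8 (lineOf 0 q)) := by
  obtain ⟨m0, m1, h, rfl⟩ := exists_isotropic h0 hq
  rw [s4_pt_self] at h4
  refine ⟨⟨finrank_lineOf_left h, fun v hv => ?_⟩, ⟨finrank_lineOf_right h, fun v hv => ?_⟩⟩
  · obtain ⟨s, t, rfl⟩ := (mem_lineOf_left h v).1 hv
    linear_combination (1 / 16 : ℂ) * (eval_out (m0 := m0) (m1 := m1) (n0 := s) (n1 := t)) + al8 s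
      t / 32 * h4
  · obtain ⟨s, t, rfl⟩ := (mem_lineOf_right h v).1 hv
    have e : al8 m1 (-m0) = al8 m0 m1 := by
      simp only [al8]
      ring
    have := eval_out (m0 := s) (m1 := t) (n0 := m1) (n1 := -m0)
    rw [e] at this
    linear_combination this / 16 + al8 s t / 32 * h4

/-! ### Planes tangent to the cone -/

/-- A polynomial function that vanishes identically has zero coefficients. -/
theorem coeff_eq_zero {n : ℕ} (c : Fin n → ℂ) (h : ∀ s : ℂ, ∑ i, c i * s ^ (i : ℕ) = 0) : c = 0 :=
  by
  have hp : (∑ i, Polynomial.C (c i) * Polynomial.X ^ (i : ℕ) : Polynomial ℂ) = 0 := by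
    apply Polynomial.funext
    intro s
    simpa [Polynomial.eval_finsetSum] using h s
  ext i
  have := congrArg (fun p => Polynomial.coeff p i) hp
  simpa [Polynomial.finsetSum_coeff, Polynomial.coeff_X_pow, Fin.val_inj] using this

section
variable {a0 a1 b0 b1 c0 c1 d0 d1 : ℂ}

/-- The roots of `f` are simple: at a root `a`, the derivative in a direction `b` not
proportional to `a` is nonzero. -/
theorem simple_roots (h : a0 * b1 - a1 * b0 ≠ 0) (h8 : al8 a0 a1 = 0) : al7 a0 a1 b0 b1 ≠ 0 := by
  intro h7
  have e0 : a0 ^ 3 * (a0 ^ 4 + 7 * a1 ^ 4) = 0 := by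
    apply (mul_eq_zero.1 (?_ : (a0 * b1 - a1 * b0) * _ = 0)).resolve_left h
    simp only [al8, al7] at h8 h7
    linear_combination b1 * h8 - a1 * h7
  have e1 : a1 ^ 3 * (7 * a0 ^ 4 + a1 ^ 4) = 0 := by
    apply (mul_eq_zero.1 (?_ : (a0 * b1 - a1 * b0) * _ = 0)).resolve_left h
    simp only [al8, al7] at h8 h7
    linear_combination -b0 * h8 + a0 * h7
  have z : a0 = 0 ∧ a1 = 0 := by
    rcases mul_eq_zero.1 e0 with k0 | k0
    · have : a0 = 0 := by simpa using k0
      subst this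
      simpa [al8] using h8
    · rcases mul_eq_zero.1 e1 with k1 | k1
      · have : a1 = 0 := by simpa using k1
        subst this
        simpa [al8] using h8
      · have x0 : a0 ^ 4 = 0 := by linear_combination (7 * k1 - k0) / 48
        have x1 : a1 ^ 4 = 0 := by linear_combination (7 * k0 - k1) / 48
        exact ⟨by simpa using x0, by simpa using x1⟩
  apply h
  rw [z.1, z.2]
  ring

set_option maxHeartbeats 4000000 in
/-- A plane tangent to the cone `det = 0` along `a ⊗ c` does not lie on the surface: the
coefficients of `s⁸` and `s⁷` force `f(a) = f(c) = 0`, and then that of `s⁶` contradicts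
`simple_roots`. -/
theorem no_tangent (h : a0 * b1 - a1 * b0 ≠ 0) (h' : c0 * d1 - c1 * d0 ≠ 0)
    (H : ∀ s : ℂ, eval (s • out a0 a1 c0 c1 + (out a0 a1 d0 d1 + out b0 b1 c0 c1)) S8 = 0) :
    False := by
  obtain ⟨r0, r1, r2, r3, r4, r5, hr⟩ : ∃ r0 r1 r2 r3 r4 r5 : ℂ, ∀ s : ℂ,
      16 * eval (s • out a0 a1 c0 c1 + (out a0 a1 d0 d1 + out b0 b1 c0 c1)) S8 =
      al8 a0 a1 * al8 c0 c1 * s ^ 8 +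
      8 * (al8 a0 a1 * al7 c0 c1 d0 d1 + al7 a0 a1 b0 b1 * al8 c0 c1) * s ^ 7 +
      28 * (al8 a0 a1 * al6 c0 c1 d0 d1 + 2 * (al7 a0 a1 b0 b1 * al7 c0 c1 d0 d1)
        + al6 a0 a1 b0 b1 * al8 c0 c1) * s ^ 6 + r5 * s ^ 5 + r4 * s ^ 4 + r3 * s ^ 3 +
      r2 * s ^ 2 + r1 * s + r0 := by
    refine ⟨1 * (al8 b0 b1 * al8 c0 c1) + 8 * (al7 b0 b1 a0 a1 * al7 c0 c1 d0 d1) + 28 * (al6 b0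
      b1 a0 a1 * al6 c0 c1 d0 d1) + 56 * (al5 b0 b1 a0 a1 * al5 c0 c1 d0 d1) + 70 * (al4 a0 a1 b0
      b1 * al4 c0 c1 d0 d1) + 56 * (al5 a0 a1 b0 b1 * al5 d0 d1 c0 c1) + 28 * (al6 a0 a1 b0 b1 *
      al6 d0 d1 c0 c1) + 8 * (al7 a0 a1 b0 b1 * al7 d0 d1 c0 c1) + 1 * (al8 a0 a1 * al8 d0 d1) +
      56 / 5 * ((a0 * b1 - a1 * b0) * (c0 * d1 - c1 * d0)) ^ 4,
      8 * (al7 b0 b1 a0 a1 * al8 c0 c1) + 56 * (al6 b0 b1 a0 a1 * al7 c0 c1 d0 d1) + 168 * (al5 b0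
        b1 a0 a1 * al6 c0 c1 d0 d1) + 280 * (al4 a0 a1 b0 b1 * al5 c0 c1 d0 d1) + 280 * (al5 a0 a1
        b0 b1 * al4 c0 c1 d0 d1) + 168 * (al6 a0 a1 b0 b1 * al5 d0 d1 c0 c1) + 56 * (al7 a0 a1 b0
        b1 * al6 d0 d1 c0 c1) + 8 * (al8 a0 a1 * al7 d0 d1 c0 c1),
      28 * (al6 b0 b1 a0 a1 * al8 c0 c1) + 168 * (al5 b0 b1 a0 a1 * al7 c0 c1 d0 d1) + 420 * (al4
        a0 a1 b0 b1 * al6 c0 c1 d0 d1) + 560 * (al5 a0 a1 b0 b1 * al5 c0 c1 d0 d1) + 420 * (al6 a0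
        a1 b0 b1 * al4 c0 c1 d0 d1) + 168 * (al7 a0 a1 b0 b1 * al5 d0 d1 c0 c1) + 28 * (al8 a0 a1
        * al6 d0 d1 c0 c1),
      56 * (al5 b0 b1 a0 a1 * al8 c0 c1) + 280 * (al4 a0 a1 b0 b1 * al7 c0 c1 d0 d1) + 560 * (al5
        a0 a1 b0 b1 * al6 c0 c1 d0 d1) + 560 * (al6 a0 a1 b0 b1 * al5 c0 c1 d0 d1) + 280 * (al7 a0
        a1 b0 b1 * al4 c0 c1 d0 d1) + 56 * (al8 a0 a1 * al5 d0 d1 c0 c1),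
      70 * (al4 a0 a1 b0 b1 * al8 c0 c1) + 280 * (al5 a0 a1 b0 b1 * al7 c0 c1 d0 d1) + 420 * (al6
        a0 a1 b0 b1 * al6 c0 c1 d0 d1) + 280 * (al7 a0 a1 b0 b1 * al5 c0 c1 d0 d1) + 70 * (al8 a0
        a1 * al4 c0 c1 d0 d1),
      56 * (al5 a0 a1 b0 b1 * al8 c0 c1) + 168 * (al6 a0 a1 b0 b1 * al7 c0 c1 d0 d1) + 168 * (al7
        a0 a1 b0 b1 * al6 c0 c1 d0 d1) + 56 * (al8 a0 a1 * al5 c0 c1 d0 d1), fun s => ?_⟩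
    rw [out, out, out, vec_smul, vec_add, vec_add, eval_vec]
    simp only [al8, al7, al6, al5, al4]
    ring
  have := coeff_eq_zero ![r0, r1, r2, r3, r4, r5, 28 * (al8 a0 a1 * al6 c0 c1 d0 d1
      + 2 * (al7 a0 a1 b0 b1 * al7 c0 c1 d0 d1) + al6 a0 a1 b0 b1 * al8 c0 c1),
      8 * (al8 a0 a1 * al7 c0 c1 d0 d1 + al7 a0 a1 b0 b1 * al8 c0 c1), al8 a0 a1 * al8 c0 c1] (by
    intro s
    have h1 := hr s
    rw [H s] at h1
    simp [Fin.sum_univ_succ]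
    linear_combination -h1)
  have c8 := congrFun this 8
  have c7 := congrFun this 7
  have c6 := congrFun this 6
  simp at c8 c7 c6
  have n1 := simple_roots (a0 := a0) (a1 := a1) h
  have n2 := simple_roots (a0 := c0) (a1 := c1) h'
  rcases c8 with k | k
  · have := n1 k
    have k2 : al8 c0 c1 = 0 := by simpa [k, this] using c7
    simp [k, k2, this, n2 k2] at c6
  · have := n2 k
    have k2 : al8 a0 a1 = 0 := by simpa [k, this] using c7
    simp [k, k2, this, n1 k2] at c6

end

/-! ### Classification of planes and necessary conditions -/

/-- A matrix with vanishing determinant is of the form `m ⊗ n`. -/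
theorem exists_out {A B C D : ℂ} (h : A * D - B * C = 0) :
    ∃ m0 m1 n0 n1 : ℂ, vec A B C D = out m0 m1 n0 n1 := by
  by_cases hA : A = 0
  · subst hA
    have : B * C = 0 := by linear_combination -h
    rcases mul_eq_zero.1 this with rfl | rfl
    · exact ⟨0, 1, C, D, by simp [out]⟩
    · exact ⟨B, D, 0, 1, by simp [out]⟩
  · refine ⟨1, C / A, A, B, ?_⟩
    rw [out]
    congr 1
    · ring
    · ring
    · field_simp
    · field_simp
      linear_combination h

/-- A nonzero vector of `ℂ²` is the first vector of a unimodular frame. -/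
theorem exists_dual {m0 m1 : ℂ} (h : ¬(m0 = 0 ∧ m1 = 0)) : ∃ x0 x1 : ℂ, m0 * x1 - m1 * x0 = 1 := by
  by_cases h0 : m0 = 0
  · have h1 : m1 ≠ 0 := fun k => h ⟨h0, k⟩
    exact ⟨-1 / m1, 0, by field_simp; ring⟩
  · exact ⟨0, 1 / m0, by field_simp; ring⟩

/-- Every plane of matrices contains a matrix of rank one, as the determinant restricted to it
is a binary quadratic form over `ℂ`. -/
theorem exists_out_mem {W : Submodule ℂ (Fin 4 → ℂ)} (hW : Module.finrank ℂ W = 2) :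
    ∃ m0 m1 n0 n1 : ℂ, out m0 m1 n0 n1 ∈ W ∧ out m0 m1 n0 n1 ≠ 0 := by
  let b := Module.finBasisOfFinrankEq ℂ W hW
  have hli : LinearIndependent ℂ ![(b 0 : Fin 4 → ℂ), (b 1 : Fin 4 → ℂ)] := by
    have := b.linearIndependent.map' W.subtype (Submodule.ker_subtype W)
    have e : W.subtype ∘ b = ![(b 0 : Fin 4 → ℂ), (b 1 : Fin 4 → ℂ)] := by
      funext i
      fin_cases i <;> rfl
    rwa [e] at this
  rw [LinearIndependent.pair_iff] at hli
  obtain ⟨A, B, C, D, hX⟩ : ∃ A B C D, (b 0 : Fin 4 → ℂ) = vec A B C D := ⟨_, _, _, _, eq_vec _⟩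
  obtain ⟨A', B', C', D', hY⟩ : ∃ A B C D, (b 1 : Fin 4 → ℂ) = vec A B C D := ⟨_, _, _, _, eq_vec _⟩
  have hmem : ∀ s t : ℂ, s • vec A B C D + t • vec A' B' C' D' ∈ W := fun s t => by
    rw [← hX, ← hY]
    exact W.add_mem (W.smul_mem _ (b 0).2) (W.smul_mem _ (b 1).2)
  rw [hX, hY] at hli
  suffices ∃ s t : ℂ, ¬(s = 0 ∧ t = 0) ∧
      (s * A + t * A') * (s * D + t * D') - (s * B + t * B') * (s * C + t * C') = 0 by
    obtain ⟨s, t, hst, hd⟩ := this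
    obtain ⟨m0, m1, n0, n1, hm⟩ := exists_out hd
    rw [← vec_add, ← vec_smul, ← vec_smul] at hm
    refine ⟨m0, m1, n0, n1, hm ▸ hmem s t, fun h => hst (hli s t (hm.trans h))⟩
  by_cases hd : A * D - B * C = 0
  · exact ⟨1, 0, by simp, by linear_combination hd⟩
  · obtain ⟨s, hs⟩ := exists_quadratic_eq_zero (a := A * D - B * C)
      (b := A * D' + A' * D - B * C' - B' * C) (c := A' * D' - B' * C') hd
      ((IsAlgClosed.exists_pow_nat_eq _ two_pos).imp fun z hz => by rw [← sq, hz])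
    exact ⟨s, 1, by simp, by linear_combination hs⟩

/-- The position of a plane `W` with respect to the cone `det = 0`: it meets the cone in two
lines, or is tangent to it, or is one of the rulings `m ⊗ ℂ²` and `ℂ² ⊗ n`. -/
theorem rank_cases {W : Submodule ℂ (Fin 4 → ℂ)} (hW : Module.finrank ℂ W = 2) :
    (∃ a0 a1 b0 b1 c0 c1 d0 d1 : ℂ, a0 * b1 - a1 * b0 = 1 ∧ c0 * d1 - c1 * d0 = 1 ∧
      W = lineOf (pt a0 a1 b0 b1) (pt c0 c1 d0 d1)) ∨
    (∃ a0 a1 b0 b1 c0 c1 d0 d1 : ℂ, a0 * b1 - a1 * b0 ≠ 0 ∧ c0 * d1 - c1 * d0 ≠ 0 ∧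
      out a0 a1 c0 c1 ∈ W ∧ out a0 a1 d0 d1 + out b0 b1 c0 c1 ∈ W) ∨
    (∃ m0 m1 : ℂ, ¬(m0 = 0 ∧ m1 = 0) ∧ ∀ x y, out m0 m1 x y ∈ W) ∨
    (∃ n0 n1 : ℂ, ¬(n0 = 0 ∧ n1 = 0) ∧ ∀ x y, out x y n0 n1 ∈ W) := by
  obtain ⟨m0, m1, n0, n1, he, hne⟩ := exists_out_mem hW
  have hm : ¬(m0 = 0 ∧ m1 = 0) := by
    rintro ⟨rfl, rfl⟩
    exact hne (by rw [out, ← vec_zero]; simp)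
  have hn : ¬(n0 = 0 ∧ n1 = 0) := by
    rintro ⟨rfl, rfl⟩
    exact hne (by rw [out, ← vec_zero]; simp)
  obtain ⟨x0, x1, hx⟩ := exists_dual hm
  obtain ⟨y0, y1, hy⟩ := exists_dual hn
  obtain ⟨w, hw, hwe⟩ : ∃ w ∈ W, ∀ c : ℂ, w ≠ c • out m0 m1 n0 n1 := by
    by_contra! hcon
    have hle : W ≤ Submodule.span ℂ {out m0 m1 n0 n1} := fun w hw => by
      obtain ⟨c, hc⟩ := hcon w hw
      exact Submodule.mem_span_singleton.2 ⟨c, hc.symm⟩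
    have := Submodule.finrank_mono hle
    rw [hW, finrank_span_singleton hne] at this
    omega
  -- coordinates of `w` in the basis of `2 × 2` matrices built from the two frames
  obtain ⟨α, β, γ, δ, hw'⟩ : ∃ α β γ δ : ℂ, w = α • out m0 m1 n0 n1 + β • out m0 m1 y0 y1 +
      γ • out x0 x1 n0 n1 + δ • out x0 x1 y0 y1 := by
    rw [eq_vec w]
    generalize w 0 + Complex.I * w 1 = A
    generalize w 2 + Complex.I * w 3 = B
    generalize -w 2 + Complex.I * w 3 = C
    generalize w 0 - Complex.I * w 1 = D
    refine ⟨(A * x1 - C * x0) * y1 - (B * x1 - D * x0) * y0,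
      n0 * (B * x1 - D * x0) - n1 * (A * x1 - C * x0),
      (m0 * C - m1 * A) * y1 - (m0 * D - m1 * B) * y0,
      n0 * (m0 * D - m1 * B) - n1 * (m0 * C - m1 * A), ?_⟩
    simp only [out, vec_smul, vec_add]
    congr 1
    · linear_combination -A * (n0 * y1 - n1 * y0) * hx - A * hy
    · linear_combination -B * (n0 * y1 - n1 * y0) * hx - B * hy
    · linear_combination -C * (n0 * y1 - n1 * y0) * hx - C * hy
    · linear_combination -D * (n0 * y1 - n1 * y0) * hx - D * hy
  have hw2 : β • out m0 m1 y0 y1 + γ • out x0 x1 n0 n1 + δ • out x0 x1 y0 y1 ∈ W := by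
    have := W.sub_mem hw (W.smul_mem α he)
    rw [hw'] at this
    convert this using 1
    module
  by_cases hδ : δ = 0
  · subst hδ
    rw [zero_smul, add_zero] at hw2
    right
    by_cases hβ : β = 0
    · subst hβ
      right; right
      refine ⟨n0, n1, hn, fun x y => ?_⟩
      have hγ : γ ≠ 0 := by
        rintro rfl
        exact hwe α (by rw [hw']; simp)
      rw [zero_smul, zero_add] at hw2
      have h1 : out x0 x1 n0 n1 ∈ W := (W.smul_mem_iff hγ).1 hw2
      have := W.add_mem (W.smul_mem (x * x1 - y * x0) he) (W.smul_mem (m0 * y - m1 * x) h1)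
      convert this using 1
      simp only [out, vec_smul, vec_add]
      congr 1
      · linear_combination -x * n0 * hx
      · linear_combination -x * n1 * hx
      · linear_combination -y * n0 * hx
      · linear_combination -y * n1 * hx
    by_cases hγ : γ = 0
    · subst hγ
      right; left
      refine ⟨m0, m1, hm, fun x y => ?_⟩
      rw [zero_smul, add_zero] at hw2
      have h1 : out m0 m1 y0 y1 ∈ W := (W.smul_mem_iff hβ).1 hw2
      have := W.add_mem (W.smul_mem (x * y1 - y * y0) he) (W.smul_mem (n0 * y - n1 * x) h1)
      convert this using 1
      simp only [out, vec_smul, vec_add]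
      congr 1
      · linear_combination -x * m0 * hy
      · linear_combination -y * m0 * hy
      · linear_combination -x * m1 * hy
      · linear_combination -y * m1 * hy
    left
    refine ⟨m0, m1, γ * x0, γ * x1, n0, n1, β * y0, β * y1, ?_, ?_, he, ?_⟩
    · have : m0 * (γ * x1) - m1 * (γ * x0) = γ := by linear_combination γ * hx
      rwa [this]
    · have : n0 * (β * y1) - n1 * (β * y0) = β := by linear_combination β * hy
      rwa [this]
    · rwa [← out_smul_right, ← out_smul_left]
  · left
    -- the second matrix of rank one in `W`
    have h1 : out (x0 + β / δ * m0) (x1 + β / δ * m1) (y0 + γ / δ * n0) (y1 + γ / δ * n1) ∈ W := by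
      have := W.add_mem (W.smul_mem δ⁻¹ hw2) (W.smul_mem (β * γ / δ ^ 2) he)
      convert this using 1
      simp only [out, vec_smul, vec_add]
      congr 1 <;> field_simp <;> ring
    generalize hX0 : x0 + β / δ * m0 = X0 at h1
    generalize hX1 : x1 + β / δ * m1 = X1 at h1
    generalize hY0 : y0 + γ / δ * n0 = Y0 at h1
    generalize hY1 : y1 + γ / δ * n1 = Y1 at h1
    have hX : m0 * X1 - m1 * X0 = 1 := by rw [← hX0, ← hX1]; linear_combination hx
    have hY : Y1 * n0 - -Y0 * -n1 = 1 := by rw [← hY0, ← hY1]; linear_combination hy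
    refine ⟨m0, m1, X0, X1, Y1, -Y0, -n1, n0, hX, hY, ?_⟩
    refine (eq_of_finrank (finrank_lineOf_pt hX hY) hW fun v hv => ?_).symm
    obtain ⟨s, t, rfl⟩ := (mem_lineOf_pt hX hY v).1 hv
    have := W.add_mem (W.smul_mem s he) (W.smul_mem t h1)
    convert this using 1
    simp only [out, vec_smul, vec_add]
    congr 1 <;> ring

/-- A root of `f` has nonzero coordinates, so it can be rescaled to satisfy `2 m₀ m₁ = 1`. This is
the normalisation `(pt m m)₀ = 1`. -/
theorem ruling_cases {m0 m1 : ℂ} (hm : ¬(m0 = 0 ∧ m1 = 0)) (h : al8 m0 m1 = 0) :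
    ∃ c : ℂ, c ≠ 0 ∧ 2 * (c * m0) * (c * m1) = 1 ∧ al8 (c * m0) (c * m1) = 0 := by
  have h0 : m0 ≠ 0 := by
    rintro rfl
    exact hm ⟨rfl, by simpa [al8] using h⟩
  have h1 : m1 ≠ 0 := by
    rintro rfl
    exact hm ⟨by simpa [al8] using h, rfl⟩
  obtain ⟨c, hc⟩ := IsAlgClosed.exists_pow_nat_eq (1 / (2 * m0 * m1)) two_pos
  field_simp at hc
  refine ⟨c, ?_, by linear_combination hc, ?_⟩
  · rintro rfl
    simp at hc
  · have : al8 (c * m0) (c * m1) = c ^ 8 * al8 m0 m1 := by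
      simp only [al8]
      ring
    rw [this, h, mul_zero]

/-- The isotropic vectors attached to the roots of `f`, normalised by `q₀ = 1`. -/
def IsIsotropic (q : Fin 3 → ℂ) : Prop := q 0 = 1 ∧ dot q q = 0 ∧ s4 q = 0

theorem isotropic_pt {m0 m1 : ℂ} (h : 2 * m0 * m1 = 1) (h8 : al8 m0 m1 = 0) :
    IsIsotropic (pt m0 m1 m0 m1) := by
  refine ⟨?_, dot_pt_self, ?_⟩
  · simp only [pt, Matrix.cons_val]
    linear_combination h
  · rw [s4_pt_self, h8, mul_zero]

/-- Necessary conditions for a line on the surface. In the second case, the five equations are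
products of the coefficients with index `k` and `8 - k` in `eval_pencil`, and the middle
coefficient. -/
theorem line_cases {W : Submodule ℂ (Fin 4 → ℂ)} (hW : Module.finrank ℂ W = 2)
    (hS : LiesOn S8 W) :
    (∃ q, IsIsotropic q ∧ (W = lineOf q 0 ∨ W = lineOf 0 q)) ∨
    ∃ p r, dot p p = 1 ∧ dot r r = 1 ∧ W = lineOf p r ∧
      ((s4 p + 1) ^ 2 - 48 * e3 p) * ((s4 r + 1) ^ 2 - 48 * e3 r) = 0 ∧
      ((2 * s4 p - 1) * (s4 p - 1) - 54 * e3 p) * ((2 * s4 r - 1) * (s4 r - 1) - 54 * e3 r) = 0 ∧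
      ((s4 p - 1) ^ 2 - 12 * e3 p) * ((s4 r - 1) ^ 2 - 12 * e3 r) = 0 ∧
      ((2 * s4 p - 1) * (s4 p - 1) - 6 * e3 p) * ((2 * s4 r - 1) * (s4 r - 1) - 6 * e3 r) = 0 ∧
      (s4 p - 3 / 5) * (s4 r - 3 / 5) = -16 / 25 := by
  rcases rank_cases hW with ⟨a0, a1, b0, b1, c0, c1, d0, d1, h, h', rfl⟩ |
    ⟨a0, a1, b0, b1, c0, c1, d0, d1, h, h', h1, h2⟩ | ⟨m0, m1, hm, H⟩ | ⟨n0, n1, hn, H⟩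
  · right
    refine ⟨_, _, dot_pt.trans (by rw [h]; ring), dot_pt.trans (by rw [h']; ring), rfl, ?_⟩
    have := coeff_eq_zero ![al8 b0 b1 * al8 c0 c1, -8 * (al7 b0 b1 a0 a1 * al7 c0 c1 d0 d1),
      28 * (al6 b0 b1 a0 a1 * al6 c0 c1 d0 d1), -56 * (al5 b0 b1 a0 a1 * al5 c0 c1 d0 d1),
      70 * (al4 a0 a1 b0 b1 * al4 c0 c1 d0 d1) + 56 / 5,
      -56 * (al5 a0 a1 b0 b1 * al5 d0 d1 c0 c1), 28 * (al6 a0 a1 b0 b1 * al6 d0 d1 c0 c1),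
      -8 * (al7 a0 a1 b0 b1 * al7 d0 d1 c0 c1), al8 a0 a1 * al8 d0 d1] (by
        intro s
        have h1 := eval_pencil s 1 h h'
        rw [hS _ ((mem_lineOf_pt h h' _).2 ⟨s, 1, rfl⟩)] at h1
        simp [Fin.sum_univ_succ]
        linear_combination -h1)
    have k := fun i => congrFun this i
    simp only [Pi.zero_apply] at k
    have k0 : al8 b0 b1 * al8 c0 c1 = 0 := k 0
    have k1 : -8 * (al7 b0 b1 a0 a1 * al7 c0 c1 d0 d1) = 0 := k 1
    have k2 : 28 * (al6 b0 b1 a0 a1 * al6 c0 c1 d0 d1) = 0 := k 2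
    have k3 : -56 * (al5 b0 b1 a0 a1 * al5 c0 c1 d0 d1) = 0 := k 3
    have k4 : 70 * (al4 a0 a1 b0 b1 * al4 c0 c1 d0 d1) + 56 / 5 = 0 := k 4
    rw [← Q0 h, ← Q0 h', ← Q1 h, ← Q1 h', ← Q2 h, ← Q2 h', ← Q3 h, ← Q3 h', ← al4_pt h,
      ← al4_pt h']
    refine ⟨?_, ?_, ?_, ?_, ?_⟩
    · linear_combination 16 * al8 a0 a1 * al8 d0 d1 * k0
    · linear_combination -8 * al7 a0 a1 b0 b1 * al7 d0 d1 c0 c1 * k1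
    · linear_combination 16 / 28 * al6 a0 a1 b0 b1 * al6 d0 d1 c0 c1 * k2
    · linear_combination -64 / 56 * al5 a0 a1 b0 b1 * al5 d0 d1 c0 c1 * k3
    · linear_combination 4 / 70 * k4
  · exact (no_tangent h h' fun s => hS _ (W.add_mem (W.smul_mem s h1) h2)).elim
  · left
    have h8 : al8 m0 m1 = 0 := by
      have := eval_out (m0 := m0) (m1 := m1) (n0 := 1) (n1 := 0)
      rw [hS _ (H 1 0)] at this
      simpa [al8] using this.symm
    obtain ⟨c, hc, h2, h3⟩ := ruling_cases hm h8
    refine ⟨_, isotropic_pt h2 h3, Or.inl ?_⟩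
    refine (eq_of_finrank (finrank_lineOf_left h2) hW fun v hv => ?_).symm
    obtain ⟨s, t, rfl⟩ := (mem_lineOf_left h2 v).1 hv
    rw [← out_smul_left]
    exact W.smul_mem _ (H _ _)
  · left
    have h8 : al8 n1 (-n0) = 0 := by
      have := eval_out (m0 := 1) (m1 := 0) (n0 := n0) (n1 := n1)
      rw [hS _ (H 1 0)] at this
      simp only [al8] at this ⊢
      linear_combination -this
    obtain ⟨c, hc, h2, h3⟩ := ruling_cases (m0 := -n1) (m1 := n0)
      (fun k => hn ⟨k.2, by simpa using k.1⟩) (by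
        simp only [al8] at h8 ⊢
        linear_combination h8)
    refine ⟨_, isotropic_pt h2 h3, Or.inr ?_⟩
    refine (eq_of_finrank (finrank_lineOf_right h2) hW fun v hv => ?_).symm
    obtain ⟨s, t, rfl⟩ := (mem_lineOf_right h2 v).1 hv
    have := W.smul_mem c (H s t)
    rw [out_smul_right] at this
    convert this using 2
    ring

/-! ### Uniqueness of the pair of vectors -/

/-- Provided that `p² = q²`, an inclusion of planes forces the vanishing of all `2 × 2` minors
of the two vectors `(p, q)` and `(r, s)` of `ℂ⁶`. -/
theorem minors_of_le {p q r s : Fin 3 → ℂ} (h : lineOf p q ≤ lineOf r s) (hd : dot p p = dot q q) :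
    (∀ i j, r i * p j = r j * p i) ∧ (∀ i j, s i * q j = s j * q i) ∧
      ∀ i j, r i * q j = p i * s j := by
  simp only [dot] at hd
  -- `v = p w + w q` lies on the line for every quaternion `w`; take `w = 1, i, j, k`
  have hx : ![0, p 0 + q 0, p 1 + q 1, p 2 + q 2] ∈ lineOf r s := h <| by
    rw [mem_lineOf]
    simp only [Matrix.cons_val]
    refine ⟨?_, ?_, ?_, ?_⟩ <;> first | ring1 | linear_combination hd
  have hy : ![-p 0 - q 0, 0, p 2 - q 2, q 1 - p 1] ∈ lineOf r s := h <| by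
    rw [mem_lineOf]
    simp only [Matrix.cons_val]
    refine ⟨?_, ?_, ?_, ?_⟩ <;> first | ring1 | linear_combination -hd
  have hz : ![-p 1 - q 1, q 2 - p 2, 0, p 0 - q 0] ∈ lineOf r s := h <| by
    rw [mem_lineOf]
    simp only [Matrix.cons_val]
    refine ⟨?_, ?_, ?_, ?_⟩ <;> first | ring1 | linear_combination -hd
  have hw : ![-p 2 - q 2, p 1 - q 1, q 0 - p 0, 0] ∈ lineOf r s := h <| by
    rw [mem_lineOf]
    simp only [Matrix.cons_val]
    refine ⟨?_, ?_, ?_, ?_⟩ <;> first | ring1 | linear_combination -hd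
  rw [mem_lineOf] at hx hy hz hw
  simp only [Matrix.cons_val] at hx hy hz hw
  obtain ⟨x0, x1, x2, x3⟩ := hx
  obtain ⟨y0, y1, y2, y3⟩ := hy
  obtain ⟨z0, z1, z2, z3⟩ := hz
  obtain ⟨w0, w1, w2, w3⟩ := hw
  refine ⟨?_, ?_, ?_⟩
  · have h01 : r 0 * p 1 = r 1 * p 0 := by linear_combination (x3 + y2 - z1 + w0) / 4
    have h12 : r 1 * p 2 = r 2 * p 1 := by linear_combination (x1 + y0 + z3 - w2) / 4
    have h20 : r 2 * p 0 = r 0 * p 2 := by linear_combination (x2 - y3 + z0 + w1) / 4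
    intro i j
    fin_cases i <;> fin_cases j <;> first | rfl | assumption | (symm; assumption)
  · have h01 : s 0 * q 1 = s 1 * q 0 := by linear_combination (x3 - y2 + z1 + w0) / 4
    have h12 : s 1 * q 2 = s 2 * q 1 := by linear_combination (x1 + y0 - z3 + w2) / 4
    have h20 : s 2 * q 0 = s 0 * q 2 := by linear_combination (x2 + y3 + z0 - w1) / 4
    intro i j
    fin_cases i <;> fin_cases j <;> first | rfl | assumption | (symm; assumption)
  · intro i j
    fin_cases i <;> fin_cases j <;> simp only [Fin.zero_eta, Fin.mk_one, Fin.reduceFinMk]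
    · linear_combination (x0 - y1 + z2 + w3) / 4
    · linear_combination (x3 - y2 - z1 - w0) / 4
    · linear_combination (-x2 - y3 + z0 - w1) / 4
    · linear_combination (-x3 - y2 - z1 + w0) / 4
    · linear_combination (x0 + y1 - z2 + w3) / 4
    · linear_combination (x1 - y0 - z3 - w2) / 4
    · linear_combination (x2 - y3 - z0 - w1) / 4
    · linear_combination (-x1 + y0 - z3 - w2) / 4
    · linear_combination (x0 + y1 + z2 - w3) / 4

/-- If `p² = q²` and `(p, q) ≠ 0`, the plane `{v | p v = v q}` determines `(p, q)` up to a nonzero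
scalar. -/
theorem ratio_of_le {p q r s : Fin 3 → ℂ} (h : lineOf p q ≤ lineOf r s) (hd : dot p p = dot q q)
    (hp : p ≠ 0 ∨ q ≠ 0) (hr : r ≠ 0 ∨ s ≠ 0) : ∃ c : ℂ, c ≠ 0 ∧ r = c • p ∧ s = c • q := by
  obtain ⟨h1, h2, h3⟩ := minors_of_le h hd
  suffices ∃ c : ℂ, r = c • p ∧ s = c • q by
    obtain ⟨c, rfl, rfl⟩ := this
    refine ⟨c, ?_, rfl, rfl⟩
    rintro rfl
    simp at hr
  rcases hp with hp | hp
  · obtain ⟨i, hi⟩ := Function.ne_iff.1 hp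
    refine ⟨r i / p i, funext fun j => ?_, funext fun j => ?_⟩ <;>
      simp only [Pi.zero_apply, Pi.smul_apply, smul_eq_mul] at hi ⊢ <;> field_simp
    · linear_combination h1 j i
    · linear_combination -h3 i j
  · obtain ⟨i, hi⟩ := Function.ne_iff.1 hp
    refine ⟨s i / q i, funext fun j => ?_, funext fun j => ?_⟩ <;>
      simp only [Pi.zero_apply, Pi.smul_apply, smul_eq_mul] at hi ⊢ <;> field_simp
    · linear_combination h3 j i
    · linear_combination h2 j i

theorem lineOf_smul {c : ℂ} (hc : c ≠ 0) (p q : Fin 3 → ℂ) :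
    lineOf (c • p) (c • q) = lineOf p q := by
  ext v
  rw [mem_lineOf, mem_lineOf]
  simp only [Pi.smul_apply, smul_eq_mul]
  refine and_congr ?_ (and_congr ?_ (and_congr ?_ ?_)) <;>
  exact ⟨fun h => mul_left_cancel₀ hc (by linear_combination h), fun h => by
    linear_combination c * h⟩

theorem lineOf_neg (p q : Fin 3 → ℂ) : lineOf (-p) (-q) = lineOf p q := by
  rw [← neg_one_smul ℂ p, ← neg_one_smul ℂ q, lineOf_smul (by norm_num)]

/-! ### Solving for the invariants -/

/-- Elimination in the five equations of `line_cases`. One factor of the fourth equation is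
assumed to vanish, which holds up to exchanging the two pairs of invariants. -/
theorem invariants_half {s e s' e' : ℂ}
    (h0 : ((s + 1) ^ 2 - 48 * e) * ((s' + 1) ^ 2 - 48 * e') = 0)
    (h1 : ((2 * s - 1) * (s - 1) - 54 * e) * ((2 * s' - 1) * (s' - 1) - 54 * e') = 0)
    (h2 : ((s - 1) ^ 2 - 12 * e) * ((s' - 1) ^ 2 - 12 * e') = 0)
    (h3 : (2 * s - 1) * (s - 1) - 6 * e = 0)
    (h4 : (s - 3 / 5) * (s' - 3 / 5) = -16 / 25) :
    (s = 1 ∧ e = 0 ∧ s' = -1 ∧ e' = 0) ∨ (s = 1 / 3 ∧ e = 1 / 27 ∧ s' = 3 ∧ e' = 5 / 27) := by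
  obtain rfl : e = (2 * s - 1) * (s - 1) / 6 := by linear_combination -h3 / 6
  replace h0 : ((3 * s - 1) * (5 * s - 7)) * ((s' + 1) ^ 2 - 48 * e') = 0 := by
    linear_combination -h0
  replace h1 : ((2 * s - 1) * (s - 1)) * ((2 * s' - 1) * (s' - 1) - 54 * e') = 0 := by
    linear_combination -h1 / 8
  replace h2 : ((3 * s - 1) * (s - 1)) * ((s' - 1) ^ 2 - 12 * e') = 0 := by
    linear_combination -h2
  by_cases a1 : s = 1
  · subst a1
    obtain rfl : s' = -1 := by linear_combination 5 / 2 * h4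
    left
    exact ⟨rfl, by norm_num, rfl, by linear_combination h0 / 192⟩
  by_cases a2 : s = 1 / 3
  · subst a2
    obtain rfl : s' = 3 := by linear_combination -15 / 4 * h4
    right
    exact ⟨rfl, by norm_num, rfl, by linear_combination -h1 / 12⟩
  exfalso
  have n1 : s - 1 ≠ 0 := sub_ne_zero.2 a1
  have n2 : 3 * s - 1 ≠ 0 := fun h => a2 (by linear_combination h / 3)
  replace h2 := (mul_eq_zero.1 h2).resolve_left (mul_ne_zero n2 n1)
  by_cases a3 : s = 1 / 2
  · subst a3
    obtain rfl : s' = 7 := by linear_combination -10 * h4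
    norm_num at h0 h2
    have : (1 : ℂ) = 0 := by linear_combination (h0 - 4 * h2) / (-80)
    exact one_ne_zero this
  have n3 : 2 * s - 1 ≠ 0 := fun h => a3 (by linear_combination h / 2)
  replace h1 := (mul_eq_zero.1 h1).resolve_left (mul_ne_zero n3 n1)
  by_cases a4 : s = 7 / 5
  · subst a4
    obtain rfl : s' = -1 / 5 := by linear_combination 5 / 4 * h4
    norm_num at h1 h2
    have : (1 : ℂ) = 0 := by linear_combination (h1 - 9 / 2 * h2) * (-5 / 24)
    exact one_ne_zero this
  have n4 : 5 * s - 7 ≠ 0 := fun h => a4 (by linear_combination h / 5)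
  replace h0 := (mul_eq_zero.1 h0).resolve_left (mul_ne_zero n2 n4)
  have k : (s' - 3) * (3 * s' - 1) = 0 := by linear_combination 4 * h2 - h0
  have k2 : (2 * s' - 1) * (s' - 1) = 9 / 2 * (s' - 1) ^ 2 := by linear_combination h1 - 9 / 2 * h2
  rcases mul_eq_zero.1 k with k | k
  · obtain rfl : s' = 3 := by linear_combination k
    norm_num at k2
  · obtain rfl : s' = 1 / 3 := by linear_combination k / 3
    norm_num at k2

section
variable {x y z : ℂ}

/-- The squares of the coordinates of a unit vector are roots of the cubic
`X³ - X² + (1 - s4)/2 · X - e3`. -/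
theorem cubic (h : x ^ 2 + y ^ 2 + z ^ 2 = 1) :
    ∀ X, X = x ^ 2 ∨ X = y ^ 2 ∨ X = z ^ 2 →
      X ^ 3 - X ^ 2 + (1 - (x ^ 4 + y ^ 4 + z ^ 4)) / 2 * X - (x * y * z) ^ 2 = 0 := by
  have e : (1 - (x ^ 4 + y ^ 4 + z ^ 4)) / 2 = x ^ 2 * y ^ 2 + y ^ 2 * z ^ 2 + z ^ 2 * x ^ 2 := by
    linear_combination (-(x ^ 2 + y ^ 2 + z ^ 2) - 1) / 2 * h
  rw [e]
  rintro X (rfl | rfl | rfl)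
  · linear_combination x ^ 4 * h
  · linear_combination y ^ 4 * h
  · linear_combination z ^ 4 * h

end

theorem place_self (p : Fin 3 → ℂ) :
    p = place 0 (p 0) (p 1) (p 2) ∧ p = place 1 (p 1) (p 2) (p 0) ∧
      p = place 2 (p 2) (p 0) (p 1) := by
  refine ⟨?_, ?_, ?_⟩ <;> ext i <;> fin_cases i <;> rfl

theorem cubic_coord {p : Fin 3 → ℂ} (hp : dot p p = 1) (i : Fin 3) :
    (p i ^ 2) ^ 3 - (p i ^ 2) ^ 2 + (1 - s4 p) / 2 * p i ^ 2 - e3 p = 0 := by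
  have h : p 0 ^ 2 + p 1 ^ 2 + p 2 ^ 2 = 1 := by
    rw [← hp]
    simp only [dot]
    ring
  exact cubic h _ (by fin_cases i <;> simp)

/-- A property which holds for some cyclic shift of `p` holds for the entries of a `place`
presentation of `p`. -/
theorem exists_place (P : ℂ → ℂ → ℂ → Prop) (p : Fin 3 → ℂ)
    (h : P (p 0) (p 1) (p 2) ∨ P (p 1) (p 2) (p 0) ∨ P (p 2) (p 0) (p 1)) :
    ∃ j x y z, p = place j x y z ∧ P x y z := by
  obtain ⟨h0, h1, h2⟩ := place_self p
  rcases h with h | h | h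
  · exact ⟨0, _, _, _, h0, h⟩
  · exact ⟨1, _, _, _, h1, h⟩
  · exact ⟨2, _, _, _, h2, h⟩

/-- The invariants `(1, 0)` are those of the coordinate axes. -/
theorem axis_of {p : Fin 3 → ℂ} (hp : dot p p = 1) (hs : s4 p = 1) (he : e3 p = 0) :
    ∃ j, p = place j 1 0 0 ∨ p = -place j 1 0 0 := by
  have key : ∀ i, p i = 0 ∨ p i ^ 2 = 1 := by
    intro i
    have := cubic_coord hp i
    rw [hs, he] at this
    have : p i ^ 4 * (p i ^ 2 - 1) = 0 := by linear_combination this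
    rcases mul_eq_zero.1 this with h | h
    · exact Or.inl (by simpa using h)
    · exact Or.inr (by linear_combination h)
  obtain ⟨j, x, y, z, rfl, rfl, rfl, hx⟩ := exists_place (fun x y z => y = 0 ∧ z = 0 ∧ x ^ 2 = 1) p
    (by
      simp only [dot] at hp
      rcases key 0 with h0 | h0 <;> rcases key 1 with h1 | h1 <;> rcases key 2 with h2 | h2 <;>
        simp [h0, h1, h2, ← sq] at hp ⊢)
  refine ⟨j, ?_⟩
  rcases sq_eq_sq_iff_eq_or_eq_neg.1 (hx.trans (one_pow 2).symm) with rfl | rfl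
  · exact Or.inl rfl
  · right
    fin_cases j <;> ext i <;> fin_cases i <;> simp [place]

/-- The invariants `(-1, 0)` are those of the vectors with one zero coordinate and two coordinates
whose squares are the primitive sixth roots of unity. -/
theorem edge_of {p : Fin 3 → ℂ} (hp : dot p p = 1) (hs : s4 p = -1) (he : e3 p = 0) :
    ∃ j u v, p = place j 0 u v ∧ u ^ 2 + v ^ 2 = 1 ∧ u ^ 2 * v ^ 2 = 1 := by
  obtain ⟨j, x, u, v, rfl, rfl⟩ := exists_place (fun x y z => x = 0) p (by
    simp only [e3] at he
    have : p 0 * p 1 * p 2 = 0 := by simpa using he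
    simpa [or_assoc] using this)
  refine ⟨j, u, v, rfl, ?_⟩
  rw [dot_place] at hp
  rw [s4_place] at hs
  refine ⟨by linear_combination hp, ?_⟩
  linear_combination (u ^ 2 + v ^ 2 + 1) / 2 * hp - hs / 2

/-- The invariants `(1/3, 1/27)` are those of the diagonals of the cube. -/
theorem diag_of {p : Fin 3 → ℂ} (hp : dot p p = 1) (hs : s4 p = 1 / 3) (he : e3 p = 1 / 27)
    (i : Fin 3) : p i ^ 2 = 1 / 3 := by
  have := cubic_coord hp i
  rw [hs, he] at this
  have : (p i ^ 2 - 1 / 3) ^ 3 = 0 := by linear_combination this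
  have : p i ^ 2 - 1 / 3 = 0 := by simpa using this
  linear_combination this

/-- The invariants `(3, 5/27)` are those of the vectors whose coordinates have the squares `5/3`,
`-1/3`, `-1/3` in some order. -/
theorem five_of {p : Fin 3 → ℂ} (hp : dot p p = 1) (hs : s4 p = 3) (he : e3 p = 5 / 27) :
    ∃ j x y z, p = place j x y z ∧ x ^ 2 = 5 / 3 ∧ y ^ 2 = -1 / 3 ∧ z ^ 2 = -1 / 3 := by
  have key : ∀ i, p i ^ 2 = 5 / 3 ∨ p i ^ 2 = -1 / 3 := by
    intro i
    have := cubic_coord hp i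
    rw [hs, he] at this
    have : (p i ^ 2 - 5 / 3) * (p i ^ 2 + 1 / 3) ^ 2 = 0 := by linear_combination this
    rcases mul_eq_zero.1 this with h | h
    · exact Or.inl (by linear_combination h)
    · have : p i ^ 2 + 1 / 3 = 0 := by simpa using h
      exact Or.inr (by linear_combination this)
  apply exists_place (fun x y z => x ^ 2 = 5 / 3 ∧ y ^ 2 = -1 / 3 ∧ z ^ 2 = -1 / 3) p
  simp only [dot, ← sq] at hp
  rcases key 0 with h0 | h0 <;> rcases key 1 with h1 | h1 <;> rcases key 2 with h2 | h2 <;>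
    rw [h0, h1, h2] at hp <;> first | (norm_num at hp; done) | norm_num [h0, h1, h2]

/-! ### Explicit coordinates -/

/-- The sign encoded by a Boolean: `true` is `1`, `false` is `-1`. -/
def sg (b : Bool) : ℂ := if b then 1 else -1

/-- The complex number `√3`. -/
noncomputable def s3 : ℂ := (√3 : ℝ)

/-- The complex number `√5`. -/
noncomputable def s5 : ℂ := (√5 : ℝ)

/-- The four primitive twelfth roots of unity `(±√3 ± i)/2`. -/
noncomputable def U (ε δ : Bool) : ℂ := (sg ε * s3 + sg δ * Complex.I) / 2

theorem s3_sq : s3 ^ 2 = 3 := by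
  rw [s3, ← Complex.ofReal_pow, Real.sq_sqrt (by norm_num)]
  norm_num

theorem s5_sq : s5 ^ 2 = 5 := by
  rw [s5, ← Complex.ofReal_pow, Real.sq_sqrt (by norm_num)]
  norm_num

theorem s3_ne : s3 ≠ 0 := fun h => by simpa [h] using s3_sq

theorem s5_ne : s5 ≠ 0 := fun h => by simpa [h] using s5_sq

theorem sg_sq (b : Bool) : sg b ^ 2 = 1 := by cases b <;> simp [sg]

theorem sg_not (b : Bool) : sg (!b) = -sg b := by cases b <;> simp [sg]

theorem sg_inj {b c : Bool} (h : sg b = sg c) : b = c := by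
  cases b <;> cases c <;> simp [sg] at h ⊢ <;> norm_num [eq_neg_iff_add_eq_zero,
    neg_eq_iff_add_eq_zero] at h

theorem sg_ne (b : Bool) : sg b ≠ 0 := fun h => by simpa [h] using sg_sq b

theorem U_sq (ε δ : Bool) : U ε δ ^ 2 = (1 + sg ε * sg δ * s3 * Complex.I) / 2 := by
  rw [U]
  linear_combination (sg ε ^ 2 * s3_sq + 3 * sg_sq ε + sg δ ^ 2 * Complex.I_sq - sg_sq δ) / 4

theorem U_mul (ε δ : Bool) : U ε δ * U ε (!δ) = 1 := by
  rw [U, U, sg_not]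
  linear_combination (sg ε ^ 2 * s3_sq + 3 * sg_sq ε - sg δ ^ 2 * Complex.I_sq + sg_sq δ) / 4

theorem U_add (ε δ : Bool) : U ε δ ^ 2 + U ε (!δ) ^ 2 = 1 := by
  rw [U_sq, U_sq, sg_not]
  ring

theorem U_ne (ε δ : Bool) : U ε δ ≠ 0 := left_ne_zero_of_mul_eq_one (U_mul ε δ)

theorem U_neg (ε δ : Bool) : U (!ε) (!δ) = -U ε δ := by
  rw [U, U, sg_not, sg_not]
  ring

theorem U_inj {ε δ ε' δ' : Bool} (h : U ε δ = U ε' δ') : ε = ε' ∧ δ = δ' := by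
  have h3 : √3 ≠ 0 := by positivity
  have hre := congrArg Complex.re h
  have him := congrArg Complex.im h
  cases ε <;> cases δ <;> cases ε' <;> cases δ' <;>
    simp [U, sg, s3, neg_eq_iff_add_eq_zero, eq_neg_iff_add_eq_zero] at hre him ⊢ <;>
    norm_num at hre him

/-- The solutions of `u² + v² = u²v² = 1` are pairs of primitive twelfth roots of unity. -/
theorem edge_param {u v : ℂ} (h : u ^ 2 + v ^ 2 = 1) (h' : u ^ 2 * v ^ 2 = 1) :
    ∃ ε δ η, u = U ε δ ∧ v = sg η * U ε (!δ) := by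
  have hu : ∃ ε δ, u = U ε δ := by
    have : (u ^ 2 - U true true ^ 2) * (u ^ 2 - U true false ^ 2) = 0 := by
      have e1 := U_add true true
      have e2 : U true true ^ 2 * U true false ^ 2 = 1 := by
        have := U_mul true true
        simp only [Bool.not_true] at this
        rw [← mul_pow, this, one_pow]
      simp only [Bool.not_true] at e1
      linear_combination u ^ 2 * h - h' - u ^ 2 * e1 + e2
    rcases mul_eq_zero.1 this with k | k <;>
      rcases sq_eq_sq_iff_eq_or_eq_neg.1 (sub_eq_zero.1 k) with rfl | rfl
    · exact ⟨_, _, rfl⟩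
    · exact ⟨_, _, (U_neg _ _).symm⟩
    · exact ⟨_, _, rfl⟩
    · exact ⟨_, _, (U_neg _ _).symm⟩
  obtain ⟨ε, δ, rfl⟩ := hu
  have : v ^ 2 = U ε (!δ) ^ 2 := by linear_combination h - U_add ε δ
  rcases sq_eq_sq_iff_eq_or_eq_neg.1 this with rfl | rfl
  · exact ⟨ε, δ, true, rfl, by simp [sg]⟩
  · exact ⟨ε, δ, false, rfl, by simp [sg]⟩

theorem edge_param_spec (ε δ η : Bool) :
    U ε δ ^ 2 + (sg η * U ε (!δ)) ^ 2 = 1 ∧ U ε δ ^ 2 * (sg η * U ε (!δ)) ^ 2 = 1 := by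
  constructor
  · linear_combination U_add ε δ + U ε (!δ) ^ 2 * sg_sq η
  · linear_combination U ε δ ^ 2 * U ε (!δ) ^ 2 * sg_sq η + (U ε δ * U ε (!δ) + 1) * U_mul ε δ

theorem sign_param {x a : ℂ} (h : x ^ 2 = a ^ 2) : ∃ b, x = sg b * a := by
  rcases sq_eq_sq_iff_eq_or_eq_neg.1 h with rfl | rfl
  · exact ⟨true, by simp [sg]⟩
  · exact ⟨false, by simp [sg]⟩

/-- Labels for one half of the `352` lines: `8` isotropic vectors, `3 · 24` pairs starting with a
coordinate axis, and `4 · 24` pairs starting with a diagonal. The other half is obtained by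
exchanging the two entries of the pair. -/
abbrev Half : Type := (Bool × Bool × Bool) ⊕ (Fin 3 × Fin 3 × Bool × Bool × Bool) ⊕
  ((Bool × Bool) × Fin 3 × Bool × Bool × Bool)

/-- The eight isotropic vectors attached to the roots of `f`. -/
noncomputable def isoPt (ε δ η : Bool) : Fin 3 → ℂ :=
  ![1, Complex.I * U ε δ, Complex.I * (sg η * U ε (!δ))]

/-- The `24` unit vectors with invariants `s4 = -1`, `e3 = 0`. -/
noncomputable def edgePt (j : Fin 3) (ε δ η : Bool) : Fin 3 → ℂ :=
  place j 0 (U ε δ) (sg η * U ε (!δ))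

/-- The four diagonals of the cube, with the sign chosen such that the first coordinate is
`1/√3`. -/
noncomputable def diagPt (ε δ : Bool) : Fin 3 → ℂ := ![s3 / 3, sg ε * (s3 / 3), sg δ * (s3 / 3)]

/-- The `24` unit vectors with invariants `s4 = 3`, `e3 = 5/27`. -/
noncomputable def fivePt (j : Fin 3) (ε δ η : Bool) : Fin 3 → ℂ :=
  place j (sg ε * (s5 * s3 / 3)) (sg δ * (Complex.I * s3 / 3)) (sg η * (Complex.I * s3 / 3))

/-- The first vector of the pair with a given label. The axes and the diagonals are taken up to
sign, which fixes the common sign of the pair. -/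
noncomputable def fstPt : Half → Fin 3 → ℂ
  | .inl (ε, δ, η) => isoPt ε δ η
  | .inr (.inl (j, _, _, _, _)) => place j 1 0 0
  | .inr (.inr ((ε, δ), _, _, _, _)) => diagPt ε δ

/-- The second vector of the pair with a given label; it is zero for the isotropic vectors. -/
noncomputable def sndPt : Half → Fin 3 → ℂ
  | .inl _ => 0
  | .inr (.inl (_, k, ε, δ, η)) => edgePt k ε δ η
  | .inr (.inr (_, k, ε, δ, η)) => fivePt k ε δ η

/-- The `352` lines; the Boolean tells whether the two vectors are exchanged. -/
noncomputable def theLine (i : Bool × Half) : Submodule ℂ (Fin 4 → ℂ) :=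
  bif i.1 then lineOf (sndPt i.2) (fstPt i.2) else lineOf (fstPt i.2) (sndPt i.2)

/-! ### The labelled lines lie on the surface -/

theorem isIsotropic_isoPt (ε δ η : Bool) : IsIsotropic (isoPt ε δ η) := by
  obtain ⟨h1, h2⟩ := edge_param_spec ε δ η
  refine ⟨rfl, ?_, ?_⟩
  · simp only [dot, isoPt, Matrix.cons_val]
    linear_combination -h1 + (U ε δ ^ 2 + (sg η * U ε (!δ)) ^ 2) * Complex.I_sq
  · simp only [s4, isoPt, Matrix.cons_val]
    linear_combination (U ε δ ^ 2 + (sg η * U ε (!δ)) ^ 2 + 1) * h1 - 2 * h2 +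
      (U ε δ ^ 4 + (sg η * U ε (!δ)) ^ 4) * I4

theorem IsIsotropic.param {q : Fin 3 → ℂ} (h : IsIsotropic q) : ∃ ε δ η, q = isoPt ε δ η := by
  obtain ⟨h0, h1, h2⟩ := h
  simp only [dot, s4, h0] at h1 h2
  obtain ⟨ε, δ, η, hu, hv⟩ := edge_param (u := -Complex.I * q 1) (v := -Complex.I * q 2)
    (by linear_combination (q 1 ^ 2 + q 2 ^ 2) * Complex.I_sq - h1)
    (by linear_combination q 1 ^ 2 * q 2 ^ 2 * I4 +
          (q 1 ^ 2 + q 2 ^ 2 - 1) / 2 * h1 - h2 / 2)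
  refine ⟨ε, δ, η, ?_⟩
  ext i
  fin_cases i <;> simp only [isoPt, Matrix.cons_val, Fin.zero_eta, Fin.mk_one, Fin.reduceFinMk]
  · exact h0
  · rw [← hu]
    linear_combination q 1 * Complex.I_sq
  · rw [← hv]
    linear_combination q 2 * Complex.I_sq

theorem third_sq : (s3 / 3) ^ 2 = 1 / 3 := by
  linear_combination s3_sq / 9

theorem fivethird_sq : (s5 * s3 / 3) ^ 2 = 5 / 3 := by
  linear_combination s5 ^ 2 * s3_sq / 9 + s5_sq / 3

theorem negthird_sq : (Complex.I * s3 / 3) ^ 2 = -1 / 3 := by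
  linear_combination Complex.I ^ 2 * s3_sq / 9 + Complex.I_sq / 3

theorem sg_mul_sq (b : Bool) (x : ℂ) : (sg b * x) ^ 2 = x ^ 2 := by
  rw [mul_pow, sg_sq, one_mul]

theorem dot_edgePt (j ε δ η) : dot (edgePt j ε δ η) (edgePt j ε δ η) = 1 := by
  rw [edgePt, dot_place]
  linear_combination (edge_param_spec ε δ η).1

theorem s4_edgePt (j ε δ η) : s4 (edgePt j ε δ η) = -1 := by
  obtain ⟨h1, h2⟩ := edge_param_spec ε δ η
  rw [edgePt, s4_place]
  linear_combination (U ε δ ^ 2 + (sg η * U ε (!δ)) ^ 2 + 1) * h1 - 2 * h2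

theorem dot_diagPt (ε δ) : dot (diagPt ε δ) (diagPt ε δ) = 1 := by
  simp only [dot, diagPt, Matrix.cons_val, ← sq, sg_mul_sq, third_sq]
  norm_num

theorem s4_diagPt (ε δ) : s4 (diagPt ε δ) = 1 / 3 := by
  have e : ∀ x : ℂ, x ^ 4 = (x ^ 2) ^ 2 := fun x => by ring
  simp only [s4, diagPt, Matrix.cons_val, e, sg_mul_sq, third_sq]
  norm_num

theorem dot_fivePt (j ε δ η) : dot (fivePt j ε δ η) (fivePt j ε δ η) = 1 := by
  rw [fivePt, dot_place]
  simp only [sg_mul_sq, fivethird_sq, negthird_sq]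
  norm_num

theorem s4_fivePt (j ε δ η) : s4 (fivePt j ε δ η) = 3 := by
  have e : ∀ x : ℂ, x ^ 4 = (x ^ 2) ^ 2 := fun x => by ring
  rw [fivePt, s4_place]
  simp only [e, sg_mul_sq, fivethird_sq, negthird_sq]
  norm_num

theorem dot_axis (j) : dot (place j 1 0 0) (place j 1 0 0) = 1 := by
  rw [dot_place]
  norm_num

theorem s4_axis (j) : s4 (place j 1 0 0) = 1 := by
  rw [s4_place]
  norm_num

/-- Each `theLine i` is a line on the surface. The apolarity needed for `line_of_apolar` holds at
levels `1, 2, 3` for an axis and `4` for its partner, and at levels `1, 2, 4` for a diagonal and `3`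
for its partner. -/
theorem theLine_spec (i : Bool × Half) :
    Module.finrank ℂ (theLine i) = 2 ∧ LiesOn S8 (theLine i) := by
  have key : ∀ h : Half,
      (Module.finrank ℂ (lineOf (fstPt h) (sndPt h)) = 2 ∧ LiesOn S8 (lineOf (fstPt h) (sndPt h))) ∧
      (Module.finrank ℂ (lineOf (sndPt h) (fstPt h)) = 2 ∧
        LiesOn S8 (lineOf (sndPt h) (fstPt h))) := by
    have two : ∀ {p r : Fin 3 → ℂ}, dot p p = 1 → dot r r = 1 →
        (∀ j, 1 ≤ j → j ≤ 4 → Apolar j p ∨ Apolar j r) →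
        (s4 p - 3 / 5) * (s4 r - 3 / 5) = -16 / 25 →
        (Module.finrank ℂ (lineOf p r) = 2 ∧ LiesOn S8 (lineOf p r)) ∧
        (Module.finrank ℂ (lineOf r p) = 2 ∧ LiesOn S8 (lineOf r p)) :=
      fun hp hr h h4 => ⟨line_of_apolar hp hr h h4,
        line_of_apolar hr hp (fun j h1 h2 => (h j h1 h2).symm) (by rw [mul_comm, h4])⟩
    rintro (⟨ε, δ, η⟩ | ⟨j, k, ε, δ, η⟩ | ⟨⟨ε, δ⟩, k, ε', δ', η'⟩)
    · obtain ⟨h0, h1, h2⟩ := isIsotropic_isoPt ε δ η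
      exact line_of_isotropic h0 h1 h2
    · refine two (dot_axis j) (dot_edgePt k ε δ η) (fun n h1 h4 => ?_) ?_
      · rcases Nat.lt_or_ge 3 n with h | h
        · obtain rfl : n = 4 := by omega
          obtain ⟨e1, e2⟩ := edge_param_spec ε δ η
          exact Or.inr (apolar_edge k e1 e2)
        · exact Or.inl (apolar_axis j n h1 h)
      · simp only [fstPt, sndPt]
        rw [s4_axis, s4_edgePt]
        norm_num
    · refine two (dot_diagPt ε δ) (dot_fivePt k ε' δ' η') (fun n h1 h4 => ?_) ?_
      · by_cases h : n = 3
        · subst h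
          refine Or.inr (apolar_five ?_ ?_ ?_ k) <;>
            simp only [sg_mul_sq, fivethird_sq, negthird_sq]
        · refine Or.inl (apolar_diag ?_ ?_ ?_ n h1 h4 h) <;> simp only [sg_mul_sq, third_sq]
      · simp only [fstPt, sndPt]
        rw [s4_diagPt, s4_fivePt]
        norm_num
  obtain ⟨_ | _, h⟩ := i
  · exact (key h).1
  · exact (key h).2

/-! ### Every line is labelled -/

theorem diag_param {p : Fin 3 → ℂ} (h : ∀ i, p i ^ 2 = 1 / 3) :
    ∃ ε δ, p = diagPt ε δ ∨ p = -diagPt ε δ := by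
  obtain ⟨a, ha⟩ := sign_param ((h 0).trans third_sq.symm)
  obtain ⟨b, hb⟩ := sign_param ((h 1).trans third_sq.symm)
  obtain ⟨c, hc⟩ := sign_param ((h 2).trans third_sq.symm)
  cases a
  · refine ⟨!b, !c, Or.inr ?_⟩
    ext i
    fin_cases i <;> simp [diagPt, sg_not, ha, hb, hc, show sg false = -1 from rfl]
  · refine ⟨b, c, Or.inl ?_⟩
    ext i
    fin_cases i <;> simp [diagPt, ha, hb, hc, sg]

theorem five_param {p : Fin 3 → ℂ} {j x y z} (hp : p = place j x y z) (hx : x ^ 2 = 5 / 3)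
    (hy : y ^ 2 = -1 / 3) (hz : z ^ 2 = -1 / 3) : ∃ j ε δ η, p = fivePt j ε δ η := by
  obtain ⟨a, rfl⟩ := sign_param (hx.trans fivethird_sq.symm)
  obtain ⟨b, rfl⟩ := sign_param (hy.trans negthird_sq.symm)
  obtain ⟨c, rfl⟩ := sign_param (hz.trans negthird_sq.symm)
  exact ⟨j, a, b, c, hp⟩

theorem dot_neg (p : Fin 3 → ℂ) : dot (-p) (-p) = dot p p := by
  simp [dot]

theorem s4_neg (p : Fin 3 → ℂ) : s4 (-p) = s4 p := by
  simp only [s4, Pi.neg_apply]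
  ring

theorem e3_neg (p : Fin 3 → ℂ) : e3 (-p) = e3 p := by
  simp only [e3, Pi.neg_apply]
  ring

/-- The pairs of unit vectors with the invariants found in `invariants_half` are, up to a
common sign, those with a label. -/
theorem half_of_invariants {p r : Fin 3 → ℂ} (hp : dot p p = 1) (hr : dot r r = 1)
    (h : (s4 p = 1 ∧ e3 p = 0 ∧ s4 r = -1 ∧ e3 r = 0) ∨
      (s4 p = 1 / 3 ∧ e3 p = 1 / 27 ∧ s4 r = 3 ∧ e3 r = 5 / 27)) :
    ∃ i : Half, (p = fstPt i ∧ r = sndPt i) ∨ (p = -fstPt i ∧ r = -sndPt i) := by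
  rcases h with ⟨h1, h2, h3, h4⟩ | ⟨h1, h2, h3, h4⟩
  · have edge : ∀ r, dot r r = 1 → s4 r = -1 → e3 r = 0 → ∃ k ε δ η, r = edgePt k ε δ η := by
      intro r hr h3 h4
      obtain ⟨k, u, v, rfl, hu, hv⟩ := edge_of hr h3 h4
      obtain ⟨ε, δ, η, rfl, rfl⟩ := edge_param hu hv
      exact ⟨k, ε, δ, η, rfl⟩
    obtain ⟨j, hj | hj⟩ := axis_of hp h1 h2
    · obtain ⟨k, ε, δ, η, hk⟩ := edge r hr h3 h4
      exact ⟨.inr (.inl (j, k, ε, δ, η)), Or.inl ⟨hj, hk⟩⟩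
    · obtain ⟨k, ε, δ, η, hk⟩ := edge (-r) ((dot_neg r).trans hr) ((s4_neg r).trans h3)
        ((e3_neg r).trans h4)
      exact ⟨.inr (.inl (j, k, ε, δ, η)), Or.inr ⟨hj, neg_eq_iff_eq_neg.1 hk⟩⟩
  · have five : ∀ r, dot r r = 1 → s4 r = 3 → e3 r = 5 / 27 → ∃ k ε δ η, r = fivePt k ε δ η := by
      intro r hr h3 h4
      obtain ⟨k, x, y, z, h, hx, hy, hz⟩ := five_of hr h3 h4
      exact five_param h hx hy hz
    obtain ⟨a, b, hj | hj⟩ := diag_param (diag_of hp h1 h2)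
    · obtain ⟨k, ε, δ, η, hk⟩ := five r hr h3 h4
      exact ⟨.inr (.inr ((a, b), k, ε, δ, η)), Or.inl ⟨hj, hk⟩⟩
    · obtain ⟨k, ε, δ, η, hk⟩ := five (-r) ((dot_neg r).trans hr) ((s4_neg r).trans h3)
        ((e3_neg r).trans h4)
      exact ⟨.inr (.inr ((a, b), k, ε, δ, η)), Or.inr ⟨hj, neg_eq_iff_eq_neg.1 hk⟩⟩

/-- Every line on the surface is one of the `theLine i`. -/
theorem theLine_surj {W : Submodule ℂ (Fin 4 → ℂ)} (hW : Module.finrank ℂ W = 2)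
    (hS : LiesOn S8 W) : ∃ i, theLine i = W := by
  rcases line_cases hW hS with ⟨q, hq, h⟩ | ⟨p, r, hp, hr, rfl, h0, h1, h2, h3, h4⟩
  · obtain ⟨ε, δ, η, rfl⟩ := hq.param
    rcases h with rfl | rfl
    · exact ⟨(false, .inl (ε, δ, η)), rfl⟩
    · exact ⟨(true, .inl (ε, δ, η)), rfl⟩
  · rcases mul_eq_zero.1 h3 with k | k
    · obtain ⟨i, ⟨rfl, rfl⟩ | ⟨rfl, rfl⟩⟩ :=
        half_of_invariants hp hr (invariants_half h0 h1 h2 k h4)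
      · exact ⟨(false, i), rfl⟩
      · exact ⟨(false, i), (lineOf_neg _ _).symm⟩
    · obtain ⟨i, ⟨rfl, rfl⟩ | ⟨rfl, rfl⟩⟩ :=
        half_of_invariants hr hp (invariants_half (by rw [mul_comm, h0]) (by rw [mul_comm, h1])
          (by rw [mul_comm, h2]) k (by rw [mul_comm, h4]))
      · exact ⟨(true, i), rfl⟩
      · exact ⟨(true, i), (lineOf_neg _ _).symm⟩

/-! ### Distinctness and the count -/

theorem place_inj {j k : Fin 3} {x y z x' y' z' : ℂ} (h : place j x y z = place k x' y' z')
    (hy : x ≠ y') (hz : x ≠ z') : j = k ∧ x = x' ∧ y = y' ∧ z = z' := by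
  have h0 := congrFun h 0
  have h1 := congrFun h 1
  have h2 := congrFun h 2
  fin_cases j <;> fin_cases k <;> simp [place] at h0 h1 h2 ⊢ <;>
    first | exact ⟨by assumption, by assumption, by assumption⟩ | (exfalso; tauto)

theorem smul_place (c : ℂ) (j : Fin 3) (x y z : ℂ) :
    c • place j x y z = place j (c * x) (c * y) (c * z) := by
  ext i
  fin_cases j <;> fin_cases i <;> rfl

theorem dot_smul (c : ℂ) (p : Fin 3 → ℂ) : dot (c • p) (c • p) = c ^ 2 * dot p p := by
  simp only [dot, Pi.smul_apply, smul_eq_mul]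
  ring

theorem s4_smul (c : ℂ) (p : Fin 3 → ℂ) : s4 (c • p) = c ^ 4 * s4 p := by
  simp only [s4, Pi.smul_apply, smul_eq_mul]
  ring

theorem dot_zero : dot 0 0 = 0 := by simp [dot]

theorem s4_eq_of_smul {p q : Fin 3 → ℂ} {c : ℂ} (h : p = c • q) (hp : dot p p = 1)
    (hq : dot q q = 1) : s4 p = s4 q := by
  have h2 : c ^ 2 = 1 := by
    rw [← hp, h, dot_smul, hq, mul_one]
  rw [h, s4_smul]
  linear_combination (c ^ 2 + 1) * s4 q * h2

theorem isoPt_inj {ε δ η ε' δ' η'} (h : isoPt ε δ η = isoPt ε' δ' η') :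
    ε = ε' ∧ δ = δ' ∧ η = η' := by
  have h1 := mul_left_cancel₀ Complex.I_ne_zero (congrFun h 1)
  have h2 := mul_left_cancel₀ Complex.I_ne_zero (congrFun h 2)
  obtain ⟨rfl, rfl⟩ := U_inj h1
  exact ⟨rfl, rfl, sg_inj (mul_right_cancel₀ (U_ne _ _) h2)⟩

theorem edgePt_inj {j ε δ η k ε' δ' η'} (h : edgePt j ε δ η = edgePt k ε' δ' η') :
    j = k ∧ ε = ε' ∧ δ = δ' ∧ η = η' := by
  obtain ⟨rfl, -, h1, h2⟩ := place_inj h (U_ne _ _).symm (mul_ne_zero (sg_ne _) (U_ne _ _)).symm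
  obtain ⟨rfl, rfl⟩ := U_inj h1
  exact ⟨rfl, rfl, rfl, sg_inj (mul_right_cancel₀ (U_ne _ _) h2)⟩

theorem fivePt_inj {j ε δ η k ε' δ' η'} (h : fivePt j ε δ η = fivePt k ε' δ' η') :
    j = k ∧ ε = ε' ∧ δ = δ' ∧ η = η' := by
  have hne : ∀ b : Bool, sg ε * (s5 * s3 / 3) ≠ sg b * (Complex.I * s3 / 3) := by
    intro b hb
    have := congrArg (· ^ 2) hb
    simp only [sg_mul_sq, fivethird_sq, negthird_sq] at this
    norm_num at this
  have h5 : s5 * s3 / 3 ≠ 0 := by simp [s3_ne, s5_ne]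
  have h3 : Complex.I * s3 / 3 ≠ 0 := by simp [s3_ne]
  obtain ⟨rfl, h1, h2, k3⟩ := place_inj h (hne _) (hne _)
  exact ⟨rfl, sg_inj (mul_right_cancel₀ h5 h1), sg_inj (mul_right_cancel₀ h3 h2),
    sg_inj (mul_right_cancel₀ h3 k3)⟩

/-- Proportional pairs have the same label. -/
theorem half_eq_of_smul {h k : Half} {c : ℂ} (hc : c ≠ 0) (h1 : fstPt h = c • fstPt k)
    (h2 : sndPt h = c • sndPt k) : h = k := by
  -- a unit vector is not proportional to zero
  have iso : ∀ {r : Fin 3 → ℂ}, dot r r = 1 → c • r = 0 → False := fun hr h0 => by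
    have := dot_smul c _ ▸ congrArg (fun p => dot p p) h0
    simp [dot_zero, hr, hc] at this
  rcases h with ⟨ε, δ, η⟩ | ⟨j, l, ε, δ, η⟩ | ⟨⟨a, b⟩, l, ε, δ, η⟩ <;>
    rcases k with ⟨ε', δ', η'⟩ | ⟨j', l', ε', δ', η'⟩ | ⟨⟨a', b'⟩, l', ε', δ', η'⟩ <;>
    simp only [fstPt, sndPt] at h1 h2
  · have : (1 : ℂ) = c * 1 := congrFun h1 0
    obtain rfl : c = 1 := by linear_combination -this
    rw [one_smul] at h1
    obtain ⟨rfl, rfl, rfl⟩ := isoPt_inj h1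
    rfl
  · exact (iso (dot_edgePt _ _ _ _) h2.symm).elim
  · exact (iso (dot_fivePt _ _ _ _) h2.symm).elim
  · have := dot_edgePt l ε δ η
    rw [h2, smul_zero, dot_zero] at this
    exact (zero_ne_one this).elim
  · rw [smul_place] at h1
    obtain ⟨rfl, hc1, -, -⟩ := place_inj h1 (by simp) (by simp)
    obtain rfl : c = 1 := by linear_combination -hc1
    rw [one_smul] at h2
    obtain ⟨rfl, rfl, rfl, rfl⟩ := edgePt_inj h2
    rfl
  · have := s4_eq_of_smul h1 (dot_axis _) (dot_diagPt _ _)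
    rw [s4_axis, s4_diagPt] at this
    norm_num at this
  · have := dot_fivePt l ε δ η
    rw [h2, smul_zero, dot_zero] at this
    exact (zero_ne_one this).elim
  · have := s4_eq_of_smul h1 (dot_diagPt _ _) (dot_axis _)
    rw [s4_axis, s4_diagPt] at this
    norm_num at this
  · have e3' : s3 / 3 ≠ 0 := by simp [s3_ne]
    have : s3 / 3 = c * (s3 / 3) := congrFun h1 0
    obtain rfl : c = 1 := mul_right_cancel₀ e3' (by rw [← this, one_mul])
    rw [one_smul] at h1 h2
    obtain rfl := sg_inj (mul_right_cancel₀ e3' (congrFun h1 1))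
    obtain rfl := sg_inj (mul_right_cancel₀ e3' (congrFun h1 2))
    obtain ⟨rfl, rfl, rfl, rfl⟩ := fivePt_inj h2
    rfl

/-- A pair is never proportional to an exchanged one: the first vectors are isotropic and
nonzero, or have `s4 = 1` or `1/3`, whereas the second ones are zero, or have `s4 = -1` or `3`. -/
theorem half_no_swap {h k : Half} {c : ℂ} (h1 : fstPt h = c • sndPt k)
    (h2 : sndPt h = c • fstPt k) : False := by
  -- a nonzero isotropic vector is not a multiple of a unit vector
  have iso : ∀ {p q : Fin 3 → ℂ}, dot q q = 1 → dot p p = 0 → p 0 = 1 → p = c • q → False := by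
    intro p q hq hp h0 h
    rw [h, dot_smul, hq, mul_one, sq_eq_zero_iff] at hp
    simp [h, hp] at h0
  rcases h with ⟨ε, δ, η⟩ | ⟨j, l, ε, δ, η⟩ | ⟨⟨a, b⟩, l, ε, δ, η⟩ <;>
    rcases k with ⟨ε', δ', η'⟩ | ⟨j', l', ε', δ', η'⟩ | ⟨⟨a', b'⟩, l', ε', δ', η'⟩ <;>
    simp only [fstPt, sndPt] at h1 h2
  · have : (1 : ℂ) = c * 0 := congrFun h1 0
    simp at this
  · exact iso (dot_edgePt _ _ _ _) (isIsotropic_isoPt ε δ η).2.1 rfl h1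
  · exact iso (dot_fivePt _ _ _ _) (isIsotropic_isoPt ε δ η).2.1 rfl h1
  · have := dot_axis j
    rw [h1, smul_zero, dot_zero] at this
    exact zero_ne_one this
  · have := s4_eq_of_smul h1 (dot_axis _) (dot_edgePt _ _ _ _)
    rw [s4_axis, s4_edgePt] at this
    norm_num at this
  · have := s4_eq_of_smul h1 (dot_axis _) (dot_fivePt _ _ _ _)
    rw [s4_axis, s4_fivePt] at this
    norm_num at this
  · have := dot_diagPt a b
    rw [h1, smul_zero, dot_zero] at this
    exact zero_ne_one this
  · have := s4_eq_of_smul h1 (dot_diagPt _ _) (dot_edgePt _ _ _ _)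
    rw [s4_diagPt, s4_edgePt] at this
    norm_num at this
  · have := s4_eq_of_smul h1 (dot_diagPt _ _) (dot_fivePt _ _ _ _)
    rw [s4_diagPt, s4_fivePt] at this
    norm_num at this

theorem fstPt_ne (h : Half) : fstPt h ≠ 0 := by
  intro h0
  rcases h with ⟨ε, δ, η⟩ | ⟨j, l, ε, δ, η⟩ | ⟨⟨a, b⟩, l, ε, δ, η⟩ <;> simp only [fstPt] at h0
  · exact one_ne_zero (congrFun h0 0)
  · have := dot_axis j
    rw [h0, dot_zero] at this
    exact zero_ne_one this
  · have := dot_diagPt a b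
    rw [h0, dot_zero] at this
    exact zero_ne_one this

theorem dot_fst_snd (h : Half) : dot (fstPt h) (fstPt h) = dot (sndPt h) (sndPt h) := by
  rcases h with ⟨ε, δ, η⟩ | ⟨j, l, ε, δ, η⟩ | ⟨⟨a, b⟩, l, ε, δ, η⟩ <;> simp only [fstPt, sndPt]
  · rw [dot_zero, (isIsotropic_isoPt ε δ η).2.1]
  · rw [dot_axis, dot_edgePt]
  · rw [dot_diagPt, dot_fivePt]

theorem theLine_inj : Function.Injective theLine := by
  rintro ⟨b, h⟩ ⟨b', k⟩ e
  have hh := dot_fst_snd h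
  have nh := fstPt_ne h
  have nk := fstPt_ne k
  cases b <;> cases b' <;> simp only [theLine, cond_true, cond_false] at e
  · obtain ⟨c, hc, h1, h2⟩ := ratio_of_le e.le hh (Or.inl nh) (Or.inl nk)
    rw [half_eq_of_smul hc h1 h2]
  · obtain ⟨c, hc, h1, h2⟩ := ratio_of_le e.le hh (Or.inl nh) (Or.inr nk)
    exact (half_no_swap h2 h1).elim
  · obtain ⟨c, hc, h1, h2⟩ := ratio_of_le e.le hh.symm (Or.inr nh) (Or.inl nk)
    exact (half_no_swap h1 h2).elim
  · obtain ⟨c, hc, h1, h2⟩ := ratio_of_le e.le hh.symm (Or.inr nh) (Or.inr nk)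
    rw [half_eq_of_smul hc h2 h1]

/-- The octic surface `S₈ = 0` in ℙ³ contains exactly `352` lines. -/
theorem octic_352_lines :
    Nat.card {W : Submodule ℂ (Fin 4 → ℂ) // IsLine W ∧ LiesOn S8 W} = 352 := by
  change Nat.card
    {W : Submodule ℂ (Fin 4 → ℂ) // Module.finrank ℂ W = 2 ∧ LiesOn S8 W} = 352
  have hbij : Function.Bijective (fun i => (⟨theLine i, theLine_spec i⟩ :
      {W : Submodule ℂ (Fin 4 → ℂ) // Module.finrank ℂ W = 2 ∧ LiesOn S8 W})) := by
    constructor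
    · intro i j hij
      exact theLine_inj (congrArg Subtype.val hij)
    · rintro ⟨W, hW, hS⟩
      obtain ⟨i, hi⟩ := theLine_surj hW hS
      exact ⟨i, Subtype.ext hi⟩
  rw [← Nat.card_congr (Equiv.ofBijective _ hbij)]
  simp [Nat.card_eq_fintype_card]
end

section
/- Let S₈ = x⁸ + y⁸ + z⁸ + t⁸ + 168·x²y²z²t² + 14·(x⁴y⁴ + x⁴z⁴ + x⁴t⁴ + y⁴z⁴ + y⁴t⁴ + z⁴t⁴). The set of tuples (c,d,g,h) ∈ ℂ⁴ such that S₈ vanishes identically on the 2-dimensional subspace span{(1,0,c,d),(0,1,g,h)} ⊆ ℂ⁴ (i.e., the line z = cx + gy, t = dx + hy lies on the surface S₈ = 0) has exactly 320 elements. -/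
/-!
A line in `ℙ³` with Plücker coordinates `p_{ij}` is described by Klein coordinates
`x₀, …, x₅`, linear in the `p_{ij}`, in which the Plücker relation reads `∑ xᵢ² = 0`. The symmetry
group of the octic acts on Klein coordinates, and contains elements acting as the quarter turns
`(xₖ, xₖ₊₁) ↦ (xₖ₊₁, -xₖ)` (`onS_rot`). Hence the set of lines in the octic is stable under
permutations of the squares `sᵢ = xᵢ²` (`SomeOnS.perm`, `AllOnS.perm`).

*Only the expected lines.* Evaluating the octic at the four points where a line meets the faces of
the coordinate tetrahedron and adding the results gives a quartic equation `T s = 0`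
(`SomeOnS.T_eq_zero`). By symmetry it holds for all permutations of `s`, and the difference of two
of these equations factors as
`56 (s₂ - s₃) (s₄ - s₅) (∑ sᵢ² - 10 s₀ s₁) = 0` modulo `∑ sᵢ = 0` (`Eqs.key`). These equations
force three entries of `s` to coincide (`Eqs.exists_triple`), and then `s` is, up to scaling, a
permutation of `(-5, 1, 1, 1, 1, 1)` or of `(1, ω, ω², 0, 0, 0)` (`SomeOnS.pat`).

*They all occur.* By the permutation symmetry only one ordering of each type has to be treated;
for it the restriction of the octic to the line is computed (`allOnS_A`, `allOnS_B`). Every choice of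
square roots gives a line in the octic (`Pat.allOnS`).

*Counting.* The lines `z = cx + gy`, `t = dx + hy` are those with `p₁₂ ≠ 0`; normalizing `p₁₂ = 1`,
such a line is determined by its last four Klein coordinates, which can be arbitrary (`coords`).
The condition on `s` becomes a condition on the squares `q` of these four coordinates, whose
solutions are listed by `sol`: `8` with five equal entries of `s` among which are the first two,
`4` where the exceptional entry of `s` is one of the first two, and `16` and `24` where `q` has one,
respectively two, nonzero entries. A solution with `n` nonzero entries comes from `2ⁿ` lines, so
there are `8 · 16 + 4 · 16 + 16 · 2 + 24 · 4 = 320` lines.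
-/

open MvPolynomial

namespace OcticLines

open Complex

/-- The octic `S₈` as a function on `ℂ⁴`. -/
def F (x y z t : ℂ) : ℂ :=
  x ^ 8 + y ^ 8 + z ^ 8 + t ^ 8 + 168 * (x ^ 2 * y ^ 2 * z ^ 2 * t ^ 2) +
    14 * (x ^ 4 * y ^ 4 + x ^ 4 * z ^ 4 + x ^ 4 * t ^ 4 +
      y ^ 4 * z ^ 4 + y ^ 4 * t ^ 4 + z ^ 4 * t ^ 4)

/-- The octic vanishes at every vector `P u`, where `P` is the skew-symmetric matrix with entries
`p_{ij}`. When `p` is a nonzero vector of Plücker coordinates, the image of `P` is the line with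
these coordinates. -/
def VanishesOn (p₁₂ p₁₃ p₁₄ p₂₃ p₂₄ p₃₄ : ℂ) : Prop :=
  ∀ a b c d : ℂ, F (p₁₂ * b + p₁₃ * c + p₁₄ * d) (-p₁₂ * a + p₂₃ * c + p₂₄ * d)
    (-p₁₃ * a - p₂₃ * b + p₃₄ * d) (-p₁₄ * a - p₂₄ * b - p₃₄ * c) = 0

/-- `VanishesOn` in terms of Klein coordinates, which turn the Plücker relation into
`∑ i, x i ^ 2 = 0`. -/
def OnS (x : Fin 6 → ℂ) : Prop :=
  VanishesOn (x 0 + I * x 1) (x 3 + I * x 2) (x 4 + I * x 5) (x 4 - I * x 5)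
    (-x 3 + I * x 2) (x 0 - I * x 1)

lemma F_smul (l x y z t : ℂ) : F (l * x) (l * y) (l * z) (l * t) = l ^ 8 * F x y z t := by
  unfold F; ring

lemma F_diag {l : ℂ} (hl : l ^ 2 = -1) (x y z t : ℂ) : F x y (l * z) (l * t) = F x y z t := by
  have h4 : l ^ 4 = 1 := by linear_combination (l ^ 2 - 1) * hl
  have h8 : l ^ 8 = 1 := by linear_combination (l ^ 4 + 1) * h4
  simp only [F, mul_pow, h8, h4, hl]; ring

lemma F_swap₂₃ (x y z t : ℂ) : F x z y t = F x y z t := by unfold F; ring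

lemma F_swap₂₄ (x y z t : ℂ) : F x t z y = F x y z t := by unfold F; ring

lemma F_hadamard (x y z t : ℂ) : F (x - t) (y + z) (z - y) (t + x) = 16 * F x y z t := by
  unfold F; ring

lemma F_hadamard' (x y z t : ℂ) : F (x + y) (y - x) (z + t) (t - z) = 16 * F x y z t := by
  unfold F; ring

/-! ### Symmetries of the octic acting on Klein coordinates -/

section
variable {p₁₂ p₁₃ p₁₄ p₂₃ p₂₄ p₃₄ : ℂ}

/-- Induced by the symmetry `diag(-i, -i, 1, 1)` of the octic. -/
lemma vanishesOn_rot0 (h : VanishesOn p₁₂ p₁₃ p₁₄ p₂₃ p₂₄ p₃₄) :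
    VanishesOn (-I * p₁₂) p₁₃ p₁₄ p₂₃ p₂₄ (I * p₃₄) := by
  intro a b c d
  have := h (-I * a) (-I * b) c d
  rw [← this, ← F_diag (l := -I) (by simp)]
  congr 1 <;> ring_nf <;> simp only [I_sq] <;> ring

/-- Induced by the symmetry `diag(i, 1, i, 1)` of the octic. -/
lemma vanishesOn_rot2 (h : VanishesOn p₁₂ p₁₃ p₁₄ p₂₃ p₂₄ p₃₄) :
    VanishesOn p₁₂ (I * p₁₃) p₁₄ p₂₃ (-I * p₂₄) p₃₄ := by
  intro a b c d
  have := h (I * a) b (I * c) d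
  rw [← this, ← F_swap₂₃, ← F_diag I_sq, F_swap₂₃]
  congr 1 <;> ring_nf <;> simp only [I_sq] <;> ring

/-- Induced by the symmetry `diag(-i, 1, 1, -i)` of the octic. -/
lemma vanishesOn_rot4 (h : VanishesOn p₁₂ p₁₃ p₁₄ p₂₃ p₂₄ p₃₄) :
    VanishesOn p₁₂ p₁₃ (-I * p₁₄) (I * p₂₃) p₂₄ p₃₄ := by
  intro a b c d
  have := h (-I * a) b c (-I * d)
  rw [← this, ← F_swap₂₄, ← F_diag (l := -I) (by simp), F_swap₂₄]
  congr 1 <;> ring_nf <;> simp only [I_sq] <;> ring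

/-- Induced by the Hadamard-type symmetry in `F_hadamard`. -/
lemma vanishesOn_rot1 (h : VanishesOn p₁₂ p₁₃ p₁₄ p₂₃ p₂₄ p₃₄) :
    VanishesOn ((p₁₂ + p₁₃ + p₂₄ + p₃₄) / 2) ((p₁₃ - p₁₂ + p₃₄ - p₂₄) / 2) p₁₄ p₂₃
      ((p₂₄ - p₁₂ + p₃₄ - p₁₃) / 2) ((p₃₄ - p₁₃ - p₂₄ + p₁₂) / 2) := by
  intro a b c d
  have := h (a + d) (b - c) (b + c) (d - a)
  rw [← mul_eq_zero_iff_left (show (16 : ℂ) ≠ 0 by norm_num), ← F_hadamard] at this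
  rw [← mul_eq_zero_iff_left (show (2 : ℂ) ^ 8 ≠ 0 by norm_num), ← F_smul, ← this]
  congr 1 <;> ring

/-- Induced by `F_hadamard` composed with a permutation of the coordinates. -/
lemma vanishesOn_rot3 (h : VanishesOn p₁₂ p₁₃ p₁₄ p₂₃ p₂₄ p₃₄) :
    VanishesOn p₁₂ ((p₁₃ + p₁₄ + p₂₃ + p₂₄) / 2) ((p₁₄ - p₁₃ + p₂₄ - p₂₃) / 2)
      ((p₂₃ + p₂₄ - p₁₃ - p₁₄) / 2) ((p₂₄ - p₂₃ - p₁₄ + p₁₃) / 2) p₃₄ := by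
  intro a b c d
  have := h (a - b) (a + b) (c - d) (c + d)
  rw [← mul_eq_zero_iff_left (show (16 : ℂ) ≠ 0 by norm_num), ← F_hadamard'] at this
  rw [← mul_eq_zero_iff_left (show (2 : ℂ) ^ 8 ≠ 0 by norm_num), ← F_smul, ← this]
  congr 1 <;> ring

end

/-- Swap the coordinates `k` and `k + 1`, changing one sign: the rotation by a quarter turn in
that coordinate plane. -/
def rot (k : Fin 5) (x : Fin 6 → ℂ) : Fin 6 → ℂ := fun i =>
  if i = k.castSucc then x k.succ else if i = k.succ then -x k.castSucc else x i

lemma onS_rot (k : Fin 5) (x : Fin 6 → ℂ) (h : OnS x) : OnS (rot k x) := by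
  unfold OnS at *
  fin_cases k
  · convert vanishesOn_rot0 h using 1 <;> simp [rot] <;> ring_nf <;> simp
  · convert vanishesOn_rot1 h using 1 <;> simp [rot] <;> ring
  · convert vanishesOn_rot2 h using 1 <;> simp [rot] <;> ring_nf <;> simp
  · convert vanishesOn_rot3 h using 1 <;> simp [rot] <;> ring
  · convert vanishesOn_rot4 h using 1 <;> simp [rot] <;> ring_nf <;> simp

lemma rot_sq (k : Fin 5) (x : Fin 6 → ℂ) (i : Fin 6) :
    rot k x i ^ 2 = x (Equiv.swap k.castSucc k.succ i) ^ 2 := by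
  unfold rot
  rw [Equiv.swap_apply_def]
  split_ifs <;> simp

lemma rot_rot (k : Fin 5) (x : Fin 6 → ℂ) : rot k (rot k (rot k (rot k x))) = x := by
  funext i
  have : k.succ ≠ k.castSucc := (Fin.castSucc_lt_succ).ne'
  simp only [rot]
  split_ifs <;> simp_all

/-- Flipping two adjacent signs is the square of a rotation. -/
lemma onS_flip (k : Fin 5) (x : Fin 6 → ℂ)
    (h : OnS fun i => if i = k.castSucc ∨ i = k.succ then -x i else x i) : OnS x := by
  convert onS_rot k _ (onS_rot k _ h) using 1
  funext i
  have : k.succ ≠ k.castSucc := (Fin.castSucc_lt_succ).ne'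
  simp only [rot]
  split_ifs <;> simp_all

/-- Adjacent transpositions generate the symmetric group. -/
lemma perm_induction {p : (Fin 6 → ℂ) → Prop}
    (hp : ∀ (k : Fin 5) s, p s → p fun i => s (Equiv.swap k.castSucc k.succ i))
    (π : Equiv.Perm (Fin 6)) : ∀ s, p s → p fun i => s (π i) := by
  have hπ : π ∈ Submonoid.closure (Set.range fun k : Fin 5 => Equiv.swap k.castSucc k.succ) := by
    rw [Equiv.Perm.mclosure_swap_castSucc_succ]; trivial
  induction hπ using Submonoid.closure_induction with
  | mem σ h => obtain ⟨k, rfl⟩ := h; exact hp k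
  | one => exact fun s h => h
  | mul σ τ _ _ h₁ h₂ => exact fun s h => h₂ _ (h₁ s h)

/-- Some line in the octic has Klein coordinates with squares `s`. -/
def SomeOnS (s : Fin 6 → ℂ) : Prop := ∃ x, (∀ i, x i ^ 2 = s i) ∧ OnS x

/-- All choices of square roots of `s` are Klein coordinates of a line in the octic. -/
def AllOnS (s : Fin 6 → ℂ) : Prop := ∀ x, (∀ i, x i ^ 2 = s i) → OnS x

lemma SomeOnS.perm {s : Fin 6 → ℂ} (h : SomeOnS s) (π : Equiv.Perm (Fin 6)) :
    SomeOnS fun i => s (π i) := by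
  refine perm_induction (fun k s => ?_) π s h
  rintro ⟨x, hx, hS⟩
  exact ⟨rot k x, fun i => by rw [rot_sq, hx], onS_rot k x hS⟩

lemma AllOnS.perm {s : Fin 6 → ℂ} (h : AllOnS s) (π : Equiv.Perm (Fin 6)) :
    AllOnS fun i => s (π i) := by
  refine perm_induction (fun k s h x hx => ?_) π s h
  rw [← rot_rot k x]
  refine onS_rot k _ (h _ fun i => ?_)
  simp [rot_sq, hx]

/-! ### Equations on the squares of the Klein coordinates -/

/-- Up to a factor `4`, the sum of the values of the octic at the points where the line meets the
faces of the coordinate tetrahedron, in terms of the squares of the Klein coordinates. -/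
def T (a b c d e f : ℂ) : ℂ :=
  2 * ((a ^ 2 - 6 * a * b + b ^ 2) ^ 2 + (c ^ 2 - 6 * c * d + d ^ 2) ^ 2 +
      (e ^ 2 - 6 * e * f + f ^ 2) ^ 2) -
    ((a + b) ^ 4 + (c + d) ^ 4 + (e + f) ^ 4) +
    14 * ((a ^ 2 - 6 * a * b + b ^ 2) * (c ^ 2 - 6 * c * d + d ^ 2) +
      (a ^ 2 - 6 * a * b + b ^ 2) * (e ^ 2 - 6 * e * f + f ^ 2) +
      (c ^ 2 - 6 * c * d + d ^ 2) * (e ^ 2 - 6 * e * f + f ^ 2))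

lemma pow_four_add {p q a b : ℂ} (h₁ : p * q = a + b) (h₂ : p ^ 2 + q ^ 2 = 2 * (a - b)) :
    p ^ 4 + q ^ 4 = 2 * (a ^ 2 - 6 * a * b + b ^ 2) := by
  linear_combination (p ^ 2 + q ^ 2 + 2 * (a - b)) * h₂ - 2 * (p * q + (a + b)) * h₁

lemma pow_eight_add {p q a b : ℂ} (h₁ : p * q = a + b) (h₂ : p ^ 2 + q ^ 2 = 2 * (a - b)) :
    p ^ 8 + q ^ 8 = 4 * (a ^ 2 - 6 * a * b + b ^ 2) ^ 2 - 2 * (a + b) ^ 4 := by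
  have h₃ : p ^ 4 * q ^ 4 = (a + b) ^ 4 := by rw [← mul_pow, h₁]
  linear_combination (p ^ 4 + q ^ 4 + 2 * (a ^ 2 - 6 * a * b + b ^ 2)) * pow_four_add h₁ h₂ -
    2 * h₃

/-- The sum of the values of the octic at the four points where the line meets the faces of the
coordinate tetrahedron, expressed in terms of `s`. -/
lemma SomeOnS.T_eq_zero {s : Fin 6 → ℂ} (h : SomeOnS s) :
    T (s 0) (s 1) (s 2) (s 3) (s 4) (s 5) = 0 := by
  obtain ⟨x, hx, h⟩ := h
  have h1 := h 1 0 0 0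
  have h2 := h 0 1 0 0
  have h3 := h 0 0 1 0
  have h4 := h 0 0 0 1
  have a1 : (x 0 + I * x 1) * (x 0 - I * x 1) = s 0 + s 1 := by
    linear_combination hx 0 + hx 1 - x 1 ^ 2 * I_sq
  have a2 : (x 0 + I * x 1) ^ 2 + (x 0 - I * x 1) ^ 2 = 2 * (s 0 - s 1) := by
    linear_combination 2 * hx 0 - 2 * hx 1 + 2 * x 1 ^ 2 * I_sq
  have b1 : (x 3 + I * x 2) * (-x 3 + I * x 2) = -s 2 + -s 3 := by
    linear_combination -hx 2 - hx 3 + x 2 ^ 2 * I_sq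
  have b2 : (x 3 + I * x 2) ^ 2 + (-x 3 + I * x 2) ^ 2 = 2 * (-s 2 - -s 3) := by
    linear_combination 2 * hx 3 - 2 * hx 2 + 2 * x 2 ^ 2 * I_sq
  have c1 : (x 4 + I * x 5) * (x 4 - I * x 5) = s 4 + s 5 := by
    linear_combination hx 4 + hx 5 - x 5 ^ 2 * I_sq
  have c2 : (x 4 + I * x 5) ^ 2 + (x 4 - I * x 5) ^ 2 = 2 * (s 4 - s 5) := by
    linear_combination 2 * hx 4 - 2 * hx 5 + 2 * x 5 ^ 2 * I_sq
  have A4 := pow_four_add a1 a2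
  have A8 := pow_eight_add a1 a2
  have B4 := pow_four_add b1 b2
  have B8 := pow_eight_add b1 b2
  have C4 := pow_four_add c1 c2
  have C8 := pow_eight_add c1 c2
  unfold F at h1 h2 h3 h4
  unfold T
  generalize x 0 + I * x 1 = p at *
  generalize x 0 - I * x 1 = p' at *
  generalize x 3 + I * x 2 = q at *
  generalize -x 3 + I * x 2 = q' at *
  generalize x 4 + I * x 5 = r at *
  generalize x 4 - I * x 5 = r' at *
  linear_combination (1 / 4) * (h1 + h2 + h3 + h4) - (1 / 2) * (A8 + B8 + C8) -
    (14 / 4) * ((q ^ 4 + q' ^ 4) * A4 + 2 * (s 0 ^ 2 - 6 * s 0 * s 1 + s 1 ^ 2) * B4 +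
      (r ^ 4 + r' ^ 4) * A4 + 2 * (s 0 ^ 2 - 6 * s 0 * s 1 + s 1 ^ 2) * C4 +
      (r ^ 4 + r' ^ 4) * B4 + 2 * (s 2 ^ 2 - 6 * s 2 * s 3 + s 3 ^ 2) * C4)

/-- The difference of two of the quartics `T`, on the hyperplane `∑ i, s i = 0`. -/
lemma T_sub {a b c d e f : ℂ} (h : a + b + c + d + e + f = 0) :
    T a b c e d f - T a b c f d e =
      -56 * ((c - d) * (e - f) * (a ^ 2 + b ^ 2 + c ^ 2 + d ^ 2 + e ^ 2 + f ^ 2 - 10 * a * b)) := by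
  obtain rfl : f = -(a + b + c + d + e) := by linear_combination h
  unfold T
  ring

/-! ### Solving the equations -/

/-- A primitive cube root of unity. -/
noncomputable def ω : ℂ := (-1 + √3 * I) / 2

lemma sqrt_three_sq : ((√3 : ℝ) : ℂ) ^ 2 = 3 := by
  rw [← ofReal_pow, Real.sq_sqrt (by norm_num)]; norm_num

lemma ω_eq : ω ^ 2 + ω + 1 = 0 := by
  unfold ω
  linear_combination (1 / 4) * I ^ 2 * sqrt_three_sq + (3 / 4) * I_sq

lemma ω_ne_zero : ω ≠ 0 := by
  intro h
  have := ω_eq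
  simp [h] at this

lemma ω_sq_ne_one : ω ^ 2 ≠ 1 := by
  intro h
  have h1 : ω = -2 := by linear_combination ω_eq - h
  rw [h1] at h
  norm_num at h

/-- The squares of the Klein coordinates of the lines in the octic, up to scaling: permutations of
`(-5, 1, 1, 1, 1, 1)` and of `(1, ω, ω², 0, 0, 0)`. -/
def Pat (s : Fin 6 → ℂ) : Prop :=
  (∃ k t, t ≠ 0 ∧ ∀ i, s i = if i = k then -5 * t else t) ∨
  ∃ a b c, a ≠ b ∧ a ≠ c ∧ b ≠ c ∧ ∃ t, t ≠ 0 ∧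
    ∀ i, s i = if i = a then t else if i = b then ω * t else if i = c then ω ^ 2 * t else 0

lemma Pat.of_perm {s : Fin 6 → ℂ} (π : Equiv.Perm (Fin 6)) (h : Pat fun i => s (π i)) : Pat s := by
  rcases h with ⟨k, t, ht, h⟩ | ⟨a, b, c, hab, hac, hbc, t, ht, h⟩
  · refine .inl ⟨π k, t, ht, fun i => ?_⟩
    simpa [Equiv.symm_apply_eq] using h (π.symm i)
  · refine .inr ⟨π a, π b, π c, by simpa, by simpa, by simpa, t, ht, fun i => ?_⟩
    simpa [Equiv.symm_apply_eq] using h (π.symm i)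

open Equiv in
lemma exists_perm : ∀ a b c : Fin 6, a ≠ b → a ≠ c → b ≠ c →
    ∃ π : Perm (Fin 6), π 0 = a ∧ π 1 = b ∧ π 2 = c := by
  have : ∀ a b c : Fin 6, a ≠ b → a ≠ c → b ≠ c →
      let π := swap 0 a * swap 1 (swap 0 a b) * swap 2 (swap 1 (swap 0 a b) (swap 0 a c))
      π 0 = a ∧ π 1 = b ∧ π 2 = c := by decide
  exact fun a b c h₁ h₂ h₃ => ⟨_, this a b c h₁ h₂ h₃⟩

/-- The cube roots of a common value: three numbers with vanishing first two elementary symmetric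
functions. -/
lemma eq_ω_mul {v w z : ℂ} (h₁ : v + w + z = 0) (h₂ : v * w + v * z + w * z = 0) :
    (w = ω * v ∧ z = ω ^ 2 * v) ∨ (w = ω ^ 2 * v ∧ z = ω * v) := by
  have h : (w - ω * v) * (w - ω ^ 2 * v) = 0 := by
    linear_combination (w + v) * h₁ - h₂ + (ω - 1) * v ^ 2 * ω_eq - v * w * ω_eq
  rcases mul_eq_zero.1 h with h | h
  · exact .inl ⟨by linear_combination h, by linear_combination h₁ - h - v * ω_eq⟩
  · exact .inr ⟨by linear_combination h, by linear_combination h₁ - h - v * ω_eq⟩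

lemma sum_perm (f : Fin 6 → ℂ) (π : Equiv.Perm (Fin 6)) :
    f (π 0) + f (π 1) + f (π 2) + f (π 3) + f (π 4) + f (π 5) =
      f 0 + f 1 + f 2 + f 3 + f 4 + f 5 := by
  simpa [Fin.sum_univ_six] using Equiv.sum_comp π f

/-- A symmetric family of equations on the squares `s`, all of which are satisfied when `s` comes
from a line in the octic. -/
structure Eqs (s : Fin 6 → ℂ) : Prop where
  sum_eq : s 0 + s 1 + s 2 + s 3 + s 4 + s 5 = 0
  T_eq (π : Equiv.Perm (Fin 6)) :
    T (s (π 0)) (s (π 1)) (s (π 2)) (s (π 3)) (s (π 4)) (s (π 5)) = 0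

lemma Eqs.perm {s : Fin 6 → ℂ} (h : Eqs s) (π : Equiv.Perm (Fin 6)) : Eqs fun i => s (π i) where
  sum_eq := (sum_perm s π).trans h.sum_eq
  T_eq σ := h.T_eq (π * σ)

/-- The equations that force coincidences among the entries of `s`. -/
lemma Eqs.key {s : Fin 6 → ℂ} (h : Eqs s) (π : Equiv.Perm (Fin 6)) :
    (s (π 2) - s (π 3)) * (s (π 4) - s (π 5)) *
    (s 0 ^ 2 + s 1 ^ 2 + s 2 ^ 2 + s 3 ^ 2 + s 4 ^ 2 + s 5 ^ 2 - 10 * s (π 0) * s (π 1)) = 0 := by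
  obtain ⟨σ, hσ⟩ : ∃ σ : Equiv.Perm (Fin 6), ∀ i, σ i = ![0, 1, 2, 4, 3, 5] i :=
    ⟨Equiv.swap 3 4, by decide⟩
  obtain ⟨τ, hτ⟩ : ∃ τ : Equiv.Perm (Fin 6), ∀ i, τ i = ![0, 1, 2, 5, 3, 4] i :=
    ⟨Equiv.swap 3 4 * Equiv.swap 3 5, by decide⟩
  have e1 := h.T_eq (π * σ)
  have e2 := h.T_eq (π * τ)
  have hp := sum_perm (fun i => s i ^ 2) π
  simp [hσ] at e1
  simp [hτ] at e2
  have e3 := T_sub ((sum_perm s π).trans h.sum_eq)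
  rw [e1, e2] at e3
  rw [← hp]
  linear_combination (1 / 56) * e3

lemma Eqs.T_eq' {s : Fin 6 → ℂ} (h : Eqs s) (v : Fin 6 → Fin 6) (hv : Function.Injective v) :
    T (s (v 0)) (s (v 1)) (s (v 2)) (s (v 3)) (s (v 4)) (s (v 5)) = 0 :=
  h.T_eq (Equiv.ofBijective v (Finite.injective_iff_bijective.1 hv))

lemma Eqs.key' {s : Fin 6 → ℂ} (h : Eqs s) (v : Fin 6 → Fin 6) (hv : Function.Injective v) :
    (s (v 2) - s (v 3)) * (s (v 4) - s (v 5)) *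
    (s 0 ^ 2 + s 1 ^ 2 + s 2 ^ 2 + s 3 ^ 2 + s 4 ^ 2 + s 5 ^ 2 - 10 * s (v 0) * s (v 1)) = 0 :=
  h.key (Equiv.ofBijective v (Finite.injective_iff_bijective.1 hv))

/-- Solutions with five equal entries. -/
lemma pat_of_five {s : Fin 6 → ℂ} (k : Fin 6) {t : ℂ}
    (h₀ : s 0 + s 1 + s 2 + s 3 + s 4 + s 5 = 0) (hne : ∃ i, s i ≠ 0) (h : ∀ i ≠ k, s i = t) :
    Pat s := by
  have hk : s k = -5 * t := by
    fin_cases k <;> simp [Fin.forall_fin_succ] at h <;> simp [h] at h₀ ⊢ <;> linear_combination h₀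
  refine .inl ⟨k, t, ?_, fun i => ?_⟩
  · rintro rfl
    obtain ⟨i, hi⟩ := hne
    by_cases hik : i = k
    · simp [hik, hk] at hi
    · exact hi (h i hik)
  · split_ifs with hi
    · rw [hi, hk]
    · exact h i hi

/-- Four entries of `s` cannot coincide without a fifth: `key'` and `4 * u + v + w = 0` give
`v * w = 5 * u ^ 2`, and then `T` is a nonzero multiple of `u ^ 4`. -/
lemma no_four {u v w : ℂ} (h₀ : 4 * u + v + w = 0) (hT : T u u u u v w = 0)
    (hk : (u - v) * (u - w) * (4 * u ^ 2 + v ^ 2 + w ^ 2 - 10 * u * u) = 0)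
    (hv : v ≠ u) (hw : w ≠ u) : False := by
  have h := (mul_eq_zero.1 hk).resolve_left
    (mul_ne_zero (sub_ne_zero.2 hv.symm) (sub_ne_zero.2 hw.symm))
  have hvw : v * w = 5 * u ^ 2 := by
    linear_combination (1 / 2) * ((v + w - 4 * u) * h₀ - h)
  have hs : v ^ 2 + w ^ 2 = 6 * u ^ 2 := by linear_combination h
  have ha : v ^ 2 - 6 * v * w + w ^ 2 = -24 * u ^ 2 := by linear_combination hs - 6 * hvw
  have hσ : v + w = -4 * u := by linear_combination h₀
  have hu : 3840 * u ^ 4 = 0 := by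
    rw [T, ha, hσ] at hT
    linear_combination hT
  obtain rfl : u = 0 := by simpa using hu
  obtain rfl : w = -v := by linear_combination h₀
  simp at hvw
  exact hv hvw

/-- Solutions with three equal entries. -/
lemma Eqs.pat_of_triple {s : Fin 6 → ℂ} (h : Eqs s) (hne : ∃ i, s i ≠ 0)
    (h₁ : s 1 = s 0) (h₂ : s 2 = s 0) : Pat s := by
  have h₀ := h.sum_eq
  by_cases h3 : s 3 = s 0 <;> by_cases h4 : s 4 = s 0 <;> by_cases h5 : s 5 = s 0
  · exact pat_of_five 5 h₀ hne (t := s 0) (by simp [Fin.forall_fin_succ, *])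
  · exact pat_of_five 5 h₀ hne (t := s 0) (by simp [Fin.forall_fin_succ, *])
  · exact pat_of_five 4 h₀ hne (t := s 0) (by simp [Fin.forall_fin_succ, *])
  · have hT := h.T_eq' ![0, 1, 2, 3, 4, 5] (by decide)
    have hk := h.key' ![0, 1, 2, 4, 3, 5] (by decide)
    simp [h₁, h₂, h3] at hT hk
    exact (no_four (by linear_combination h₀ - h₁ - h₂ - h3) hT
      (by simp only [mul_eq_zero]; grind) h4 h5).elim
  · exact pat_of_five 3 h₀ hne (t := s 0) (by simp [Fin.forall_fin_succ, *])
  · have hT := h.T_eq' ![0, 1, 2, 4, 3, 5] (by decide)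
    have hk := h.key' ![0, 1, 2, 3, 4, 5] (by decide)
    simp [h₁, h₂, h4] at hT hk
    exact (no_four (by linear_combination h₀ - h₁ - h₂ - h4) hT
      (by simp only [mul_eq_zero]; grind) h3 h5).elim
  · have hT := h.T_eq' ![0, 1, 2, 5, 3, 4] (by decide)
    have hk := h.key' ![0, 1, 2, 3, 5, 4] (by decide)
    simp [h₁, h₂, h5] at hT hk
    exact (no_four (by linear_combination h₀ - h₁ - h₂ - h5) hT
      (by simp only [mul_eq_zero]; grind) h3 h4).elim
  -- Exactly three entries equal `u = s 0`; the others are `v`, `w`, `z`.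
  · have k3 := h.key' ![0, 3, 1, 4, 2, 5] (by decide)
    have k4 := h.key' ![0, 4, 1, 3, 2, 5] (by decide)
    have k5 := h.key' ![0, 5, 1, 3, 2, 4] (by decide)
    simp [h₁, h₂, sub_eq_zero, Ne.symm h3, Ne.symm h4, Ne.symm h5] at k3 k4 k5
    have e34 : s 0 * (s 3 - s 4) = 0 := by linear_combination (k4 - k3) / 10
    have e35 : s 0 * (s 3 - s 5) = 0 := by linear_combination (k5 - k3) / 10
    have hu : s 0 = 0 := by
      by_contra hu
      have e4 : s 4 = s 3 := (sub_eq_zero.1 ((mul_eq_zero.1 e34).resolve_left hu)).symm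
      have e5 : s 5 = s 3 := (sub_eq_zero.1 ((mul_eq_zero.1 e35).resolve_left hu)).symm
      have e3 : s 3 = -s 0 := by linear_combination (h₀ - h₁ - h₂ - e4 - e5) / 3
      rw [e4, e5, e3] at k3
      exact hu (pow_eq_zero_iff two_ne_zero |>.1 (by linear_combination k3 / 16))
    rw [hu] at h₁ h₂ h3
    have hs : s 3 + s 4 + s 5 = 0 := by linear_combination h₀ - h₁ - h₂ - hu
    have he : s 3 * s 4 + s 3 * s 5 + s 4 * s 5 = 0 := by
      rw [hu] at k3
      linear_combination (1 / 2) * ((s 3 + s 4 + s 5) * hs - k3)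
    rcases eq_ω_mul hs he with ⟨h4, h5⟩ | ⟨h4, h5⟩
    · refine .inr ⟨3, 4, 5, by decide, by decide, by decide, s 3, h3, ?_⟩
      simp [Fin.forall_fin_succ, *]
    · refine .inr ⟨3, 5, 4, by decide, by decide, by decide, s 3, h3, ?_⟩
      simp [Fin.forall_fin_succ, *]

/-- The equations force three entries of `s` to coincide. -/
lemma Eqs.exists_triple {s : Fin 6 → ℂ} (h : Eqs s) :
    ∃ a b c, a ≠ b ∧ a ≠ c ∧ b ≠ c ∧ s b = s a ∧ s c = s a := by
  by_contra! hn
  have hprod (v : Fin 6 → Fin 6) (hv : Function.Injective v) :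
      s 0 ^ 2 + s 1 ^ 2 + s 2 ^ 2 + s 3 ^ 2 + s 4 ^ 2 + s 5 ^ 2 - 10 * s (v 0) * s (v 1) = 0 := by
    by_contra hne
    -- Otherwise each of the three splittings of `v 2, …, v 5` into pairs contains a coincidence.
    have hi {i j : Fin 6} (hij : i ≠ j) : v i ≠ v j := hv.ne hij
    have k1 := h.key' v hv
    have k2 := h.key' (fun i => v (![0, 1, 2, 4, 3, 5] i)) (hv.comp (by decide))
    have k3 := h.key' (fun i => v (![0, 1, 2, 5, 3, 4] i)) (hv.comp (by decide))
    simp [-mul_eq_zero] at k2 k3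
    simp only [mul_eq_zero, hne, or_false, sub_eq_zero] at k1 k2 k3
    have n1 := hn (v 2) (v 3) (v 4) (hi (by decide)) (hi (by decide)) (hi (by decide))
    have n2 := hn (v 2) (v 3) (v 5) (hi (by decide)) (hi (by decide)) (hi (by decide))
    have n3 := hn (v 2) (v 4) (v 5) (hi (by decide)) (hi (by decide)) (hi (by decide))
    have n4 := hn (v 3) (v 4) (v 5) (hi (by decide)) (hi (by decide)) (hi (by decide))
    grind
  have e01 := hprod ![0, 1, 2, 3, 4, 5] (by decide)
  have e02 := hprod ![0, 2, 1, 3, 4, 5] (by decide)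
  have e03 := hprod ![0, 3, 2, 1, 4, 5] (by decide)
  have e12 := hprod ![1, 2, 0, 3, 4, 5] (by decide)
  have e13 := hprod ![1, 3, 0, 2, 4, 5] (by decide)
  have e23 := hprod ![2, 3, 0, 1, 4, 5] (by decide)
  simp at e01 e02 e03 e12 e13 e23
  have d1 : s 0 * (s 1 - s 2) = 0 := by linear_combination (e02 - e01) / 10
  have d2 : s 0 * (s 1 - s 3) = 0 := by linear_combination (e03 - e01) / 10
  have n0 := hn 1 2 3 (by decide) (by decide) (by decide)
  have n1 := hn 0 1 2 (by decide) (by decide) (by decide)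
  have n2 := hn 0 1 3 (by decide) (by decide) (by decide)
  have n3 := hn 0 2 3 (by decide) (by decide) (by decide)
  by_cases h0 : s 0 = 0
  · have f12 : s 1 * s 2 = 0 := by linear_combination (e01 - e12) / 10 + s 1 * h0
    have f13 : s 1 * s 3 = 0 := by linear_combination (e01 - e13) / 10 + s 1 * h0
    have f23 : s 2 * s 3 = 0 := by linear_combination (e01 - e23) / 10 + s 1 * h0
    simp only [mul_eq_zero] at f12 f13 f23
    grind
  · simp only [mul_eq_zero, h0, false_or, sub_eq_zero] at d1 d2
    exact n0 d1.symm d2.symm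

lemma Eqs.pat {s : Fin 6 → ℂ} (h : Eqs s) (hne : ∃ i, s i ≠ 0) : Pat s := by
  obtain ⟨a, b, c, hab, hac, hbc, hb, hc⟩ := h.exists_triple
  obtain ⟨π, rfl, rfl, rfl⟩ := exists_perm a b c hab hac hbc
  obtain ⟨i, hi⟩ := hne
  exact ((h.perm π).pat_of_triple ⟨π.symm i, by simpa⟩ hb hc).of_perm

lemma SomeOnS.pat {s : Fin 6 → ℂ} (h : SomeOnS s) (h₀ : s 0 + s 1 + s 2 + s 3 + s 4 + s 5 = 0)
    (hne : ∃ i, s i ≠ 0) : Pat s :=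
  Eqs.pat ⟨h₀, fun π => (h.perm π).T_eq_zero⟩ hne

/-! ### The lines exist -/

/-- On the chart `p₁₂ ≠ 0` it suffices to test vectors in the span of the first two columns. -/
lemma vanishesOn_of_chart {p₁₂ p₁₃ p₁₄ p₂₃ p₂₄ p₃₄ : ℂ} (h₁ : p₁₂ ≠ 0)
    (h₂ : p₁₂ * p₃₄ - p₁₃ * p₂₄ + p₁₄ * p₂₃ = 0)
    (h : ∀ a b, F (p₁₂ * b) (-p₁₂ * a) (-p₁₃ * a - p₂₃ * b) (-p₁₄ * a - p₂₄ * b) = 0) :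
    VanishesOn p₁₂ p₁₃ p₁₄ p₂₃ p₂₄ p₃₄ := by
  intro a b c d
  have := h (p₁₂ * a - p₂₃ * c - p₂₄ * d) (p₁₂ * b + p₁₃ * c + p₁₄ * d)
  rw [← mul_eq_zero_iff_left (pow_ne_zero 8 h₁), ← F_smul, ← this]
  congr 1
  · ring
  · linear_combination d * h₂
  · linear_combination -c * h₂

/-- The lines of type `(1, ω, ω², 0, 0, 0)`. -/
lemma allOnS_A {s : Fin 6 → ℂ} {t : ℂ} (ht : t ≠ 0) (h0 : s 0 = t) (h1 : s 1 = ω * t)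
    (h2 : s 2 = ω ^ 2 * t) (h3 : s 3 = 0) (h4 : s 4 = 0) (h5 : s 5 = 0) : AllOnS s := by
  intro x hx
  have e0 := (hx 0).trans h0
  have e1 := (hx 1).trans h1
  have e2 := (hx 2).trans h2
  have e3 : x 3 = 0 := by simpa [h3] using hx 3
  have e4 : x 4 = 0 := by simpa [h4] using hx 4
  have e5 : x 5 = 0 := by simpa [h5] using hx 5
  have hpr : (x 0 + I * x 1) * (x 0 - I * x 1) = t + ω * t := by
    linear_combination e0 + e1 - x 1 ^ 2 * I_sq
  have hp2 : (x 0 + I * x 1) ^ 2 + (x 0 - I * x 1) ^ 2 = 2 * (t - ω * t) := by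
    linear_combination 2 * e0 - 2 * e1 + 2 * x 1 ^ 2 * I_sq
  have hp4 := pow_four_add hpr hp2
  have hq : (I * x 2) ^ 2 = (x 0 + I * x 1) * (x 0 - I * x 1) := by
    linear_combination x 2 ^ 2 * I_sq - e2 - hpr - t * ω_eq
  have hp : x 0 + I * x 1 ≠ 0 := by
    intro h
    rw [h, zero_mul] at hpr
    have : ω ^ 2 * t = 0 := by linear_combination hpr + t * ω_eq
    exact mul_ne_zero (pow_ne_zero 2 ω_ne_zero) ht this
  refine vanishesOn_of_chart hp ?_ fun a b => ?_
  · simp only [e3, e4, e5]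
    linear_combination -hq
  · simp only [e3, e4, e5]
    generalize x 0 + I * x 1 = p at *
    generalize x 0 - I * x 1 = r at *
    generalize I * x 2 = q at *
    have hr : p ^ 4 + r ^ 4 + 14 * (p * r) ^ 2 = 0 := by
      rw [hp4, hpr]
      linear_combination (16 * t ^ 2) * ω_eq
    have hpq : p ^ 8 + 14 * p ^ 4 * q ^ 4 + q ^ 8 = 0 := by
      have : p ^ 8 + 14 * p ^ 4 * (q ^ 2) ^ 2 + (q ^ 2) ^ 4 = 0 := by
        rw [hq]
        linear_combination p ^ 4 * hr
      linear_combination this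
    unfold F
    linear_combination (a ^ 8 + b ^ 8 + 14 * a ^ 4 * b ^ 4) * hpq

/-- Up to flipping a pair of adjacent signs, the `k`-th coordinate agrees with the last one. -/
lemma AllOnS.reduce {s : Fin 6 → ℂ} (k : Fin 5) (hk : k.succ ≠ 5) (hs : s k.succ = s 5)
    {x : Fin 6 → ℂ} (hx : ∀ i, x i ^ 2 = s i)
    (h : ∀ y : Fin 6 → ℂ, (∀ i, y i ^ 2 = s i) → y k.succ = y 5 →
      (∀ i, k.succ < i → y i = x i) → OnS y) : OnS x := by
  rcases sq_eq_sq_iff_eq_or_eq_neg.1 ((hx k.succ).trans (hs.trans (hx 5).symm)) with h' | h'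
  · exact h x hx h' fun _ _ => rfl
  · have hk' : (5 : Fin 6) ≠ k.castSucc := by
      rintro h
      have := k.2
      have := congrArg Fin.val h
      simp at this
      omega
    refine onS_flip k x (h _ (fun i => ?_) ?_ fun i hi => ?_)
    · split_ifs <;> simp [hx]
    · simp [h', hk.symm, hk']
    · have := hi.ne'
      have := ((Fin.castSucc_lt_succ (i := k)).trans hi).ne'
      simp [*]

/-- The lines of type `(-5, 1, 1, 1, 1, 1)`. By `AllOnS.reduce`, the square roots of the five equal
entries can be taken to be all equal. -/
lemma allOnS_B {s : Fin 6 → ℂ} {t : ℂ} (ht : t ≠ 0) (h0 : s 0 = -5 * t)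
    (h : ∀ i ≠ 0, s i = t) : AllOnS s := by
  intro x hx
  refine AllOnS.reduce 3 (by decide) (by simp [h]) hx fun x hx e4 _ => ?_
  refine AllOnS.reduce 2 (by decide) (by simp [h]) hx fun x' hx e3 he => ?_
  have e4 : x' 4 = x' 5 := by rw [he 4 (by decide), he 5 (by decide)]; exact e4
  clear he
  refine AllOnS.reduce 1 (by decide) (by simp [h]) hx fun x hx e2 he => ?_
  have e3 : x 3 = x 5 := by rw [he 3 (by decide), he 5 (by decide)]; exact e3
  have e4 : x 4 = x 5 := by rw [he 4 (by decide), he 5 (by decide)]; exact e4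
  clear he
  refine AllOnS.reduce 0 (by decide) (by simp [h]) hx fun x' hx e1 he => ?_
  have e2 : x' 2 = x' 5 := by rw [he 2 (by decide), he 5 (by decide)]; exact e2
  have e3 : x' 3 = x' 5 := by rw [he 3 (by decide), he 5 (by decide)]; exact e3
  have e4 : x' 4 = x' 5 := by rw [he 4 (by decide), he 5 (by decide)]; exact e4
  have e1 : x' 1 = x' 5 := e1
  have h0 := (hx 0).trans h0
  have h5 := (hx 5).trans (h 5 (by decide))
  unfold OnS
  rw [e1, e2, e3, e4]
  generalize x' 5 = m at *
  generalize x' 0 = w at *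
  have hw : w ^ 2 = -5 * m ^ 2 := by rw [h0, h5]
  have hm : m ≠ 0 := by rintro rfl; simp [ht.symm] at h5
  refine vanishesOn_of_chart ?_ ?_ fun a b => ?_
  · intro hp
    have : m ^ 2 = 0 := by
      linear_combination (-1 / 4) * ((w - I * m) * hp - hw + m ^ 2 * I_sq)
    exact hm (by simpa using this)
  · linear_combination hw - 3 * m ^ 2 * I_sq
  · have hF (p e : ℂ) : F (p * b) (-p * a) (-e * (a - I * b)) (-e * (a + I * b)) =
        (p ^ 8 + 28 * p ^ 4 * e ^ 4 + 16 * e ^ 8) * (a ^ 8 + 14 * a ^ 4 * b ^ 4 + b ^ 8) := by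
      have i4 : I ^ 4 = 1 := I_pow_four
      have i8 : I ^ 8 = 1 := by linear_combination (I ^ 4 + 1) * i4
      unfold F
      ring_nf
      simp only [I_sq, i4, i8]
      ring
    have hP : (w + I * m) ^ 4 = 56 * m ^ 4 - 24 * I * w * m ^ 3 := by
      linear_combination (w ^ 2 - 5 * m ^ 2 + 4 * I * w * m + 6 * I ^ 2 * m ^ 2) * hw +
        (4 * I * w * m ^ 3 + (I ^ 2 - 31) * m ^ 4) * I_sq
    have he : ((1 + I) * m) ^ 4 = -4 * m ^ 4 := by
      linear_combination (I ^ 2 + 4 * I + 5) * m ^ 4 * I_sq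
    have hPe : ((w + I * m) ^ 4) ^ 2 + 28 * (w + I * m) ^ 4 * ((1 + I) * m) ^ 4 +
        16 * (((1 + I) * m) ^ 4) ^ 2 = 0 := by
      rw [hP, he]
      linear_combination 576 * w ^ 2 * m ^ 6 * I_sq - 576 * m ^ 6 * hw
    have := hF (w + I * m) ((1 + I) * m)
    convert this.trans ?_ using 2
    · ring_nf; simp only [I_sq]; ring
    · ring_nf; simp only [I_sq]; ring
    · linear_combination (a ^ 8 + 14 * a ^ 4 * b ^ 4 + b ^ 8) * hPe

lemma Pat.allOnS {s : Fin 6 → ℂ} (h : Pat s) : AllOnS s := by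
  have key (π : Equiv.Perm (Fin 6)) (h : AllOnS fun i => s (π i)) : AllOnS s := by
    simpa using h.perm π.symm
  rcases h with ⟨k, t, ht, h⟩ | ⟨a, b, c, hab, hac, hbc, t, ht, h⟩
  · refine key (Equiv.swap 0 k) (allOnS_B ht (by simp [h]) fun i hi => ?_)
    rw [h, if_neg]
    rintro h
    exact hi (by simpa [Equiv.swap_apply_eq_iff] using h)
  · obtain ⟨π, rfl, rfl, rfl⟩ := exists_perm a b c hab hac hbc
    refine key π (allOnS_A ht ?_ ?_ ?_ ?_ ?_ ?_) <;> simp [h]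

/-! ### Parametrization of the lines `z = cx + gy`, `t = dx + hy` -/

lemma eval_S8 (v : Fin 4 → ℂ) : eval v S8 = F (v 0) (v 1) (v 2) (v 3) := by
  simp [S8, F]

lemma vanishesOn_iff_span (c d g h : ℂ) :
    VanishesOn 1 g h (-c) (-d) (c * h - g * d) ↔
      ∀ v ∈ Submodule.span ℂ ({![1, 0, c, d], ![0, 1, g, h]} : Set (Fin 4 → ℂ)),
        eval v S8 = 0 := by
  have hspan : (∀ v ∈ Submodule.span ℂ ({![1, 0, c, d], ![0, 1, g, h]} : Set (Fin 4 → ℂ)),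
      eval v S8 = 0) ↔ ∀ α β : ℂ, F α β (α * c + β * g) (α * d + β * h) = 0 := by
    simp only [Submodule.mem_span_pair, eval_S8]
    constructor
    · intro H α β
      simpa using H _ ⟨α, β, rfl⟩
    · rintro H _ ⟨α, β, rfl⟩
      simpa using H α β
  rw [hspan]
  constructor
  · intro H α β
    rw [← H (-β) α 0 0]
    congr 1 <;> ring
  · intro H a b c' d'
    rw [← H (b + g * c' + h * d') (-a - c * c' - d * d')]
    congr 1 <;> ring

/-- Klein coordinates, normalized by `p₁₂ = 1`, of the line whose last four Klein coordinates
are `z`. -/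
noncomputable def klein (z : Fin 4 → ℂ) : Fin 6 → ℂ :=
  ![(1 - ∑ i, z i ^ 2) / 2, -I * (1 + ∑ i, z i ^ 2) / 2, z 0, z 1, z 2, z 3]

/-- The squares of the coordinates `klein z`, as a function of `q i = z i ^ 2`. -/
noncomputable def kleinSq (q : Fin 4 → ℂ) : Fin 6 → ℂ :=
  ![((1 - ∑ i, q i) / 2) ^ 2, -((1 + ∑ i, q i) / 2) ^ 2, q 0, q 1, q 2, q 3]

lemma klein_sq (z : Fin 4 → ℂ) (i : Fin 6) : klein z i ^ 2 = kleinSq (fun i => z i ^ 2) i := by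
  fin_cases i <;> simp [klein, kleinSq]
  linear_combination ((1 + ∑ i, z i ^ 2) / 2) ^ 2 * I_sq

lemma onS_klein_iff (z : Fin 4 → ℂ) : OnS (klein z) ↔ Pat (kleinSq fun i => z i ^ 2) := by
  refine ⟨fun h => SomeOnS.pat ⟨_, klein_sq z, h⟩ ?_ ?_, fun h => h.allOnS _ (klein_sq z)⟩
  · simp [kleinSq, Fin.sum_univ_four]
    ring
  · by_contra! H
    have h0 := H 0
    have h1 := H 1
    simp [kleinSq] at h0 h1
    have : (2 : ℂ) = 0 := by linear_combination h0 + h1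
    norm_num at this

/-- The parameters `(c, d, g, h)` of a line in terms of its last four Klein coordinates. -/
noncomputable def coords : ℂ × ℂ × ℂ × ℂ ≃ (Fin 4 → ℂ) where
  toFun p := ![-I * (p.2.2.1 - p.2.1) / 2, (p.2.2.1 + p.2.1) / 2, (p.2.2.2 - p.1) / 2,
    -I * (p.2.2.2 + p.1) / 2]
  invFun z := (-z 2 + I * z 3, z 1 - I * z 0, z 1 + I * z 0, z 2 + I * z 3)
  left_inv := by
    rintro ⟨c, d, g, h⟩
    ext <;> simp <;> ring_nf <;> simp only [I_sq] <;> ring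
  right_inv z := by
    funext i
    fin_cases i <;> simp <;> ring_nf <;> simp only [I_sq] <;> ring

lemma onS_klein_coords_iff (p : ℂ × ℂ × ℂ × ℂ) :
    OnS (klein (coords p)) ↔
      ∀ v ∈ Submodule.span ℂ
        ({![1, 0, p.1, p.2.1], ![0, 1, p.2.2.1, p.2.2.2]} : Set (Fin 4 → ℂ)),
        eval v S8 = 0 := by
  obtain ⟨c, d, g, h⟩ := p
  rw [← vanishesOn_iff_span]
  unfold OnS
  congr! 1 <;> simp [klein, coords, Fin.sum_univ_four] <;> ring_nf <;> (try simp only [I_sq, I_pow_four]) <;> ring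

lemma card_eq :
    Nat.card {p : ℂ × ℂ × ℂ × ℂ //
      ∀ v ∈ Submodule.span ℂ
        ({![1, 0, p.1, p.2.1], ![0, 1, p.2.2.1, p.2.2.2]} : Set (Fin 4 → ℂ)),
        eval v S8 = 0} = Nat.card {z : Fin 4 → ℂ // Pat (kleinSq fun i => z i ^ 2)} :=
  Nat.card_congr (coords.subtypeEquiv fun p => by rw [← onS_klein_coords_iff, onS_klein_iff])

/-! ### Solving `Pat (kleinSq q)` -/

/-- A coordinate of value `-5 t`, the others of value `t`, where `t = ± i / 2`. -/
abbrev J₁ : Type := Fin 4 × {t : ℂ // t ^ 2 = -1 / 4}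

/-- Four equal coordinates `(± 3 ± √5) / 8`. -/
abbrev J₂ : Type := {t : ℂ // 256 * t ^ 4 - 112 * t ^ 2 + 1 = 0}

/-- A single nonzero coordinate `i (± √3 ± 2)`. -/
abbrev J₃ : Type := Fin 4 × {t : ℂ // t ^ 4 + 14 * t ^ 2 + 1 = 0}

/-- Two nonzero coordinates `± ω`, `± ω²`, with equal signs. -/
abbrev J₄ : Type := {ab : Fin 4 × Fin 4 // ab.1 ≠ ab.2} × {t : ℂ // t ^ 2 = 1}

/-- The solutions `q` of `Pat (kleinSq q)`. -/
noncomputable def sol : J₁ ⊕ J₂ ⊕ J₃ ⊕ J₄ → Fin 4 → ℂ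
  | .inl (j, t), i => if i = j then -5 * t else t
  | .inr (.inl t), _ => t
  | .inr (.inr (.inl (j, t))), i => if i = j then t else 0
  | .inr (.inr (.inr (ab, t))), i =>
      if i = ab.1.1 then ω * t else if i = ab.1.2 then ω ^ 2 * t else 0

lemma kleinSq_succ (q : Fin 4 → ℂ) (i : Fin 4) : kleinSq q i.succ.succ = q i := by
  fin_cases i <;> rfl

lemma kleinSq_zero (q : Fin 4 → ℂ) : kleinSq q 0 = ((1 - (q 0 + q 1 + q 2 + q 3)) / 2) ^ 2 := by
  simp [kleinSq, Fin.sum_univ_four]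

lemma kleinSq_one (q : Fin 4 → ℂ) : kleinSq q 1 = -((1 + (q 0 + q 1 + q 2 + q 3)) / 2) ^ 2 := by
  simp [kleinSq, Fin.sum_univ_four]

lemma fin_six_cases : ∀ a : Fin 6, a = 0 ∨ a = 1 ∨ ∃ j : Fin 4, a = j.succ.succ := by decide

lemma sum_single (j : Fin 4) (S : ℂ) : (if 0 = j then S else 0) + (if 1 = j then S else 0) +
    (if 2 = j then S else 0) + (if 3 = j then S else 0) = S := by
  fin_cases j <;> simp

lemma sum_pair (j k : Fin 4) (h : j ≠ k) (S S' : ℂ) :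
    (if 0 = j then S else if 0 = k then S' else 0) +
    (if 1 = j then S else if 1 = k then S' else 0) +
    (if 2 = j then S else if 2 = k then S' else 0) +
    (if 3 = j then S else if 3 = k then S' else 0) = S + S' := by
  fin_cases j <;> fin_cases k <;> simp [add_comm] at h ⊢

lemma sum_five (j : Fin 4) (t : ℂ) : (if 0 = j then -(5 * t) else t) +
    (if 1 = j then -(5 * t) else t) + (if 2 = j then -(5 * t) else t) +
    (if 3 = j then -(5 * t) else t) = -2 * t := by
  fin_cases j <;> simp <;> ring

lemma fin_six_forall {p : Fin 6 → Prop} : (∀ i, p i) ↔ p 0 ∧ p 1 ∧ ∀ j : Fin 4, p j.succ.succ := by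
  rw [Fin.forall_fin_succ, Fin.forall_fin_succ]; rfl

lemma ss_ne (j : Fin 4) : (j.succ.succ : Fin 6) ≠ 0 ∧ (j.succ.succ : Fin 6) ≠ 1 ∧
    (0 : Fin 6) ≠ j.succ.succ ∧ (1 : Fin 6) ≠ j.succ.succ := by
  decide +revert

lemma pat_kleinSq_sol (j) : Pat (kleinSq (sol j)) := by
  rcases j with ⟨j, t, ht⟩ | ⟨t, ht⟩ | ⟨j, t, ht⟩ | ⟨⟨⟨a, b⟩, hab⟩, t, ht⟩
  · refine .inl ⟨j.succ.succ, t, by rintro rfl; norm_num at ht, ?_⟩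
    rw [fin_six_forall]
    simp only [kleinSq_zero, kleinSq_one, kleinSq_succ, sol, neg_mul, sum_five]
    refine ⟨?_, ?_, ?_⟩
    · rw [if_neg (ss_ne j).2.2.1]
      linear_combination ht
    · rw [if_neg (by simp [ss_ne])]
      linear_combination -ht
    · simp
  · have h0 : t ≠ 0 := by rintro rfl; norm_num at ht
    have : (16 * t ^ 2 + 12 * t + 1) * (16 * t ^ 2 - 12 * t + 1) = 0 := by linear_combination ht
    rcases mul_eq_zero.1 this with h | h
    · refine .inl ⟨0, t, h0, ?_⟩
      rw [fin_six_forall]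
      simp only [kleinSq_zero, kleinSq_one, kleinSq_succ, sol]
      refine ⟨?_, ?_, by simp⟩
      · simp only [if_true]
        linear_combination h / 4
      · rw [if_neg (by decide)]
        linear_combination -h / 4
    · refine .inl ⟨1, t, h0, ?_⟩
      rw [fin_six_forall]
      simp only [kleinSq_zero, kleinSq_one, kleinSq_succ, sol]
      refine ⟨?_, ?_, by simp [ss_ne]⟩
      · rw [if_neg (by decide)]
        linear_combination h / 4
      · simp only [if_true]
        linear_combination -h / 4
  · have h0 : t ≠ 0 := by rintro rfl; norm_num at ht
    rcases eq_ω_mul (v := t) (w := ((1 - t) / 2) ^ 2) (z := -((1 + t) / 2) ^ 2)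
      (by ring) (by linear_combination -ht / 16) with ⟨h1, h2⟩ | ⟨h1, h2⟩
    · refine .inr ⟨j.succ.succ, 0, 1, by simp, by simp [ss_ne], by decide,
        t, h0, ?_⟩
      rw [fin_six_forall]
      simp only [kleinSq_zero, kleinSq_one, kleinSq_succ, sol,
        sum_single, h1, h2]
      simp [ss_ne]
    · refine .inr ⟨j.succ.succ, 1, 0, by simp [ss_ne], by simp, by decide,
        t, h0, ?_⟩
      rw [fin_six_forall]
      simp only [kleinSq_zero, kleinSq_one, kleinSq_succ, sol,
        sum_single, h1, h2]
      simp [ss_ne]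
  · have hS : ω * t + ω ^ 2 * t = -t := by linear_combination t * ω_eq
    rcases sq_eq_one_iff.1 ht with rfl | rfl
    · refine .inr ⟨0, a.succ.succ, b.succ.succ, by simp [ss_ne], by simp [ss_ne],
        by simpa using hab, 1, one_ne_zero, ?_⟩
      rw [fin_six_forall]
      simp only [kleinSq_zero, kleinSq_one, kleinSq_succ, sol,
        sum_pair a b hab, hS]
      simp [ss_ne]
    · refine .inr ⟨1, a.succ.succ, b.succ.succ, by simp [ss_ne], by simp [ss_ne],
        by simpa using hab, -1, by simp, ?_⟩
      rw [fin_six_forall]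
      simp only [kleinSq_zero, kleinSq_one, kleinSq_succ, sol,
        sum_pair a b hab, hS]
      simp [ss_ne]

lemma ω_cube : ω ^ 3 = 1 := by linear_combination (ω - 1) * ω_eq

/-- `s` is `(1, ω, ω²)` up to scaling at the positions `a`, `b`, `c`, and zero elsewhere. -/
def At (a b c : Fin 6) (s : Fin 6 → ℂ) : Prop :=
  a ≠ b ∧ a ≠ c ∧ b ≠ c ∧ ∃ t, t ≠ 0 ∧
    ∀ i, s i = if i = a then t else if i = b then ω * t else if i = c then ω ^ 2 * t else 0

/-- Moving the scaling factor from `t` to `ω * t` permutes the three positions cyclically. -/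
lemma At.rotate {a b c : Fin 6} {s : Fin 6 → ℂ} (h : At a b c s) : At b c a s := by
  obtain ⟨hab, hac, hbc, t, ht, h⟩ := h
  refine ⟨hbc, hab.symm, hac.symm, ω * t, mul_ne_zero ω_ne_zero ht, fun i => ?_⟩
  rw [h]
  split_ifs <;> try simp_all
  · linear_combination -t * ω_cube
  · ring

lemma exists_sol_of_at {a b c : Fin 6} {q : Fin 4 → ℂ} (h : At a b c (kleinSq q)) :
    ∃ j, q = sol j := by
  -- The positions `a = 0` and `a = 1`; the other cases reduce to these by rotation.
  have h0 {b c : Fin 6} (h : At 0 b c (kleinSq q)) : ∃ j, q = sol j := by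
    obtain ⟨hab, hac, hbc, t, ht, h⟩ := h
    rw [fin_six_forall] at h
    simp only [kleinSq_zero, kleinSq_one, kleinSq_succ] at h
    obtain ⟨h0, h1, h⟩ := h
    rcases fin_six_cases b with rfl | rfl | ⟨j, rfl⟩
    · exact absurd rfl hab
    · rcases fin_six_cases c with rfl | rfl | ⟨k, rfl⟩
      · exact absurd rfl hac
      · exact absurd rfl hbc
      · simp [ss_ne] at h0 h1 h
        simp only [h, sum_single] at h0 h1
        refine ⟨.inr (.inr (.inl (k, ⟨ω ^ 2 * t, ?_⟩))), funext h⟩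
        linear_combination 4 * (1 + ω ^ 2 * t) ^ 2 * h0 - 16 * t * h1 + 16 * t ^ 2 * ω * ω_cube
    · rcases fin_six_cases c with rfl | rfl | ⟨k, rfl⟩
      · exact absurd rfl hac
      · simp [ss_ne] at h0 h1 h
        simp only [h, sum_single] at h0 h1
        refine ⟨.inr (.inr (.inl (j, ⟨ω * t, ?_⟩))), funext h⟩
        linear_combination 4 * (1 + ω * t) ^ 2 * h0 - 16 * t * h1
      · have hjk : j ≠ k := by rintro rfl; exact hbc rfl
        simp [ss_ne] at h0 h1 h
        simp only [h, sum_pair j k hjk] at h0 h1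
        have ht1 : t = 1 := by linear_combination -h1 + t * ω_eq
        subst ht1
        exact ⟨.inr (.inr (.inr (⟨(j, k), hjk⟩, ⟨1, by simp⟩))), funext fun i => by simp [sol, h]⟩
  have h1 {b c : Fin 6} (h : At 1 b c (kleinSq q)) : ∃ j, q = sol j := by
    have H := h
    obtain ⟨hab, hac, hbc, t, ht, h⟩ := h
    rcases fin_six_cases b with rfl | rfl | ⟨j, rfl⟩
    · exact h0 H.rotate
    · exact absurd rfl hab
    rcases fin_six_cases c with rfl | rfl | ⟨k, rfl⟩
    · exact h0 H.rotate.rotate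
    · exact absurd rfl hac
    rw [fin_six_forall] at h
    simp only [kleinSq_zero, kleinSq_one, kleinSq_succ] at h
    obtain ⟨h0, h1, h⟩ := h
    have hjk : j ≠ k := by rintro rfl; exact hbc rfl
    simp [ss_ne] at h0 h1 h
    simp only [h, sum_pair j k hjk] at h0 h1
    have ht1 : t = -1 := by linear_combination h0 + t * ω_eq
    subst ht1
    exact ⟨.inr (.inr (.inr (⟨(j, k), hjk⟩, ⟨-1, by simp⟩))), funext fun i => by simp [sol, h]⟩
  rcases fin_six_cases a with rfl | rfl | ⟨i, rfl⟩
  · exact h0 h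
  · exact h1 h
  rcases fin_six_cases b with rfl | rfl | ⟨j, rfl⟩
  · exact h0 h.rotate
  · exact h1 h.rotate
  rcases fin_six_cases c with rfl | rfl | ⟨k, rfl⟩
  · exact h0 h.rotate.rotate
  · exact h1 h.rotate.rotate
  -- The first two entries of `kleinSq q` cannot both vanish.
  obtain ⟨-, -, -, t, -, h⟩ := h
  have e0 := h 0
  have e1 := h 1
  simp [kleinSq_zero, kleinSq_one, ss_ne] at e0 e1
  have : (2 : ℂ) = 0 := by linear_combination e0 + e1
  norm_num at this

lemma exists_sol {q : Fin 4 → ℂ} (h : Pat (kleinSq q)) : ∃ j, q = sol j := by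
  rcases h with ⟨k, t, ht, h⟩ | ⟨a, b, c, hab, hac, hbc, h⟩
  · rw [fin_six_forall] at h
    simp only [kleinSq_zero, kleinSq_one, kleinSq_succ] at h
    obtain ⟨h0, h1, h⟩ := h
    rcases fin_six_cases k with rfl | rfl | ⟨j, rfl⟩
    · simp at h0 h1 h
      simp only [h] at h0 h1
      refine ⟨.inr (.inl ⟨t, ?_⟩), funext h⟩
      linear_combination 4 * (16 * t ^ 2 - 12 * t + 1) * h0
    · simp [ss_ne] at h0 h1 h
      simp only [h] at h0 h1
      refine ⟨.inr (.inl ⟨t, ?_⟩), funext h⟩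
      linear_combination 4 * (16 * t ^ 2 + 12 * t + 1) * h0
    · simp [ss_ne] at h0 h1 h
      simp only [h, sum_five] at h0 h1
      refine ⟨.inl (j, ⟨t, ?_⟩), funext fun i => by simp [sol, h]⟩
      linear_combination h0
  · exact exists_sol_of_at ⟨hab, hac, hbc, h⟩

lemma exists_fin_ne : ∀ a b : Fin 4, ∃ i, i ≠ a ∧ i ≠ b := by decide

lemma J₁.ne_zero (j : J₁) : (j.2 : ℂ) ≠ 0 := fun h => by have := j.2.2; norm_num [h] at this

lemma J₂.ne_zero (j : J₂) : (j : ℂ) ≠ 0 := fun h => by have := j.2; norm_num [h] at this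

lemma J₃.ne_zero (j : J₃) : (j.2 : ℂ) ≠ 0 := fun h => by have := j.2.2; norm_num [h] at this

lemma J₄.ne_zero (j : J₄) : (j.2 : ℂ) ≠ 0 := fun h => by have := j.2.2; norm_num [h] at this

lemma sol₁_ne_zero (j : J₁) (i : Fin 4) : sol (.inl j) i ≠ 0 := by
  have := J₁.ne_zero j
  simp only [sol]
  split_ifs <;> simp [this]

lemma sol₂_ne_zero (j : J₂) (i : Fin 4) : sol (.inr (.inl j)) i ≠ 0 := J₂.ne_zero j

lemma sol₃_ne_zero_iff (j : J₃) (i : Fin 4) : sol (.inr (.inr (.inl j))) i ≠ 0 ↔ i = j.1 := by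
  have := J₃.ne_zero j
  simp [sol, this]

lemma sol₄_ne_zero_iff (j : J₄) (i : Fin 4) :
    sol (.inr (.inr (.inr j))) i ≠ 0 ↔ i = j.1.1.1 ∨ i = j.1.1.2 := by
  have := J₄.ne_zero j
  simp only [sol]
  split_ifs <;> simp [*, ω_ne_zero]

lemma sol₁_ne_sol₂ (j k) : sol (.inl j) ≠ sol (.inr (.inl k)) := by
  intro h
  obtain ⟨i, hi, -⟩ := exists_fin_ne j.1 j.1
  have h1 := congrFun h i
  have h2 := congrFun h j.1
  simp only [sol, hi, if_true, if_false] at h1 h2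
  exact J₁.ne_zero j (by linear_combination (h1 - h2) / 6)

lemma sol₃_ne_of_forall (j) {q : Fin 4 → ℂ} (hq : ∀ i, q i ≠ 0) :
    q ≠ sol (.inr (.inr (.inl j))) := by
  rintro rfl
  obtain ⟨i, hi, -⟩ := exists_fin_ne j.1 j.1
  exact hi ((sol₃_ne_zero_iff j i).1 (hq i))

lemma sol₄_ne_of_forall (j) {q : Fin 4 → ℂ} (hq : ∀ i, q i ≠ 0) :
    q ≠ sol (.inr (.inr (.inr j))) := by
  rintro rfl
  obtain ⟨i, h1, h2⟩ := exists_fin_ne j.1.1.1 j.1.1.2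
  exact ((sol₄_ne_zero_iff j i).1 (hq i)).elim h1 h2

lemma sol₃_ne_sol₄ (j k) : sol (.inr (.inr (.inl j))) ≠ sol (.inr (.inr (.inr k))) := by
  intro h
  have h1 := (sol₄_ne_zero_iff k k.1.1.1).2 (.inl rfl)
  have h2 := (sol₄_ne_zero_iff k k.1.1.2).2 (.inr rfl)
  rw [← h, sol₃_ne_zero_iff] at h1 h2
  exact k.1.2 (h1.trans h2.symm)

lemma sol_injective : Function.Injective sol := by
  rintro (j | j | j | j) (k | k | k | k) h
  · have hjk : j.1 = k.1 := by
      by_contra hjk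
      obtain ⟨i, hi, hi'⟩ := exists_fin_ne j.1 k.1
      have h1 := congrFun h i
      have h2 := congrFun h j.1
      simp only [sol, hi, hi', hjk, if_true, if_false] at h1 h2
      exact J₁.ne_zero j (by linear_combination (h1 - h2) / 6)
    have h2 := congrFun h j.1
    simp [sol, hjk] at h2
    exact congrArg _ (Prod.ext hjk (Subtype.ext h2))
  · exact (sol₁_ne_sol₂ _ _ h).elim
  · exact (sol₃_ne_of_forall _ (sol₁_ne_zero j) h).elim
  · exact (sol₄_ne_of_forall _ (sol₁_ne_zero j) h).elim
  · exact (sol₁_ne_sol₂ _ _ h.symm).elim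
  · exact congrArg _ (congrArg _ (Subtype.ext (congrFun h 0)))
  · exact (sol₃_ne_of_forall _ (sol₂_ne_zero j) h).elim
  · exact (sol₄_ne_of_forall _ (sol₂_ne_zero j) h).elim
  · exact (sol₃_ne_of_forall _ (sol₁_ne_zero k) h.symm).elim
  · exact (sol₃_ne_of_forall _ (sol₂_ne_zero k) h.symm).elim
  · have hjk : j.1 = k.1 := by
      rw [← sol₃_ne_zero_iff, ← h, sol₃_ne_zero_iff]
    have h2 := congrFun h j.1
    simp [sol, hjk] at h2
    exact congrArg _ (congrArg _ (congrArg _ (Prod.ext hjk (Subtype.ext h2))))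
  · exact (sol₃_ne_sol₄ _ _ h).elim
  · exact (sol₄_ne_of_forall _ (sol₁_ne_zero k) h.symm).elim
  · exact (sol₄_ne_of_forall _ (sol₂_ne_zero k) h.symm).elim
  · exact (sol₃_ne_sol₄ _ _ h.symm).elim
  · have ht := j.2.2
    have ht' := k.2.2
    have h1 := congrFun h j.1.1.1
    have h2 := congrFun h j.1.1.2
    have ha : j.1.1.1 = k.1.1.1 := by
      rcases (sol₄_ne_zero_iff k j.1.1.1).1
        (h ▸ (sol₄_ne_zero_iff j j.1.1.1).2 (.inl rfl)) with ha | ha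
      · exact ha
      · -- The entries `± ω` and `± ω²` differ.
        simp only [sol, ha, k.1.2.symm, if_true, if_false] at h1
        have h3 : (j.2 : ℂ) = ω * k.2 := mul_left_cancel₀ ω_ne_zero (by linear_combination h1)
        rw [h3] at ht
        exact absurd (by linear_combination ht - ω ^ 2 * ht') ω_sq_ne_one
    have hb : j.1.1.2 = k.1.1.2 := by
      refine ((sol₄_ne_zero_iff k j.1.1.2).1
        (h ▸ (sol₄_ne_zero_iff j j.1.1.2).2 (.inr rfl))).resolve_left fun hb => ?_
      exact j.1.2 (ha.trans hb.symm)
    simp [sol, ha, ω_ne_zero] at h1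
    refine congrArg _ (congrArg _ (congrArg _ (Prod.ext (Subtype.ext (Prod.ext ha hb))
      (Subtype.ext h1))))

/-! ### Counting -/

lemma card_sq_eq (a : ℂ) : Nat.card {w : ℂ // w ^ 2 = a} = if a = 0 then 1 else 2 := by
  obtain ⟨r, rfl⟩ := IsAlgClosed.exists_pow_nat_eq a two_pos
  have : {w : ℂ | w ^ 2 = r ^ 2} = {r, -r} := by
    ext w
    simp [sq_eq_sq_iff_eq_or_eq_neg]
  change Nat.card ({w : ℂ | w ^ 2 = r ^ 2} : Set ℂ) = _
  rw [this, Nat.card_coe_set_eq]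
  split_ifs with h
  · simp at h; simp [h]
  · refine Set.ncard_pair fun h' => h ?_
    simpa using self_eq_neg.1 h'

/-- A solution with `n` nonzero entries comes from `2 ^ n` choices of square roots. -/
lemma card_fiber (q : Fin 4 → ℂ) :
    Nat.card {z : Fin 4 → ℂ // ∀ i, z i ^ 2 = q i} = ∏ i, if q i = 0 then 1 else 2 := by
  rw [Nat.card_congr (Equiv.subtypePiEquivPi (p := fun i w => w ^ 2 = q i)), Nat.card_pi]
  exact Finset.prod_congr rfl fun i _ => card_sq_eq _

/-- An even quartic with two distinct nonzero pairs of opposite roots. -/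
lemma card_biquadratic {p : ℂ → ℂ} {α β : ℂ} (c : ℂ) (hc : c ≠ 0)
    (hp : ∀ t, p t = c * ((t ^ 2 - α ^ 2) * (t ^ 2 - β ^ 2)))
    (hα : α ≠ 0) (hβ : β ≠ 0) (hαβ : α ^ 2 ≠ β ^ 2) : Nat.card {t // p t = 0} = 4 := by
  have : {t | p t = 0} = (({α, -α, β, -β} : Finset ℂ) : Set ℂ) := by
    ext t
    simp [hp, hc, sub_eq_zero, sq_eq_sq_iff_eq_or_eq_neg, or_assoc]
  change Nat.card ({t | p t = 0} : Set ℂ) = 4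
  rw [this, Nat.card_coe_set_eq, Set.ncard_coe_finset]
  rw [Ne, sq_eq_sq_iff_eq_or_eq_neg] at hαβ
  have h1 : α ≠ -α := fun h => hα (self_eq_neg.1 h)
  have h2 : β ≠ -β := fun h => hβ (self_eq_neg.1 h)
  rw [Finset.card_insert_of_notMem, Finset.card_insert_of_notMem, Finset.card_pair h2]
  · simp only [Finset.mem_insert, Finset.mem_singleton, neg_inj]
    grind
  · simp only [Finset.mem_insert, Finset.mem_singleton]
    grind

lemma card_roots₂ : Nat.card {t : ℂ // 256 * t ^ 4 - 112 * t ^ 2 + 1 = 0} = 4 := by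
  have h5 : ((√5 : ℝ) : ℂ) ^ 2 = 5 := by
    rw [← ofReal_pow, Real.sq_sqrt (by norm_num)]; norm_num
  refine card_biquadratic (α := (3 + √5) / 8) (β := (3 - √5) / 8) 256 (by norm_num)
    (fun t => ?_) (fun h => ?_) (fun h => ?_) fun h => ?_
  · linear_combination (8 * t ^ 2 + 13 / 16 - (√5 : ℂ) ^ 2 / 16) * h5
  · have : (4 : ℂ) = 0 := by linear_combination 8 * (3 - √5 : ℂ) * h + h5
    norm_num at this
  · have : (4 : ℂ) = 0 := by linear_combination 8 * (3 + √5 : ℂ) * h + h5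
    norm_num at this
  · have h0 : (√5 : ℂ) = 0 := by linear_combination (16 / 3) * h
    norm_num [h0] at h5

lemma card_roots₃ : Nat.card {t : ℂ // t ^ 4 + 14 * t ^ 2 + 1 = 0} = 4 := by
  have h3 := sqrt_three_sq
  refine card_biquadratic (α := I * (√3 + 2)) (β := I * (√3 - 2)) 1 one_ne_zero
    (fun t => ?_) (fun h => ?_) (fun h => ?_) fun h => ?_
  · simp only [mul_pow, I_sq]
    linear_combination (-2 * t ^ 2 - (√3 : ℂ) ^ 2 + 5) * h3
  · have h' : (√3 + 2 : ℂ) = 0 := (mul_eq_zero.1 h).resolve_left I_ne_zero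
    have : (1 : ℂ) = 0 := by linear_combination -(√3 - 2 : ℂ) * h' + h3
    norm_num at this
  · have h' : (√3 - 2 : ℂ) = 0 := (mul_eq_zero.1 h).resolve_left I_ne_zero
    have : (1 : ℂ) = 0 := by linear_combination -(√3 + 2 : ℂ) * h' + h3
    norm_num at this
  · simp only [mul_pow, I_sq] at h
    have h0 : (√3 : ℂ) = 0 := by linear_combination (-1 / 8) * h
    norm_num [h0] at h3

lemma card_J₁ : Nat.card J₁ = 8 := by
  rw [Nat.card_prod, card_sq_eq, if_neg (by norm_num), Nat.card_fin]

lemma card_J₂ : Nat.card J₂ = 4 := card_roots₂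

lemma card_J₃ : Nat.card J₃ = 16 := by
  rw [Nat.card_prod, card_roots₃, Nat.card_fin]

lemma card_J₄ : Nat.card J₄ = 24 := by
  rw [Nat.card_prod, card_sq_eq, if_neg (by norm_num)]
  simp only [Nat.card_eq_fintype_card]
  decide

lemma card_fiber₁ (j : J₁) : Nat.card {z : Fin 4 → ℂ // ∀ i, z i ^ 2 = sol (.inl j) i} = 16 := by
  simp [card_fiber, sol₁_ne_zero]

lemma card_fiber₂ (j : J₂) :
    Nat.card {z : Fin 4 → ℂ // ∀ i, z i ^ 2 = sol (.inr (.inl j)) i} = 16 := by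
  simp [card_fiber, sol₂_ne_zero]

lemma card_fiber₃ (j : J₃) :
    Nat.card {z : Fin 4 → ℂ // ∀ i, z i ^ 2 = sol (.inr (.inr (.inl j))) i} = 2 := by
  have (q : Fin 4 → ℂ) (i) : (if q i = 0 then 1 else 2) = if q i ≠ 0 then 2 else 1 := by
    split_ifs <;> simp_all
  simp only [card_fiber, this, sol₃_ne_zero_iff, Finset.prod_ite_eq', Finset.mem_univ, if_true]

lemma prod_pair : ∀ a b : Fin 4, a ≠ b →
    (∏ x : Fin 4, if x = a ∨ x = b then 2 else 1) = 4 := by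
  decide

lemma card_fiber₄ (j : J₄) :
    Nat.card {z : Fin 4 → ℂ // ∀ i, z i ^ 2 = sol (.inr (.inr (.inr j))) i} = 4 := by
  have (q : Fin 4 → ℂ) (i) : (if q i = 0 then 1 else 2) = if q i ≠ 0 then 2 else 1 := by
    split_ifs <;> simp_all
  simp only [card_fiber, this, sol₄_ne_zero_iff]
  convert prod_pair _ _ j.1.2

/-- Each line is determined by the squares of its last four Klein coordinates and a choice of
square roots. -/
noncomputable def solEquiv : {z : Fin 4 → ℂ // Pat (kleinSq fun i => z i ^ 2)} ≃
    Σ j, {z : Fin 4 → ℂ // ∀ i, z i ^ 2 = sol j i} :=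
  .symm <| .ofBijective (fun p => ⟨p.2.1, by
    rw [funext p.2.2]
    exact pat_kleinSq_sol p.1⟩) <| by
    constructor
    · rintro ⟨j, z, hz⟩ ⟨k, z', hz'⟩ h
      obtain rfl : z = z' := congrArg Subtype.val h
      obtain rfl : j = k := sol_injective (funext fun i => (hz i).symm.trans (hz' i))
      rfl
    · rintro ⟨z, hz⟩
      obtain ⟨j, hj⟩ := exists_sol hz
      exact ⟨⟨j, z, congrFun hj⟩, rfl⟩

lemma card_pat : Nat.card {z : Fin 4 → ℂ // Pat (kleinSq fun i => z i ^ 2)} = 320 := by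
  have f₁ : Finite J₁ := Nat.finite_of_card_ne_zero (by rw [card_J₁]; decide)
  have f₂ : Finite J₂ := Nat.finite_of_card_ne_zero (by rw [card_J₂]; decide)
  have f₃ : Finite J₃ := Nat.finite_of_card_ne_zero (by rw [card_J₃]; decide)
  have f₄ : Finite J₄ := Nat.finite_of_card_ne_zero (by rw [card_J₄]; decide)
  have := Fintype.ofFinite J₁
  have := Fintype.ofFinite J₂
  have := Fintype.ofFinite J₃
  have := Fintype.ofFinite J₄
  have (j : J₁ ⊕ J₂ ⊕ J₃ ⊕ J₄) : Finite {z : Fin 4 → ℂ // ∀ i, z i ^ 2 = sol j i} := by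
    refine Nat.finite_of_card_ne_zero ?_
    rw [card_fiber]
    exact Finset.prod_ne_zero_iff.2 fun i _ => by split_ifs <;> simp
  rw [Nat.card_congr solEquiv, Nat.card_sigma]
  simp only [Fintype.sum_sum_type, card_fiber₁, card_fiber₂, card_fiber₃, card_fiber₄,
    Finset.sum_const, Finset.card_univ, ← Nat.card_eq_fintype_card, card_J₁, card_J₂, card_J₃,
    card_J₄]
  rfl

end OcticLines

/-- There are exactly `320` tuples `(c,d,g,h) ∈ ℂ⁴` such that `S₈` vanishes identically
on the 2-dimensional subspace `span{(1,0,c,d),(0,1,g,h)} ⊆ ℂ⁴`, i.e. such that the line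
`z = cx + gy, t = dx + hy` lies on the octic surface `S₈ = 0`. -/
theorem octic_lines_first_stratum :
    Nat.card {p : ℂ × ℂ × ℂ × ℂ //
      ∀ v ∈ Submodule.span ℂ
        ({![1, 0, p.1, p.2.1], ![0, 1, p.2.2.1, p.2.2.2]} : Set (Fin 4 → ℂ)),
        eval v S8 = 0} = 320 := by
  exact OcticLines.card_eq.trans OcticLines.card_pat
end
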